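/- arXiv:2604.22357 — 5 statements merged into one kernel-verified Lean document; each statement's English description precedes it below -/
import Mathlib

section
/- Every bipartite graph G=(V,E) with no trivial connected components (connected components with at most one edge) and vertex bipartition V = X ∪ Y admits a partial edge colouring with 3 colours satisfying every edge of G, such that every vertex v ∈ Y is incident with a uniquely coloured edge, and every vertex u ∈ X incident with at least one coloured edge is incident with a uniquely coloured edge. -/
open SimpleGraph

/-- The closed neighbourhood of an edge `e`: all edges of `G` sharing a vertex with `e`. -/
def ECN {V : Type*} (G : SimpleGraph V) (e : Sym2 V) : Set (Sym2 V) :=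
  {f | f ∈ G.edgeSet ∧ ∃ w, w ∈ f ∧ w ∈ e}

/-- The open neighbourhood of an edge `e`. -/
def EON {V : Type*} (G : SimpleGraph V) (e : Sym2 V) : Set (Sym2 V) :=
  ECN G e \ {e}

/-- `c` is a closed conflict-free edge colouring of `G` with `k` colours. -/
def ClosedCF {V : Type*} (G : SimpleGraph V) (c : Sym2 V → ℕ) (k : ℕ) : Prop :=
  (∀ e ∈ G.edgeSet, c e < k) ∧
  ∀ e ∈ G.edgeSet, ∃ α, ∃! f, f ∈ ECN G e ∧ c f = α

/-- `c` is an open conflict-free edge colouring of `G` with `k` colours. -/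
def OpenCF {V : Type*} (G : SimpleGraph V) (c : Sym2 V → ℕ) (k : ℕ) : Prop :=
  (∀ e ∈ G.edgeSet, c e < k) ∧
  ∀ e ∈ G.edgeSet, (EON G e).Nonempty → ∃ α, ∃! f, f ∈ EON G e ∧ c f = α

/-- `c` is a conflict-free edge colouring of `G` with `k` colours:
every non-isolated edge `e` has an edge `e'` in its open neighbourhood whose
colour appears on no other edge of the closed neighbourhood of `e`. -/
def ConflictFree {V : Type*} (G : SimpleGraph V) (c : Sym2 V → ℕ) (k : ℕ) : Prop :=
  (∀ e ∈ G.edgeSet, c e < k) ∧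
  ∀ e ∈ G.edgeSet, (EON G e).Nonempty →
    ∃ e' ∈ EON G e, ∀ f ∈ ECN G e, c f = c e' → f = e'

/-- A partial edge colouring of `G` with `k` colours. -/
def PartialColouring {V : Type*} (G : SimpleGraph V) (c : Sym2 V → Option ℕ) (k : ℕ) : Prop :=
  ∀ e α, c e = some α → e ∈ G.edgeSet ∧ α < k

/-- An edge `e` is satisfied by the partial colouring `c`. -/
def SatisfiedP {V : Type*} (G : SimpleGraph V) (c : Sym2 V → Option ℕ) (e : Sym2 V) : Prop :=
  ∃ e' ∈ EON G e, ∃ α, c e' = some α ∧ ∀ f ∈ ECN G e, c f = some α → f = e'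

/-- Vertex `v` is incident with a uniquely coloured edge under partial colouring `c`. -/
def UniqueAt {V : Type*} (G : SimpleGraph V) (c : Sym2 V → Option ℕ) (v : V) : Prop :=
  ∃ e ∈ G.incidenceSet v, ∃ α, c e = some α ∧
    ∀ f ∈ G.incidenceSet v, c f = some α → f = e

/-- `G` is `k`-degenerate: there is a vertex ordering in which every vertex
has at most `k` earlier neighbours. -/
def IsDegenerate {V : Type*} (G : SimpleGraph V) (k : ℕ) : Prop :=
  ∃ f : V ↪ ℕ, ∀ v, {u ∈ G.neighborSet v | f u < f v}.ncard ≤ k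

/-- The open conflict-free chromatic index. -/
noncomputable def ocfIndex {V : Type*} (G : SimpleGraph V) : ℕ :=
  sInf {k | ∃ c, OpenCF G c k}

/-- The closed conflict-free chromatic index. -/
noncomputable def ccfIndex {V : Type*} (G : SimpleGraph V) : ℕ :=
  sInf {k | ∃ c, ClosedCF G c k}

/-- The conflict-free chromatic index. -/
noncomputable def cfIndex {V : Type*} (G : SimpleGraph V) : ℕ :=
  sInf {k | ∃ c, ConflictFree G c k}

/-- Structure lemma: `Y` splits into `B`, `D`, `Z`, with an assignment `f` of `B` to `X`. -/
lemma structA {V : Type*} (G : SimpleGraph V) (Y : Set V)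
    (hY : ∀ x y y', G.Adj x y → G.Adj x y' → y ∈ Y → y' ∈ Y) :
    ∃ (B D Z : Set V) (f p : V → V),
      (∀ y ∈ Y, y ∈ B ∨ y ∈ D ∨ y ∈ Z) ∧ (B ⊆ Y ∧ D ⊆ Y ∧ Z ⊆ Y) ∧
      (∀ y ∈ B, y ∉ D ∧ y ∉ Z) ∧ (∀ y ∈ D, y ∉ Z) ∧
      (∀ y ∈ B, G.Adj y (f y)) ∧
      (∀ y ∈ B, (∃ y2 ∈ B, y2 ≠ y ∧ f y2 = f y) ∨ (p (f y) ∈ D ∧ G.Adj (f y) (p (f y)))) ∧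
      (∀ d ∈ D, ∃ y ∈ B, (∀ y2 ∈ B, f y2 = f y → y2 = y) ∧ p (f y) = d ∧ G.Adj (f y) d) ∧
      (∀ z ∈ Z, ∀ x, G.Adj z x → ∀ y, G.Adj x y → y = z) := by
  classical
  obtain ⟨S, hS⟩ := zorn_subset
    {S : Set (V × V) | (∀ q ∈ S, q.1 ∈ Y ∧ G.Adj q.1 q.2) ∧
      (∀ y x x', (y, x) ∈ S → (y, x') ∈ S → x = x') ∧
      (∀ y x, (y, x) ∈ S → ∃ y2, y2 ≠ y ∧ (y2, x) ∈ S)} (by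
    intro c hc hch
    refine ⟨⋃₀ c, ⟨?_, ?_, ?_⟩, fun s hs => Set.subset_sUnion_of_mem hs⟩
    · rintro q ⟨s, hs, hq⟩
      exact (hc hs).1 q hq
    · rintro y x x' ⟨s, hs, hq⟩ ⟨t, ht, hq'⟩
      rcases hch.total hs ht with h | h
      · exact (hc ht).2.1 y x x' (h hq) hq'
      · exact (hc hs).2.1 y x x' hq (h hq')
    · rintro y x ⟨s, hs, hq⟩
      obtain ⟨y2, h1, h2⟩ := (hc hs).2.2 y x hq
      exact ⟨y2, h1, s, hs, h2⟩)
  obtain ⟨hSadj, hSfun, hStwo⟩ := hS.prop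
  have hmax := fun T hT => hS.eq_of_subset (t := T) hT
  -- first maximality claim
  have claim1 : ∀ y x y2, y ∈ Y → (∀ x, (y, x) ∉ S) → G.Adj y x → (y2, x) ∉ S := by
    intro y x y2 hy hun hadj h2
    have := hmax (insert (y, x) S) ⟨?_, ?_, ?_⟩ (Set.subset_insert _ _)
    · exact hun x (this ▸ Set.mem_insert _ _)
    · rintro q (rfl | hq)
      · exact ⟨hy, hadj⟩
      · exact hSadj q hq
    · rintro a b b' hb hb'
      simp only [Set.mem_insert_iff, Prod.mk.injEq] at hb hb'
      rcases hb with ⟨rfl, rfl⟩ | hb <;> rcases hb' with ⟨h, rfl⟩ | hb'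
      · rfl
      · exact absurd hb' (hun _)
      · subst h; exact absurd hb (hun _)
      · exact hSfun _ _ _ hb hb'
    · rintro a b hb
      simp only [Set.mem_insert_iff, Prod.mk.injEq] at hb ⊢
      rcases hb with ⟨rfl, rfl⟩ | hb
      · exact ⟨y2, fun h => hun b (h ▸ h2), Or.inr h2⟩
      · obtain ⟨y3, h3, h4⟩ := hStwo a b hb
        exact ⟨y3, h3, Or.inr h4⟩
  have claim2 : ∀ y y' x, y ∈ Y → y' ∈ Y → (∀ x, (y, x) ∉ S) → (∀ x, (y', x) ∉ S) →
      G.Adj y x → G.Adj y' x → y = y' := by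
    intro y y' x hy hy' hun hun' hadj hadj'
    by_contra hne
    have := hmax (insert (y, x) (insert (y', x) S)) ⟨?_, ?_, ?_⟩
      ((Set.subset_insert _ _).trans (Set.subset_insert _ _))
    · exact hun x (this ▸ Set.mem_insert _ _)
    · rintro q (rfl | rfl | hq)
      · exact ⟨hy, hadj⟩
      · exact ⟨hy', hadj'⟩
      · exact hSadj q hq
    · rintro a b b' hb hb'
      simp only [Set.mem_insert_iff, Prod.mk.injEq] at hb hb'
      grind
    · rintro a b hb
      simp only [Set.mem_insert_iff, Prod.mk.injEq] at hb ⊢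
      rcases hb with ⟨rfl, rfl⟩ | ⟨rfl, rfl⟩ | hb
      · exact ⟨y', fun h => hne h.symm, by simp⟩
      · exact ⟨y, hne, by simp⟩
      · obtain ⟨y3, h3, h4⟩ := hStwo a b hb
        exact ⟨y3, h3, Or.inr (Or.inr h4)⟩
  let U : Set V := {y | y ∈ Y ∧ ∀ x, (y, x) ∉ S}
  let Z : Set V := {z | z ∈ U ∧ ∀ x, G.Adj z x → ∀ y, G.Adj x y → y = z}
  have h1 : ∀ z, ∃ x y, z ∈ U → z ∉ Z → G.Adj z x ∧ G.Adj x y ∧ y ≠ z := by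
    intro z
    by_cases hz : z ∈ U ∧ z ∉ Z
    · obtain ⟨hu, hz⟩ := hz
      have : ¬ ∀ x, G.Adj z x → ∀ y, G.Adj x y → y = z := fun h => hz ⟨hu, h⟩
      push Not at this
      obtain ⟨x, hx, y, hy, hne⟩ := this
      exact ⟨x, y, fun _ _ => ⟨hx, hy, hne⟩⟩
    · exact ⟨z, z, fun a b => absurd ⟨a, b⟩ hz⟩
  choose h g hg using h1
  have h2 : ∀ y, ∃ x, (∃ x, (y, x) ∈ S) → (y, x) ∈ S := by
    intro y
    by_cases hy : ∃ x, (y, x) ∈ S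
    · exact ⟨hy.choose, fun _ => hy.choose_spec⟩
    · exact ⟨y, fun h => absurd h hy⟩
  choose s hs using h2
  let D : Set V := {d | ∃ z, z ∈ U ∧ z ∉ Z ∧ g z = d}
  have hDY : D ⊆ Y := by
    rintro d ⟨z, hu, hz, rfl⟩
    obtain ⟨a1, a2, a3⟩ := hg z hu hz
    exact hY _ _ _ a1.symm a2 hu.1
  have hDU : ∀ d ∈ D, d ∉ U := by
    intro d hd hdU
    have hd' := hd
    obtain ⟨z, hu, hz, rfl⟩ := hd'
    obtain ⟨a1, a2, a3⟩ := hg z hu hz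
    exact a3 (claim2 _ _ _ hdU.1 hu.1 hdU.2 hu.2 a2.symm a1)
  have hinj : ∀ z z', z ∈ U → z ∉ Z → z' ∈ U → z' ∉ Z → h z = h z' → z = z' := by
    intro z z' hu hz hu' hz' he
    exact claim2 z z' (h z) hu.1 hu'.1 hu.2 hu'.2 (hg z hu hz).1 (he ▸ (hg z' hu' hz').1)
  have h3 : ∀ x, ∃ d, (∀ z, z ∈ U → z ∉ Z → h z = x → d = g z) ∧
      ((∀ z, z ∈ U → z ∉ Z → h z ≠ x) → (∃ d ∈ D, (d, x) ∈ S) → d ∈ D ∧ (d, x) ∈ S) := by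
    intro x
    by_cases hx : ∃ z, z ∈ U ∧ z ∉ Z ∧ h z = x
    · obtain ⟨z, hu, hz, rfl⟩ := hx
      refine ⟨g z, fun z' hu' hz' he => ?_, fun hc => absurd rfl (hc z hu hz)⟩
      rw [hinj z z' hu hz hu' hz' he.symm]
    · by_cases hx2 : ∃ d ∈ D, (d, x) ∈ S
      · obtain ⟨d, hd⟩ := hx2
        exact ⟨d, fun z hu hz he => absurd ⟨z, hu, hz, he⟩ hx, fun _ _ => hd⟩
      · exact ⟨x, fun z hu hz he => absurd ⟨z, hu, hz, he⟩ hx, fun _ h => absurd h hx2⟩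
  choose p hp1 hp2 using h3
  let f : V → V := fun y => if y ∈ U then h y else s y
  have hcov : ∀ y ∈ Y, y ∉ U → (y, s y) ∈ S := by
    intro y hy hyU
    apply hs
    by_contra hcon
    push Not at hcon
    exact hyU ⟨hy, hcon⟩
  have hfU : ∀ y, y ∈ U → f y = h y := fun y hy => if_pos hy
  have hfS : ∀ y, y ∉ U → f y = s y := fun y hy => if_neg hy
  refine ⟨{y | y ∈ Y ∧ y ∉ D ∧ y ∉ Z}, D, Z, f, p, ?_, ?_, ?_, ?_, ?_, ?_, ?_, ?_⟩
  · intro y hy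
    by_cases a : y ∈ D
    · exact Or.inr (Or.inl a)
    · by_cases b : y ∈ Z
      · exact Or.inr (Or.inr b)
      · exact Or.inl ⟨hy, a, b⟩
  · exact ⟨fun y hy => hy.1, hDY, fun y hy => hy.1.1⟩
  · exact fun y hy => hy.2
  · exact fun y hy hz => hDU y hy hz.1
  · rintro y ⟨hy, hyD, hyZ⟩
    by_cases hu : y ∈ U
    · rw [hfU y hu]; exact (hg y hu hyZ).1
    · rw [hfS y hu]; exact (hSadj _ (hcov y hy hu)).2
  · rintro y ⟨hy, hyD, hyZ⟩
    by_cases hu : y ∈ U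
    · right
      rw [hfU y hu, hp1 (h y) y hu hyZ rfl]
      exact ⟨⟨y, hu, hyZ, rfl⟩, (hg y hu hyZ).2.1⟩
    · rw [hfS y hu]
      have hc := hcov y hy hu
      obtain ⟨y2, hne, hy2⟩ := hStwo _ _ hc
      by_cases hy2D : y2 ∈ D
      · right
        have := hp2 (s y) (fun z hzu hzZ he => claim1 z (s y) y hzu.1 hzu.2
          (he ▸ (hg z hzu hzZ).1) hc) ⟨y2, hy2D, hy2⟩
        exact ⟨this.1, (hSadj _ this.2).2.symm⟩
      · left
        have hy2U : y2 ∉ U := fun h => h.2 _ hy2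
        have hy2Y := (hSadj _ hy2).1
        refine ⟨y2, ⟨hy2Y, hy2D, fun hz => hy2U hz.1⟩, hne, ?_⟩
        rw [hfS _ hy2U]
        exact hSfun _ _ _ (hcov y2 hy2Y hy2U) hy2
  · rintro d ⟨z, hu, hz, rfl⟩
    refine ⟨z, ⟨hu.1, fun hd => hDU z hd hu, hz⟩, ?_, ?_, ?_⟩
    · rintro y2 ⟨hy2, hy2D, hy2Z⟩ he
      rw [hfU z hu] at he
      by_cases hu2 : y2 ∈ U
      · rw [hfU _ hu2] at he
        exact hinj _ _ hu2 hy2Z hu hz he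
      · rw [hfS _ hu2] at he
        exact absurd (he ▸ hcov y2 hy2 hu2) (claim1 z (h z) y2 hu.1 hu.2 (hg z hu hz).1)
    · rw [hfU z hu]; exact hp1 _ z hu hz rfl
    · rw [hfU z hu]; exact (hg z hu hz).2.1
  · exact fun z hz => hz.2

set_option maxHeartbeats 1000000 in
/-- The colouring, as a function of ordered pairs `(x, y)`. -/
lemma colB {V : Type*} (G : SimpleGraph V) (Y : Set V)
    (hY : ∀ x y y', G.Adj x y → G.Adj x y' → y ∈ Y → y' ∈ Y)
    (hiso : ∀ v, ∃ w, G.Adj v w)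
    (htwo : ∀ z ∈ Y, (∀ x, G.Adj z x → ∀ y, G.Adj x y → y = z) →
      ∃ x1 x2, x1 ≠ x2 ∧ G.Adj z x1 ∧ G.Adj z x2) :
    ∃ col : V → V → Option ℕ,
      (∀ x y α, col x y = some α → α < 3) ∧
      (∀ x y, y ∈ Y → G.Adj x y →
        (∃ y' α, y' ≠ y ∧ G.Adj x y' ∧ col x y' = some α ∧
          (∀ y2, G.Adj x y2 → col x y2 = some α → y2 = y') ∧
          (∀ x2, G.Adj x2 y → col x2 y ≠ some α)) ∨
        (∃ x' α, x' ≠ x ∧ G.Adj x' y ∧ col x' y = some α ∧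
          (∀ x2, G.Adj x2 y → col x2 y = some α → x2 = x') ∧
          (∀ y2, G.Adj x y2 → col x y2 ≠ some α))) ∧
      (∀ y ∈ Y, ∃ x α, G.Adj x y ∧ col x y = some α ∧
          (∀ x2, G.Adj x2 y → col x2 y = some α → x2 = x)) ∧
      (∀ x y, y ∈ Y → G.Adj x y → (col x y).isSome →
        ∃ y' α, G.Adj x y' ∧ col x y' = some α ∧
          (∀ y2, G.Adj x y2 → col x y2 = some α → y2 = y')) := by
  classical
  obtain ⟨B, D, Z, f, p, hcase, ⟨hBY, hDY, hZY⟩, hB, hD, hf, h3, h4, h5⟩ := structA G Y hY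
  -- choices
  have e1 : ∀ x, ∃ a b, (∃ y ∈ B, f y = x) → (a ∈ B ∧ f a = x ∧
      ((∃ y ∈ B, f y = x ∧ y ≠ a) → b ∈ B ∧ f b = x ∧ b ≠ a)) := by
    intro x
    by_cases hx : ∃ y ∈ B, f y = x
    · obtain ⟨a, ha, hax⟩ := hx
      by_cases hx2 : ∃ y ∈ B, f y = x ∧ y ≠ a
      · obtain ⟨b, hb⟩ := hx2
        exact ⟨a, b, fun _ => ⟨ha, hax, fun _ => hb⟩⟩
      · exact ⟨a, a, fun _ => ⟨ha, hax, fun h => absurd h hx2⟩⟩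
    · exact ⟨x, x, fun h => absurd h hx⟩
  choose a b hab using e1
  have e2 : ∀ d, ∃ q, d ∈ D → ∃ y ∈ B, f y = q ∧ (∀ y2 ∈ B, f y2 = q → y2 = y) ∧
      p q = d ∧ G.Adj q d := by
    intro d
    by_cases hd : d ∈ D
    · obtain ⟨y, hy, k1, k2, k3⟩ := h4 d hd
      exact ⟨f y, fun _ => ⟨y, hy, rfl, k1, k2, k3⟩⟩
    · exact ⟨d, fun h => absurd h hd⟩
  choose q hq using e2
  have e3 : ∀ z, ∃ x1 x2, z ∈ Z → x1 ≠ x2 ∧ G.Adj z x1 ∧ G.Adj z x2 := by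
    intro z
    by_cases hz : z ∈ Z
    · obtain ⟨x1, x2, hx⟩ := htwo z (hZY hz) (h5 z hz)
      exact ⟨x1, x2, fun _ => hx⟩
    · exact ⟨z, z, fun h => absurd h hz⟩
  choose x1 x2 hx using e3
  let single : V → Prop := fun x => ∃ y ∈ B, f y = x ∧ ∀ y2 ∈ B, f y2 = x → y2 = y
  let col : V → V → Option ℕ := fun x y =>
    if y ∈ Z then (if x = x1 y then some 1 else if x = x2 y then some 2 else none)
    else if y ∈ D then
      (if single x ∧ p x = y then (if x = q y then some 2 else some 1) else none)
    else if y ∈ B then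
      (if f y = x then (if y = a x then some 0 else if y = b x then some 1 else some 2) else none)
    else none
  have cZ : ∀ x y, y ∈ Z → col x y =
      (if x = x1 y then some 1 else if x = x2 y then some 2 else none) :=
    fun x y hy => if_pos hy
  have cD : ∀ x y, y ∈ D → col x y =
      (if single x ∧ p x = y then (if x = q y then some 2 else some 1) else none) := by
    intro x y hy
    simp only [col, if_neg (hD y hy), if_pos hy]
  have cB : ∀ x y, y ∈ B → col x y =
      (if f y = x then (if y = a x then some 0 else if y = b x then some 1 else some 2)
        else none) := by
    intro x y hy
    simp only [col, if_neg (hB y hy).1, if_neg (hB y hy).2, if_pos hy]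
  have c3 : ∀ x y α, col x y = some α → α < 3 := by
    intro x y α h
    simp only [col] at h
    split_ifs at h <;> first | (cases h; norm_num; done) | (simp at h; done)
  clear_value col
  -- x side
  have hX : ∀ x, (∃ y ∈ B, f y = x) →
      (G.Adj x (a x) ∧ col x (a x) = some 0 ∧
        (∀ y, G.Adj x y → y ∈ Y → col x y = some 0 → y = a x)) ∧
      ∃ b' β, β ≠ 0 ∧ b' ∈ Y ∧ G.Adj x b' ∧ col x b' = some β ∧
        (∀ y, G.Adj x y → y ∈ Y → col x y = some β → y = b') := by
    intro x hxf
    obtain ⟨ha, hax, hb⟩ := hab x hxf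
    have hadj : G.Adj x (a x) := by
      have := (hf _ ha).symm
      rwa [hax] at this
    have hnZ : ∀ y, G.Adj x y → y ∉ Z := by
      intro y hy hz
      have := h5 y hz x hy.symm _ hadj
      exact (hB _ ha).2 (this ▸ hz)
    refine ⟨⟨hadj, by rw [cB _ _ ha]; simp [hax], ?_⟩, ?_⟩
    · intro y hy hyY hc
      rcases hcase y hyY with h | h | h
      · rw [cB _ _ h] at hc; split_ifs at hc <;> first | assumption | (simp at hc; done)
      · rw [cD _ _ h] at hc; split_ifs at hc <;> first | assumption | (simp at hc; done)
      · exact absurd h (hnZ y hy)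
    · by_cases hbig : ∃ y ∈ B, f y = x ∧ y ≠ a x
      · obtain ⟨hb1, hb2, hb3⟩ := hb hbig
        have hns : ¬ single x := by
          rintro ⟨y, hy, hyx, hu⟩
          exact hb3 ((hu _ hb1 hb2).trans (hu _ ha hax).symm)
        have hadjb : G.Adj x (b x) := by
          have := (hf _ hb1).symm
          rwa [hb2] at this
        refine ⟨b x, 1, one_ne_zero, hBY hb1, hadjb, by rw [cB _ _ hb1]; simp [hb2, hb3], ?_⟩
        intro y hy hyY hc
        rcases hcase y hyY with h | h | h
        · rw [cB _ _ h] at hc; split_ifs at hc <;> first | assumption | (simp at hc; done)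
        · rw [cD _ _ h, if_neg (fun h => hns h.1)] at hc; simp at hc
        · exact absurd h (hnZ y hy)
      · have hu : ∀ y ∈ B, f y = x → y = a x := by
          intro y hy hyx
          by_contra hne
          exact hbig ⟨y, hy, hyx, hne⟩
        have hsx : single x := ⟨a x, ha, hax, hu⟩
        have hpx : p x ∈ D ∧ G.Adj x (p x) := by
          rcases h3 _ ha with ⟨y2, hy2, hne, he⟩ | h
          · exact absurd (hu y2 hy2 (he.trans hax)) hne
          · rwa [hax] at h
        have hcol : ∃ β, β ≠ 0 ∧ col x (p x) = some β := by
          rw [cD _ _ hpx.1, if_pos ⟨hsx, rfl⟩]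
          split_ifs
          · exact ⟨2, by norm_num, rfl⟩
          · exact ⟨1, by norm_num, rfl⟩
        obtain ⟨β, hβ, hcβ⟩ := hcol
        refine ⟨p x, β, hβ, hDY hpx.1, hpx.2, hcβ, ?_⟩
        intro y hy hyY hc
        rcases hcase y hyY with h | h | h
        · rw [cB _ _ h] at hc
          by_cases hfy : f y = x
          · rw [if_pos hfy, if_pos (hu y h hfy)] at hc
            simp only [Option.some.injEq] at hc
            exact absurd hc.symm hβ
          · rw [if_neg hfy] at hc; simp at hc
        · rw [cD _ _ h] at hc
          by_cases hpy : single x ∧ p x = y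
          · exact hpy.2.symm
          · rw [if_neg hpy] at hc; simp at hc
        · exact absurd h (hnZ y hy)
  have hX0 : ∀ x, (¬ ∃ y ∈ B, f y = x) → ∀ y ∈ Y, y ∉ Z → col x y = none := by
    intro x hx y hy hz
    rcases hcase y hy with h | h | h
    · rw [cB _ _ h, if_neg (fun e => hx ⟨y, h, e⟩)]
    · rw [cD _ _ h, if_neg]
      rintro ⟨⟨y, h1, h2, -⟩, -⟩
      exact hx ⟨y, h1, h2⟩
    · exact absurd h hz
  -- y side
  have hYu : ∀ y ∈ Y, ∃ x α, G.Adj x y ∧ col x y = some α ∧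
          (∀ x2, G.Adj x2 y → col x2 y = some α → x2 = x) := by
    intro y hy
    rcases hcase y hy with h | h | h
    · have : ∃ α, col (f y) y = some α := by
        rw [cB _ _ h, if_pos rfl]
        split_ifs <;> exact ⟨_, rfl⟩
      obtain ⟨α, hα⟩ := this
      refine ⟨f y, α, (hf y h).symm, hα, fun x2 _ hc => ?_⟩
      rw [cB _ _ h] at hc
      by_contra hne
      rw [if_neg (fun e => hne e.symm)] at hc
      simp at hc
    · obtain ⟨y0, k1, k2, k3, k4, k5⟩ := hq y h
      refine ⟨q y, 2, k5, ?_, fun x2 _ hc => ?_⟩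
      · rw [cD _ _ h, if_pos ⟨⟨y0, k1, k2, k3⟩, k4⟩, if_pos rfl]
      · rw [cD _ _ h] at hc
        split_ifs at hc <;> first | assumption | (simp at hc; done)
    · obtain ⟨k1, k2, k3⟩ := hx y h
      refine ⟨x1 y, 1, k2.symm, by rw [cZ _ _ h, if_pos rfl], fun x2 _ hc => ?_⟩
      rw [cZ _ _ h] at hc
      split_ifs at hc <;> first | assumption | (simp at hc; done)
  have hY0 : ∀ y ∈ Y, y ∉ Z → (∀ x, col x y ≠ some 0) ∨ (∀ x α, col x y = some α → α = 0) := by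
    intro y hy hz
    rcases hcase y hy with h | h | h
    · by_cases hya : y = a (f y)
      · right
        intro x α hc
        rw [cB _ _ h] at hc
        by_cases hfx : f y = x
        · rw [if_pos hfx, ← hfx, if_pos hya] at hc
          simpa using hc.symm
        · rw [if_neg hfx] at hc; simp at hc
      · left
        intro x hc
        rw [cB _ _ h] at hc
        by_cases hfx : f y = x
        · rw [if_pos hfx, ← hfx, if_neg hya] at hc
          split_ifs at hc <;> simp at hc
        · rw [if_neg hfx] at hc; simp at hc
    · left
      intro x hc
      rw [cD _ _ h] at hc
      split_ifs at hc <;> simp at hc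
    · exact absurd h hz
  refine ⟨col, c3, ?_, hYu, ?_⟩
  · intro x y hy hadj
    by_cases hz : y ∈ Z
    · right
      have hon := h5 y hz x hadj.symm
      obtain ⟨k1, k2, k3⟩ := hx y hz
      by_cases hx1 : x = x1 y
      · refine ⟨x2 y, 2, fun e => k1 (hx1.symm.trans e.symm), k3.symm, ?_, ?_, ?_⟩
        · rw [cZ _ _ hz, if_neg (fun e => k1 e.symm), if_pos rfl]
        · intro x' _ hc
          rw [cZ _ _ hz] at hc
          split_ifs at hc <;> first | assumption | (simp at hc; done)
        · intro y2 hy2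
          rw [hon y2 hy2, cZ _ _ hz, if_pos hx1]
          simp
      · refine ⟨x1 y, 1, fun e => hx1 e.symm, k2.symm, ?_, ?_, ?_⟩
        · rw [cZ _ _ hz, if_pos rfl]
        · intro x' _ hc
          rw [cZ _ _ hz] at hc
          split_ifs at hc <;> first | assumption | (simp at hc; done)
        · intro y2 hy2
          rw [hon y2 hy2, cZ _ _ hz, if_neg hx1]
          split_ifs <;> simp
    · by_cases hxf : ∃ y ∈ B, f y = x
      · left
        obtain ⟨⟨m1, m2, m3⟩, b', β, n0, n1, n2, n3, n4⟩ := hX x hxf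
        rcases hY0 y hy hz with h0 | h0
        · exact ⟨a x, 0, fun e => h0 x (e ▸ m2), m1, m2,
            fun y2 hy2 hc => m3 y2 hy2 (hY _ _ _ hadj hy2 hy) hc, fun x2 _ => h0 x2⟩
        · exact ⟨b', β, fun e => n0 (h0 x β (e ▸ n3)), n2, n3,
            fun y2 hy2 hc => n4 y2 hy2 (hY _ _ _ hadj hy2 hy) hc,
            fun x2 _ hc => n0 (h0 x2 β hc)⟩
      · right
        have hnone : ∀ y2, G.Adj x y2 → col x y2 = none := by
          intro y2 hy2
          refine hX0 x hxf y2 (hY _ _ _ hadj hy2 hy) (fun hz2 => hz ?_)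
          rw [h5 y2 hz2 x hy2.symm y hadj]
          exact hz2
        obtain ⟨x', α, r1, r2, r3⟩ := hYu y hy
        refine ⟨x', α, ?_, r1, r2, r3, fun y2 hy2 => by rw [hnone y2 hy2]; simp⟩
        rintro rfl
        rw [hnone y hadj] at r2
        simp at r2
  · intro x y hy hadj hsome
    by_cases hz : y ∈ Z
    · obtain ⟨α, hα⟩ := Option.isSome_iff_exists.1 hsome
      exact ⟨y, α, hadj, hα, fun y2 hy2 _ => h5 y hz x hadj.symm y2 hy2⟩
    · by_cases hxf : ∃ y ∈ B, f y = x
      · obtain ⟨⟨m1, m2, m3⟩, -⟩ := hX x hxf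
        exact ⟨a x, 0, m1, m2, fun y2 hy2 hc => m3 y2 hy2 (hY _ _ _ hadj hy2 hy) hc⟩
      · rw [hX0 x hxf y hy hz] at hsome
        simp at hsome

theorem stmt3 {V : Type*} (G : SimpleGraph V) (X Y : Set V)
    (hpart : ∀ v, (v ∈ X ∧ v ∉ Y) ∨ (v ∈ Y ∧ v ∉ X))
    (hbip : ∀ u v, G.Adj u v → (u ∈ X ∧ v ∈ Y) ∨ (u ∈ Y ∧ v ∈ X))
    (hnoisovertex : ∀ v, (G.neighborSet v).Nonempty)
    (hnoisoedge : ∀ e ∈ G.edgeSet, (EON G e).Nonempty) :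
    ∃ c : Sym2 V → Option ℕ, PartialColouring G c 3 ∧
      (∀ e ∈ G.edgeSet, SatisfiedP G c e) ∧
      (∀ y ∈ Y, UniqueAt G c y) ∧
      (∀ x ∈ X, (∃ e ∈ G.incidenceSet x, (c e).isSome) → UniqueAt G c x) := by
  classical
  have hXY : ∀ x y, G.Adj x y → y ∈ Y → x ∈ X := by
    intro x y h hy
    have := hpart y
    rcases hbip x y h with h | h <;> tauto
  have hYX : ∀ x y, G.Adj x y → x ∈ X → y ∈ Y := by
    intro x y h hy
    have := hpart x
    rcases hbip x y h with h | h <;> tauto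
  have hdisj : ∀ v, v ∈ X → v ∈ Y → False := by
    intro v h1 h2
    have := hpart v
    tauto
  have hY : ∀ x y y', G.Adj x y → G.Adj x y' → y ∈ Y → y' ∈ Y :=
    fun x y y' h h' hy => hYX x y' h' (hXY x y h hy)
  obtain ⟨col, hc3, hsat, hyu, hxu⟩ := colB G Y hY hnoisovertex (by
    intro z hz hall
    obtain ⟨x, hx⟩ := hnoisovertex z
    have hx : G.Adj z x := hx
    obtain ⟨e, ⟨he, w, hw, hwz⟩, hne⟩ := hnoisoedge s(z, x) hx
    obtain ⟨v, rfl⟩ := hw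
    have hadj : G.Adj w v := he
    rcases Sym2.mem_iff.1 hwz with rfl | rfl
    · exact ⟨x, v, fun e => hne (by simp [e]), hx, hadj⟩
    · have := hall w hx v hadj
      exact absurd (by simp [this, Sym2.eq_swap]) hne)
  let c : Sym2 V → Option ℕ := fun e =>
    if h : ∃ q : V × V, q.1 ∈ X ∧ q.2 ∈ Y ∧ G.Adj q.1 q.2 ∧ e = s(q.1, q.2) then
      col h.choose.1 h.choose.2 else none
  have hc : ∀ x y, G.Adj x y → y ∈ Y → c s(x, y) = col x y := by
    intro x y hadj hy
    have h : ∃ q : V × V, q.1 ∈ X ∧ q.2 ∈ Y ∧ G.Adj q.1 q.2 ∧ s(x, y) = s(q.1, q.2) :=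
      ⟨(x, y), hXY x y hadj hy, hy, hadj, rfl⟩
    have hcc : c s(x, y) = col h.choose.1 h.choose.2 := dif_pos h
    obtain ⟨k1, k2, k3, k4⟩ := h.choose_spec
    rw [hcc]
    rcases Sym2.eq_iff.1 k4 with ⟨r1, r2⟩ | ⟨r1, r2⟩
    · rw [← r1, ← r2]
    · rw [← r2] at k1
      exact (hdisj y k1 hy).elim
  have hedge : ∀ e ∈ G.edgeSet, ∃ x y, x ∈ X ∧ y ∈ Y ∧ G.Adj x y ∧ e = s(x, y) := by
    intro e he
    induction e using Sym2.ind with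
    | _ u v =>
      have hadj : G.Adj u v := he
      rcases hbip u v hadj with ⟨h1, h2⟩ | ⟨h1, h2⟩
      · exact ⟨u, v, h1, h2, hadj, rfl⟩
      · exact ⟨v, u, h2, h1, hadj.symm, Sym2.eq_swap⟩
  refine ⟨c, ?_, ?_, ?_, ?_⟩
  · intro e α h
    by_cases hq : ∃ q : V × V, q.1 ∈ X ∧ q.2 ∈ Y ∧ G.Adj q.1 q.2 ∧ e = s(q.1, q.2)
    · obtain ⟨⟨x, y⟩, k1, k2, k3, rfl⟩ := hq
      refine ⟨k3, ?_⟩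
      rw [hc x y k3 k2] at h
      exact hc3 _ _ _ h
    · have : c e = none := dif_neg hq
      rw [this] at h
      simp at h
  · intro e he
    obtain ⟨x, y, hx, hy, hadj, rfl⟩ := hedge e he
    have hmem : ∀ g ∈ ECN G s(x, y), (∃ y2, y2 ∈ Y ∧ G.Adj x y2 ∧ g = s(x, y2)) ∨
        (∃ x2, G.Adj x2 y ∧ g = s(x2, y)) := by
      rintro g ⟨hg, w, hwg, hwe⟩
      obtain ⟨x', y', hx', hy', hadj', rfl⟩ := hedge g hg
      rcases Sym2.mem_iff.1 hwe with rfl | rfl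
      · rcases Sym2.mem_iff.1 hwg with rfl | rfl
        · exact Or.inl ⟨y', hy', hadj', rfl⟩
        · exact (hdisj _ hx hy').elim
      · rcases Sym2.mem_iff.1 hwg with rfl | rfl
        · exact (hdisj _ hx' hy).elim
        · exact Or.inr ⟨x', hadj', rfl⟩
    rcases hsat x y hy hadj with ⟨y', α, hne, ha', hcol, hu1, hu2⟩ | ⟨x', α, hne, ha', hcol, hu1, hu2⟩
    · have hy' := hY _ _ _ hadj ha' hy
      refine ⟨s(x, y'), ⟨⟨ha', x, by simp, by simp⟩, ?_⟩, α, ?_, ?_⟩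
      · intro h
        have h : s(x, y') = s(x, y) := h
        exact hne (Sym2.congr_right.1 h)
      · rw [hc _ _ ha' hy', hcol]
      · intro g hg hgc
        rcases hmem g hg with ⟨y2, k1, k2, rfl⟩ | ⟨x2, k1, rfl⟩
        · rw [hc _ _ k2 k1] at hgc
          rw [hu1 y2 k2 hgc]
        · rw [hc _ _ k1 hy] at hgc
          exact absurd hgc (hu2 x2 k1)
    · refine ⟨s(x', y), ⟨⟨ha', y, by simp, by simp⟩, ?_⟩, α, ?_, ?_⟩
      · intro h
        have h : s(x', y) = s(x, y) := h
        exact hne (Sym2.congr_left.1 h)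
      · rw [hc _ _ ha' hy, hcol]
      · intro g hg hgc
        rcases hmem g hg with ⟨y2, k1, k2, rfl⟩ | ⟨x2, k1, rfl⟩
        · rw [hc _ _ k2 k1] at hgc
          exact absurd hgc (hu2 y2 k2)
        · rw [hc _ _ k1 hy] at hgc
          rw [hu1 x2 k1 hgc]
  · intro y hy
    obtain ⟨x, α, hadj, hcol, hu⟩ := hyu y hy
    refine ⟨s(x, y), ⟨hadj, by simp⟩, α, by rw [hc _ _ hadj hy, hcol], ?_⟩
    rintro g ⟨hg, hyg⟩ hgc
    obtain ⟨x', y', hx', hy', hadj', rfl⟩ := hedge g hg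
    rcases Sym2.mem_iff.1 hyg with rfl | rfl
    · exact (hdisj _ hx' hy).elim
    · rw [hc _ _ hadj' hy] at hgc
      rw [hu x' hadj' hgc]
  · rintro x hx ⟨e, ⟨he, hxe⟩, hsome⟩
    obtain ⟨x', y', hx', hy', hadj', rfl⟩ := hedge e he
    rcases Sym2.mem_iff.1 hxe with rfl | rfl
    · rw [hc _ _ hadj' hy'] at hsome
      obtain ⟨y, α, hadj, hcol, hu⟩ := hxu x y' hy' hadj' hsome
      refine ⟨s(x, y), ⟨hadj, by simp⟩, α, by rw [hc _ _ hadj (hYX _ _ hadj hx), hcol], ?_⟩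
      rintro g ⟨hg, hxg⟩ hgc
      obtain ⟨x2, y2, hx2, hy2, hadj2, rfl⟩ := hedge g hg
      rcases Sym2.mem_iff.1 hxg with rfl | rfl
      · rw [hc _ _ hadj2 hy2] at hgc
        rw [hu y2 hadj2 hgc]
      · exact (hdisj _ hx hy2).elim
    · exact (hdisj _ hx hy').elim
end

section
/- For every bipartite graph G with no isolated edges and maximum degree at least 1, the open conflict-free chromatic index satisfies χ'_ocf(G) ≤ 4, and moreover there is an edge colouring of all edges with 4 colours that is simultaneously closed and open conflict-free. -/
open SimpleGraph

/-- A dominating set with first-dominator map (transfinite recursion along a well-order). -/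
theorem exists_kept {V : Type*} (G : SimpleGraph V) (B : V → Prop)
    (hB : ∀ u v, G.Adj u v → (B u ↔ ¬ B v)) :
    ∃ (K : Set V) (d : V → V), (∀ s ∈ K, B s) ∧
      (∀ a b, ¬ B a → G.Adj b a → d a ∈ K ∧ G.Adj (d a) a) ∧
      (∀ s ∈ K, ∃ a, G.Adj s a ∧ d a = s ∧
        ((∃ b, b ∉ K ∧ G.Adj b a) ∨ ∀ b, G.Adj b a → b = s)) := by
  classical
  obtain ⟨r, hr⟩ : ∃ r : V → V → Prop, IsWellOrder V r := ⟨WellOrderingRel, inferInstance⟩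
  have wf : WellFounded r := hr.wf
  let F : (b : V) → ((b' : V) → r b' b → Prop) → Prop := fun b ih =>
    B b ∧ ∃ a, G.Adj b a ∧ (∀ b' (h : r b' b), G.Adj b' a → ¬ ih b' h) ∧
      ((∃ b', r b' b ∧ G.Adj b' a) ∨ ∀ b', G.Adj b' a → b' = b)
  let k : V → Prop := wf.fix F
  have hk : ∀ b, k b ↔ (B b ∧ ∃ a, G.Adj b a ∧ (∀ b', r b' b → G.Adj b' a → ¬ k b') ∧
      ((∃ b', r b' b ∧ G.Adj b' a) ∨ ∀ b', G.Adj b' a → b' = b)) := by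
    intro b
    have := wf.fix_eq F b
    exact iff_of_eq this
  have hdom : ∀ a b, ¬ B a → G.Adj b a → ∃ s, k s ∧ G.Adj s a := by
    intro a b ha hba
    by_contra hcon
    push Not at hcon
    have hno : ∀ b', G.Adj b' a → ¬ k b' := fun b' h hk' => hcon b' hk' h
    by_cases hleaf : ∀ b', G.Adj b' a → b' = b
    · exact hno b hba ((hk b).2 ⟨(hB _ _ hba).2 ha, a, hba, fun b' _ h => hno b' h, Or.inr hleaf⟩)
    · push Not at hleaf
      obtain ⟨b', hb', hne⟩ := hleaf
      rcases trichotomous_of r b' b with h | h | h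
      · exact hno b hba ((hk b).2 ⟨(hB _ _ hba).2 ha, a, hba, fun b' _ h => hno b' h,
          Or.inl ⟨b', h, hb'⟩⟩)
      · exact hne h
      · exact hno b' hb' ((hk b').2 ⟨(hB _ _ hb').2 ha, a, hb', fun b' _ h => hno b' h,
          Or.inl ⟨b, h, hba⟩⟩)
  have hd : ∀ a, ∃ s, (∃ s', k s' ∧ G.Adj s' a) →
      (k s ∧ G.Adj s a ∧ ∀ s', k s' → G.Adj s' a → ¬ r s' s) := by
    intro a
    by_cases h : ∃ s', k s' ∧ G.Adj s' a
    · obtain ⟨m, hm, hmin⟩ := wf.has_min {s' | k s' ∧ G.Adj s' a} h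
      exact ⟨m, fun _ => ⟨hm.1, hm.2, fun s' h1 h2 => hmin s' ⟨h1, h2⟩⟩⟩
    · exact ⟨a, fun h' => (h h').elim⟩
  choose d hd using hd
  refine ⟨{s | k s}, d, fun s hs => ((hk s).1 hs).1, ?_, ?_⟩
  · intro a b ha hba
    have := hd a (hdom a b ha hba)
    exact ⟨this.1, this.2.1⟩
  · intro s hs
    obtain ⟨hBs, a, hsa, hearly, hcase⟩ := (hk s).1 hs
    have hda := hd a ⟨s, hs, hsa⟩
    refine ⟨a, hsa, ?_, ?_⟩
    · rcases trichotomous_of r (d a) s with h | h | h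
      · exact (hearly _ h hda.2.1 hda.1).elim
      · exact h
      · exact (hda.2.2 s hs hsa h).elim
    · rcases hcase with ⟨b', h1, h2⟩ | h
      · exact Or.inl ⟨b', hearly b' h1 h2, h2⟩
      · exact Or.inr h

/-- The colouring of ordered pairs (B-vertex, A-vertex). -/
theorem exists_col {V : Type*} (G : SimpleGraph V) (B : V → Prop)
    (hB : ∀ u v, G.Adj u v → (B u ↔ ¬ B v))
    (hiso : ∀ b a, G.Adj b a → (∃ a', a' ≠ a ∧ G.Adj b a') ∨ ∃ b', b' ≠ b ∧ G.Adj b' a) :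
    ∃ col : V → V → ℕ, (∀ b a, col b a < 4) ∧
      ∀ b a, B b → G.Adj b a → ∃ b0 a0, G.Adj b0 a0 ∧ B b0 ∧ (b0 = b ∨ a0 = a) ∧
        ¬ (b0 = b ∧ a0 = a) ∧
        (∀ a', G.Adj b a' → col b a' = col b0 a0 → b = b0 ∧ a' = a0) ∧
        (∀ b', G.Adj b' a → col b' a = col b0 a0 → b' = b0 ∧ a = a0) := by
  classical
  obtain ⟨K, d, hKB, hd, hK⟩ := exists_kept G B hB
  let split : V → Prop := fun a => ∃ b, b ∉ K ∧ G.Adj b a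
  let lt : V → Prop := fun s => ¬ ∃ a, G.Adj s a ∧ d a = s ∧ split a
  have hp : ∀ s, ∃ a, s ∈ K → (G.Adj s a ∧ d a = s ∧ (¬ lt s → split a) ∧
      (lt s → ∀ b, G.Adj b a → b = s)) := by
    intro s
    by_cases hs : s ∈ K
    · by_cases hl : lt s
      · obtain ⟨a, h1, h2, h3⟩ := hK s hs
        refine ⟨a, fun _ => ⟨h1, h2, fun h => (h hl).elim, fun _ => ?_⟩⟩
        rcases h3 with h3 | h3
        · exact (hl ⟨a, h1, h2, h3⟩).elim
        · exact h3
      · obtain ⟨a, h1, h2, h3⟩ := not_not.1 hl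
        exact ⟨a, fun _ => ⟨h1, h2, fun _ => h3, fun h => (hl h).elim⟩⟩
    · exact ⟨s, fun h => (hs h).elim⟩
  choose p hp using hp
  let inP : V → Prop := fun a => p (d a) = a
  let soft : V → Prop := fun a => inP a ∨ ¬ split a
  have hq : ∀ a, ∃ b, split a → (b ∉ K ∧ G.Adj b a) := by
    intro a
    by_cases h : split a
    · exact ⟨h.choose, fun _ => h.choose_spec⟩
    · exact ⟨a, fun h' => (h h').elim⟩
  choose q hq using hq
  have ht : ∀ s, ∃ t, ((∃ a, a ≠ p s ∧ G.Adj s a) → (t ≠ p s ∧ G.Adj s t)) ∧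
      ((∃ a, a ≠ p s ∧ G.Adj s a ∧ soft a) → soft t) := by
    intro s
    by_cases h : ∃ a, a ≠ p s ∧ G.Adj s a ∧ soft a
    · obtain ⟨a, h1, h2, h3⟩ := h
      exact ⟨a, fun _ => ⟨h1, h2⟩, fun _ => h3⟩
    · by_cases h' : ∃ a, a ≠ p s ∧ G.Adj s a
      · obtain ⟨a, h1, h2⟩ := h'
        exact ⟨a, fun _ => ⟨h1, h2⟩, fun h3 => (h h3).elim⟩
      · exact ⟨s, fun h3 => (h' h3).elim, fun h3 => (h h3).elim⟩
  choose t ht ht' using ht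
  let col : V → V → ℕ := fun b a =>
    if b ∈ K then
      if a = p b then 1
      else if lt b ∧ a = t b then (if soft a then 2 else 3)
      else if b = d a ∧ ¬ soft a then 2 else 0
    else if inP a ∧ b = q a then 3 else 0
  have col_one : ∀ b a, col b a = 1 → b ∈ K ∧ a = p b := by
    intro b a h
    simp only [col] at h
    split_ifs at h <;> first | omega | exact ⟨by assumption, by assumption⟩
  have col_p : ∀ b ∈ K, col b (p b) = 1 := by
    intro b hb
    simp [col, hb]
  have col_threeK : ∀ b a, b ∈ K → col b a = 3 → lt b ∧ a = t b ∧ ¬ soft a := by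
    intro b a hb h
    simp only [col, if_pos hb] at h
    split_ifs at h with h1 h2 h3 h4 <;> first | omega | exact ⟨h2.1, h2.2, h3⟩
  have col_out : ∀ b a, b ∉ K → col b a = 0 ∨ (col b a = 3 ∧ inP a ∧ b = q a) := by
    intro b a hb
    simp only [col, if_neg hb]
    split_ifs with h1
    · exact Or.inr ⟨rfl, h1⟩
    · exact Or.inl rfl
  -- the unique edge of colour 3 at a split vertex of the matching
  have three_at : ∀ a, inP a → split a → col (q a) a = 3 ∧ ∀ b', col b' a = 3 → b' = q a := by
    intro a ha hs
    refine ⟨by simp [col, (hq a hs).1, ha], ?_⟩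
    intro b' hb'
    by_cases hbK : b' ∈ K
    · exact ((col_threeK b' a hbK hb').2.2 (Or.inl ha)).elim
    · rcases col_out b' a hbK with h | h
      · omega
      · exact h.2.2
  refine ⟨col, ?_, ?_⟩
  · intro b a
    simp only [col]
    split_ifs <;> omega
  intro b a hb hba
  have hna : ¬ B a := (hB _ _ hba).1 hb
  obtain ⟨hdK, hdA⟩ := hd a b hna hba
  have inP_of : ∀ s ∈ K, inP (p s) := by
    intro s hs
    show p (d (p s)) = p s
    rw [(hp s hs).2.1]
  by_cases hbK : b ∈ K
  · by_cases hap : a = p b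
    · have hPa : inP a := hap ▸ inP_of b hbK
      by_cases hl : lt b
      · -- leaf type
        have hleaf : ∀ b', G.Adj b' a → b' = b := by
          rw [hap]; exact (hp b hbK).2.2.2 hl
        have hex : ∃ a', a' ≠ p b ∧ G.Adj b a' := by
          rcases hiso b a hba with ⟨a', h1, h2⟩ | ⟨b', h1, h2⟩
          · exact ⟨a', hap ▸ h1, h2⟩
          · exact (h1 (hleaf b' h2)).elim
        obtain ⟨htp, htA⟩ := ht b hex
        have hct : col b (t b) = 2 ∨ col b (t b) = 3 := by
          simp only [col, if_pos hbK, if_neg htp, hl, true_and, if_true]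
          split_ifs <;> simp
        refine ⟨b, t b, htA, hb, Or.inl rfl, fun h => htp (h.2.trans hap), ?_, ?_⟩
        · intro a' ha' hc
          refine ⟨rfl, ?_⟩
          by_contra hne
          have hne1 : col b a' ≠ 1 := by omega
          have hne0 : col b a' ≠ 0 := by omega
          have hap' : a' ≠ p b := by
            rintro rfl; exact hne1 (col_p b hbK)
          simp only [col, if_pos hbK, if_neg hap', hne, and_false, if_false] at hne0
          split_ifs at hne0 with h
          · obtain ⟨h1, h2⟩ := h
            have : split a' := by
              by_contra h3; exact h2 (Or.inr h3)
            exact hl ⟨a', ha', h1.symm, this⟩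
          · exact hne0 rfl
        · intro b' hb' hc
          have := hleaf b' hb'
          subst this
          rw [hap, col_p b' hbK] at hc
          omega
      · have hsp : split a := hap ▸ (hp b hbK).2.2.1 hl
        obtain ⟨h3, h3u⟩ := three_at a hPa hsp
        obtain ⟨hqK, hqA⟩ := hq a hsp
        refine ⟨q a, a, hqA, (hB _ _ hqA).2 hna, Or.inr rfl, ?_, ?_, ?_⟩
        · rintro ⟨h, -⟩; exact hqK (h ▸ hbK)
        · intro a' _ hc
          rw [h3] at hc
          exact (hl (col_threeK b a' hbK hc).1).elim
        · intro b' _ hc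
          rw [h3] at hc
          exact ⟨h3u b' hc, rfl⟩
    · by_cases hPa : inP a
      · have hbd : b ≠ d a := by
          rintro h; apply hap; rw [h]; exact hPa.symm
        have hnl : ¬ lt (d a) := by
          intro hl
          have := (hp (d a) hdK).2.2.2 hl b
          rw [show p (d a) = a from hPa] at this
          exact hbd (this hba)
        have hsp : split a := by
          have := (hp (d a) hdK).2.2.1 hnl
          rwa [show p (d a) = a from hPa] at this
        obtain ⟨h3, h3u⟩ := three_at a hPa hsp
        obtain ⟨hqK, hqA⟩ := hq a hsp
        refine ⟨q a, a, hqA, (hB _ _ hqA).2 hna, Or.inr rfl, ?_, ?_, ?_⟩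
        · rintro ⟨h, -⟩; exact hqK (h ▸ hbK)
        · intro a' _ hc
          rw [h3] at hc
          obtain ⟨_, h2, hns⟩ := col_threeK b a' hbK hc
          exact (hns (h2 ▸ ht' b ⟨a, hap, hba, Or.inl hPa⟩)).elim
        · intro b' _ hc
          rw [h3] at hc
          exact ⟨h3u b' hc, rfl⟩
      · refine ⟨b, p b, (hp b hbK).1, hb, Or.inl rfl, fun h => hap h.2.symm, ?_, ?_⟩
        · intro a' _ hc
          rw [col_p b hbK] at hc
          exact ⟨rfl, (col_one b a' hc).2⟩
        · intro b' _ hc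
          rw [col_p b hbK] at hc
          obtain ⟨h1, h2⟩ := col_one b' a hc
          exact (hPa (h2 ▸ inP_of b' h1)).elim
  · have hsp : split a := ⟨b, hbK, hba⟩
    have hdb : d a ≠ b := fun h => hbK (h ▸ hdK)
    by_cases hPa : inP a
    · have hc1 : col (d a) a = 1 := by
        have := col_p (d a) hdK
        rwa [show p (d a) = a from hPa] at this
      refine ⟨d a, a, hdA, hKB _ hdK, Or.inr rfl, fun h => hdb h.1, ?_, ?_⟩
      · intro a' _ hc
        rw [hc1] at hc
        exact (hbK (col_one b a' hc).1).elim
      · intro b' _ hc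
        rw [hc1] at hc
        obtain ⟨h1, h2⟩ := col_one b' a hc
        exact ⟨by rw [h2]; exact ((hp b' h1).2.1).symm, rfl⟩
    · have hns : ¬ soft a := fun h => h.elim hPa (fun h => h hsp)
      have hnp : a ≠ p (d a) := fun h => hPa h.symm
      have hnl : ¬ lt (d a) := fun hl => hl ⟨a, hdA, rfl, hsp⟩
      have hc2 : col (d a) a = 2 := by
        simp [col, hdK, hnp, hnl, hns]
      refine ⟨d a, a, hdA, hKB _ hdK, Or.inr rfl, fun h => hdb h.1, ?_, ?_⟩
      · intro a' _ hc
        rw [hc2] at hc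
        rcases col_out b a' hbK with h | h <;> omega
      · intro b' _ hc
        rw [hc2] at hc
        refine ⟨?_, rfl⟩
        by_contra hne
        by_cases hbK' : b' ∈ K
        · simp only [col, if_pos hbK', hns, if_false, hne, false_and] at hc
          split_ifs at hc <;> omega
        · rcases col_out b' a hbK' with h | h <;> omega

theorem stmt4 {V : Type*} (G : SimpleGraph V) (hbip : G.Colorable 2)
    (hnoisoedge : ∀ e ∈ G.edgeSet, (EON G e).Nonempty)
    (hΔ : G.edgeSet.Nonempty) :
    ocfIndex G ≤ 4 ∧
    ∃ c : Sym2 V → ℕ, ClosedCF G c 4 ∧ OpenCF G c 4 := by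
  classical
  suffices h : ∃ c : Sym2 V → ℕ, ClosedCF G c 4 ∧ OpenCF G c 4 by
    refine ⟨?_, h⟩
    obtain ⟨c, _, hc⟩ := h
    exact Nat.sInf_le ⟨c, hc⟩
  obtain ⟨C⟩ := hbip
  let B : V → Prop := fun v => C v = 0
  have hB : ∀ u v, G.Adj u v → (B u ↔ ¬ B v) := by
    intro u v h
    have := C.valid h
    simp only [B]
    omega
  have hiso : ∀ b a, G.Adj b a →
      (∃ a', a' ≠ a ∧ G.Adj b a') ∨ ∃ b', b' ≠ b ∧ G.Adj b' a := by
    intro b a hba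
    obtain ⟨f, ⟨hf, w, hwf, hwe⟩, hne⟩ := hnoisoedge s(b, a) hba
    obtain ⟨z, rfl⟩ := Sym2.mem_iff_exists.1 hwf
    have hwz : G.Adj w z := hf
    rcases Sym2.mem_iff.1 hwe with rfl | rfl
    · exact Or.inl ⟨z, fun h => hne (by rw [h]; rfl), hwz⟩
    · exact Or.inr ⟨z, fun h => hne (by rw [h, Sym2.eq_swap]; rfl), hwz.symm⟩
  obtain ⟨col, hlt, hcol⟩ := exists_col G B hB hiso
  let F : V → V → ℕ := fun u v =>
    if B u then (if B v then 0 else col u v) else (if B v then col v u else 0)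
  have hF : ∀ u v, F u v = F v u := by
    intro u v
    simp only [F]
    split_ifs <;> rfl
  let c : Sym2 V → ℕ := Sym2.lift ⟨F, hF⟩
  have hc : ∀ b a, B b → G.Adj b a → c s(b, a) = col b a := by
    intro b a hb hba
    have := (hB _ _ hba).1 hb
    simp [c, F, hb, this]
  have hc4 : ∀ e ∈ G.edgeSet, c e < 4 := by
    intro e _
    induction e using Sym2.ind with
    | _ u v =>
      simp only [c, Sym2.lift_mk, F]
      split_ifs <;> first | exact hlt _ _ | omega
  have key : ∀ e ∈ G.edgeSet, ∃ e' ∈ EON G e, ∀ f ∈ ECN G e, c f = c e' → f = e' := by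
    have main : ∀ b a, B b → G.Adj b a →
        ∃ e' ∈ EON G s(b, a), ∀ f ∈ ECN G s(b, a), c f = c e' → f = e' := by
      intro b a hb hba
      have hna : ¬ B a := (hB _ _ hba).1 hb
      obtain ⟨b0, a0, h0, hB0, hor, hne, h1, h2⟩ := hcol b a hb hba
      have hna0 : ¬ B a0 := (hB _ _ h0).1 hB0
      refine ⟨s(b0, a0), ⟨⟨h0, ?_⟩, ?_⟩, ?_⟩
      · rcases hor with rfl | rfl
        · exact ⟨b0, by simp, by simp⟩
        · exact ⟨a0, by simp, by simp⟩
      · intro h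
        rcases Sym2.eq_iff.1 (Set.mem_singleton_iff.1 h) with h | h
        · exact hne h
        · exact hna (h.1 ▸ hB0)
      · rintro f ⟨hf, w, hwf, hwe⟩ hcf
        obtain ⟨z, rfl⟩ := Sym2.mem_iff_exists.1 hwf
        have hwz : G.Adj w z := hf
        rw [hc b0 a0 hB0 h0] at hcf
        rcases Sym2.mem_iff.1 hwe with rfl | rfl
        · rw [hc _ _ hb hwz] at hcf
          obtain ⟨e1, e2⟩ := h1 z hwz hcf
          rw [e1, e2]
        · rw [Sym2.eq_swap, hc _ _ ((hB _ _ hwz.symm).2 hna) hwz.symm] at hcf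
          obtain ⟨e1, e2⟩ := h2 z hwz.symm hcf
          rw [Sym2.eq_swap, e1, e2]
    intro e he
    induction e using Sym2.ind with
    | _ u v =>
      have huv : G.Adj u v := he
      by_cases hu : B u
      · exact main u v hu huv
      · have hv : B v := by
          by_contra h; exact hu ((hB _ _ huv).2 h)
        rw [Sym2.eq_swap]
        exact main v u hv huv.symm
  refine ⟨c, ⟨hc4, ?_⟩, ⟨hc4, ?_⟩⟩
  · intro e he
    obtain ⟨e', h1, h2⟩ := key e he
    exact ⟨c e', e', ⟨h1.1, rfl⟩, fun f hf => h2 f hf.1 hf.2⟩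
  · intro e he _
    obtain ⟨e', h1, h2⟩ := key e he
    exact ⟨c e', e', ⟨h1, rfl⟩, fun f hf => h2 f hf.1.1 hf.2⟩
end

section
/- For every α ≥ 1, every graph G with chromatic number at most α admits a partial edge colouring using at most 3⌈log₂ α⌉ colours such that all edges of G are satisfied, except possibly for a set M of uncoloured edges forming a matching. -/
open SimpleGraph

/-- greedy recolouring -/
noncomputable def greedyCol {V : Type*} (G : SimpleGraph V) (g : V → ℕ) (v : V) : ℕ :=
  sInf {c | ∀ u, (h : G.Adj v u ∧ g u < g v) → greedyCol G g u ≠ c}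
termination_by g v
decreasing_by exact h.2

lemma greedyCol_le {V : Type*} (G : SimpleGraph V) (g : V → ℕ) :
    ∀ n v, g v = n → greedyCol G g v ≤ g v := by
  intro n
  induction n using Nat.strong_induction_on with
  | _ n ih =>
    intro v hv
    rw [greedyCol]
    apply Nat.sInf_le
    intro u h
    have := ih (g u) (by omega) u rfl
    omega

lemma greedyCol_mem {V : Type*} (G : SimpleGraph V) (g : V → ℕ) (v : V) :
    ∀ u, (h : G.Adj v u ∧ g u < g v) → greedyCol G g u ≠ greedyCol G g v := by
  have hne : {c | ∀ u, (h : G.Adj v u ∧ g u < g v) → greedyCol G g u ≠ c}.Nonempty := by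
    refine ⟨g v, ?_⟩
    intro u h
    have := greedyCol_le G g _ u rfl
    omega
  have := Nat.sInf_mem hne
  rw [← greedyCol] at this
  exact this

lemma exists_grundy {V : Type*} (G : SimpleGraph V) (n : ℕ) (h : G.Colorable n) :
    ∃ f : V → ℕ, (∀ v, f v < n) ∧ (∀ u v, G.Adj u v → f u ≠ f v) ∧
      ∀ v c, c < f v → ∃ u, G.Adj v u ∧ f u = c := by
  obtain ⟨C⟩ := h
  let g : V → ℕ := fun v => (C v : ℕ)
  have hg : ∀ u v, G.Adj u v → g u ≠ g v := by
    intro u v huv he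
    exact C.valid huv (Fin.ext he)
  refine ⟨greedyCol G g, ?_, ?_, ?_⟩
  · intro v
    exact lt_of_le_of_lt (greedyCol_le G g _ v rfl) (C v).2
  · intro u v huv
    rcases lt_or_gt_of_ne (hg u v huv) with h | h
    · exact greedyCol_mem G g v u ⟨huv.symm, h⟩
    · exact (greedyCol_mem G g u v ⟨huv, h⟩).symm
  · intro v c hc
    rw [greedyCol] at hc
    have := Nat.notMem_of_lt_sInf hc
    simp only [Set.mem_ofPred_eq, not_forall, not_not] at this
    obtain ⟨u, h, hu⟩ := this
    exact ⟨u, h.1, hu⟩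

/-- disjoint cherries -/
def CherryOK {V : Type*} (H : SimpleGraph V) (B : V → Prop) (T : Set (V × V × V)) : Prop :=
  (∀ t ∈ T, ¬ B t.1 ∧ H.Adj t.1 t.2.1 ∧ H.Adj t.1 t.2.2 ∧ t.2.1 ≠ t.2.2) ∧
  ∀ t ∈ T, ∀ t' ∈ T, t ≠ t' → t.1 ≠ t'.1 ∧ t.2.1 ≠ t'.2.1 ∧ t.2.2 ≠ t'.2.2 ∧ t.2.1 ≠ t'.2.2

lemma exists_max_cherry {V : Type*} (H : SimpleGraph V) (B : V → Prop) :
    ∃ T, Maximal (CherryOK H B) T := by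
  have := zorn_subset {T | CherryOK H B T} ?_
  · obtain ⟨T, hT⟩ := this
    exact ⟨T, hT⟩
  · intro c hc hch
    refine ⟨⋃₀ c, ⟨?_, ?_⟩, fun s hs => Set.subset_sUnion_of_mem hs⟩
    · rintro t ⟨s, hs, hts⟩
      exact (hc hs).1 t hts
    · rintro t ⟨s, hs, hts⟩ t' ⟨s', hs', hts'⟩ hne
      rcases hch.total hs hs' with h | h
      · exact (hc hs').2 t (h hts) t' hts' hne
      · exact (hc hs).2 t hts t' (h hts') hne

lemma exists_stars {V : Type*} (H : SimpleGraph V) (B : V → Prop)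
    (hB : ∀ u v, H.Adj u v → (B u ↔ ¬ B v)) :
    ∃ (C L : Set V) (ctr : V → V) (col : V → ℕ) (x y : V → V),
      (∀ b ∈ L, B b ∧ H.Adj (ctr b) b ∧ ctr b ∈ C ∧ col b < 3) ∧
      (∀ a ∈ C, ¬ B a ∧ x a ∈ L ∧ ctr (x a) = a ∧ col (x a) = 1 ∧
        ∀ b ∈ L, ctr b = a → col b = 1 → b = x a) ∧
      (∀ a ∈ C, y a ∈ L ∧ ctr (y a) = a ∧ col (y a) = 0 ∧
        ∀ b ∈ L, ctr b = a → col b = 0 → b = y a) ∧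
      (∀ b, b ∉ L → ∀ a ∈ C, ¬ H.Adj a b) ∧
      (∀ a, a ∉ C → ¬ B a → ∀ b b', b ∉ L → b' ∉ L → H.Adj a b → H.Adj a b' → b = b') := by
  classical
  obtain ⟨T, hT⟩ := exists_max_cherry H B
  obtain ⟨⟨h1, h2⟩, hmax⟩ := hT
  let C : Set V := {a | ∃ b b', (a, b, b') ∈ T}
  have hx : ∀ a, ∃ b b', a ∈ C → (a, b, b') ∈ T := by
    intro a
    by_cases ha : a ∈ C
    · obtain ⟨b, b', h⟩ := ha
      exact ⟨b, b', fun _ => h⟩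
    · exact ⟨a, a, fun h => absurd h ha⟩
  choose x y hxy using hx
  have hxx : ∀ a ∈ C, ∀ a' ∈ C, x a = x a' → a = a' := by
    intro a ha a' ha' h
    by_contra hne
    exact (h2 _ (hxy a ha) _ (hxy a' ha') (fun hh => hne (congrArg Prod.fst hh))).2.1 h
  have hyy : ∀ a ∈ C, ∀ a' ∈ C, y a = y a' → a = a' := by
    intro a ha a' ha' h
    by_contra hne
    exact (h2 _ (hxy a ha) _ (hxy a' ha') (fun hh => hne (congrArg Prod.fst hh))).2.2.1 h
  have hxny : ∀ a ∈ C, ∀ a' ∈ C, x a ≠ y a' := by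
    intro a ha a' ha' h
    by_cases hne : a = a'
    · subst hne
      exact (h1 _ (hxy a ha)).2.2.2 h
    · exact (h2 _ (hxy a ha) _ (hxy a' ha') (fun hh => hne (congrArg Prod.fst hh))).2.2.2 h
  have hC : ∀ a ∈ C, ¬ B a ∧ H.Adj a (x a) ∧ H.Adj a (y a) := by
    intro a ha
    have := h1 _ (hxy a ha)
    exact ⟨this.1, this.2.1, this.2.2.1⟩
  let L : Set V := {b | ∃ a ∈ C, H.Adj a b}
  have hctr : ∀ b, ∃ a, b ∈ L → a ∈ C ∧ H.Adj a b ∧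
      ∀ a' ∈ C, (b = x a' ∨ b = y a') → a = a' := by
    intro b
    by_cases hb : ∃ a ∈ C, (b = x a ∨ b = y a)
    · obtain ⟨a, ha, h⟩ := hb
      refine ⟨a, fun _ => ⟨ha, ?_, ?_⟩⟩
      · rcases h with rfl | rfl
        · exact (hC a ha).2.1
        · exact (hC a ha).2.2
      · intro a' ha' h'
        rcases h with h | h <;> rcases h' with h' | h'
        · exact hxx a ha a' ha' (h.symm.trans h')
        · exact absurd (h.symm.trans h') (hxny a ha a' ha')
        · exact absurd (h'.symm.trans h) (hxny a' ha' a ha)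
        · exact hyy a ha a' ha' (h.symm.trans h')
    · by_cases hL : b ∈ L
      · obtain ⟨a, ha, hab⟩ := hL
        exact ⟨a, fun _ => ⟨ha, hab, fun a' ha' h' => absurd ⟨a', ha', h'⟩ hb⟩⟩
      · exact ⟨b, fun h => absurd h hL⟩
  choose ctr hctr using hctr
  let col : V → ℕ := fun b => if b = x (ctr b) then 1 else if b = y (ctr b) then 0 else 2
  refine ⟨C, L, ctr, col, x, y, ?_, ?_, ?_, ?_, ?_⟩
  · intro b hb
    obtain ⟨h3, h4, h5⟩ := hctr b hb
    refine ⟨?_, h4, h3, ?_⟩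
    · have := hB _ _ h4
      have := (hC _ h3).1
      tauto
    · simp only [col]
      split_ifs <;> omega
  · intro a ha
    have hL : x a ∈ L := ⟨a, ha, (hC a ha).2.1⟩
    have hc : ctr (x a) = a := (hctr _ hL).2.2 a ha (Or.inl rfl)
    refine ⟨(hC a ha).1, hL, hc, ?_, ?_⟩
    · simp [col, hc]
    · intro b hb hba hb1
      simp only [col, hba] at hb1
      split_ifs at hb1 with h
      · exact h
      all_goals omega
  · intro a ha
    have hL : y a ∈ L := ⟨a, ha, (hC a ha).2.2⟩
    have hc : ctr (y a) = a := (hctr _ hL).2.2 a ha (Or.inr rfl)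
    refine ⟨hL, hc, ?_, ?_⟩
    · simp [col, hc, (hxny a ha a ha).symm]
    · intro b hb hba hb1
      simp only [col, hba] at hb1
      split_ifs at hb1 with h h'
      exact h'
  · intro b hb a ha hab
    exact hb ⟨a, ha, hab⟩
  · intro a ha hBa b b' hb hb' hab hab'
    by_contra hne
    have hcov : ∀ t ∈ T, t.2.1 ∈ L ∧ t.2.2 ∈ L ∧ t.1 ∈ C := by
      intro t ht
      have hc : t.1 ∈ C := ⟨t.2.1, t.2.2, ht⟩
      exact ⟨⟨t.1, hc, (h1 t ht).2.1⟩, ⟨t.1, hc, (h1 t ht).2.2.1⟩, hc⟩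
    have hins : CherryOK H B (insert (a, b, b') T) := by
      constructor
      · rintro t (rfl | ht)
        · exact ⟨hBa, hab, hab', hne⟩
        · exact h1 t ht
      · rintro t (rfl | ht) t' (rfl | ht') htt
        · exact absurd rfl htt
        · obtain ⟨c1, c2, c3⟩ := hcov t' ht'
          exact ⟨fun h => ha (Eq.mpr (congrArg (· ∈ _) h) c3), fun h => hb (Eq.mpr (congrArg (· ∈ _) h) c1), fun h => hb' (Eq.mpr (congrArg (· ∈ _) h) c2),
            fun h => hb (Eq.mpr (congrArg (· ∈ _) h) c2)⟩
        · obtain ⟨c1, c2, c3⟩ := hcov t ht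
          exact ⟨fun h => ha (Eq.mp (congrArg (· ∈ _) h) c3), fun h => hb (Eq.mp (congrArg (· ∈ _) h) c1), fun h => hb' (Eq.mp (congrArg (· ∈ _) h) c2),
            fun h => hb' (Eq.mp (congrArg (· ∈ _) h) c1)⟩
        · exact h2 t ht t' ht' htt
    have := hmax hins (Set.subset_insert _ _) (Set.mem_insert _ _)
    exact ha ⟨b, b', this⟩

/-- satisfied with respect to a colour relation -/
def SatR {V : Type*} (K : V → V → ℕ → Prop) (a b : V) : Prop :=
  ∃ i, (∃ b'', b'' ≠ b ∧ K a b'' i ∧ (∀ b1, K a b1 i → b1 = b'') ∧ ∀ a1, ¬ K a1 b i) ∨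
    (∃ a'', a'' ≠ a ∧ K a'' b i ∧ (∀ a1, K a1 b i → a1 = a'') ∧ ∀ b1, ¬ K a b1 i)

lemma exists_rel {V : Type*} (H : SimpleGraph V) (B : V → Prop)
    (hB : ∀ u v, H.Adj u v → (B u ↔ ¬ B v)) :
    ∃ (K : V → V → ℕ → Prop) (M : V → V → Prop),
      (∀ a b i, K a b i → ¬ B a ∧ B b ∧ H.Adj a b ∧ i < 3) ∧
      (∀ a b i j, K a b i → K a b j → i = j) ∧
      (∀ a b, M a b → ¬ B a ∧ B b ∧ H.Adj a b ∧ (∀ i, ¬ K a b i) ∧ ∀ a', H.Adj a' b → a' = a) ∧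
      (∀ a b b', M a b → M a b' → b = b') ∧
      (∀ a b, ¬ B a → B b → H.Adj a b → ¬ M a b → SatR K a b) := by
  classical
  obtain ⟨C, L, ctr, col, x, y, h1, h2, h3, h4, h5⟩ := exists_stars H B hB
  let T1 : V → Prop := fun s => s ∉ L ∧ B s ∧
    ∃ n w, H.Adj n s ∧ H.Adj n w ∧ w ∈ L ∧ col w ≠ 1
  let T3 : V → Prop := fun s => s ∉ L ∧ B s ∧ ¬ T1 s ∧ ∃ n m, n ≠ m ∧ H.Adj n s ∧ H.Adj m s
  have hT1 : ∀ s, ∃ n w, T1 s → H.Adj n s ∧ H.Adj n w ∧ w ∈ L ∧ col w ≠ 1 := by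
    intro s
    by_cases h : T1 s
    · obtain ⟨_, _, n, w, hh⟩ := h
      exact ⟨n, w, fun _ => hh⟩
    · exact ⟨s, s, fun hh => absurd hh h⟩
  have hT3 : ∀ s, ∃ n m, T3 s → n ≠ m ∧ H.Adj n s ∧ H.Adj m s := by
    intro s
    by_cases h : T3 s
    · obtain ⟨_, _, _, n, w, hh⟩ := h
      exact ⟨n, w, fun _ => hh⟩
    · exact ⟨s, s, fun hh => absurd hh h⟩
  choose n w hnw using hT1
  choose p q hpq using hT3
  have hnB : ∀ a s, B s → H.Adj a s → ¬ B a := fun a s hs has => by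
    have := hB _ _ has
    tauto
  have hNC : ∀ a s, s ∉ L → H.Adj a s → a ∉ C := fun a s hs has hC => h4 s hs a hC has
  have huniq : ∀ a s s', s ∉ L → s' ∉ L → B s → H.Adj a s → H.Adj a s' → s = s' :=
    fun a s s' hs hs' hBs ha ha' => h5 a (hNC a s hs ha) (hnB a s hBs ha) s s' hs hs' ha ha'
  have hT13 : ∀ s, T1 s → ¬ T3 s := fun s h h' => h'.2.2.1 h
  have hT1L : ∀ s, T1 s → s ∉ L ∧ B s := fun s h => ⟨h.1, h.2.1⟩
  have hT3L : ∀ s, T3 s → s ∉ L ∧ B s := fun s h => ⟨h.1, h.2.1⟩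
  have hnT1 : ∀ s a b, s ∉ L → B s → ¬ T1 s → H.Adj a s → H.Adj a b → b ∈ L → col b = 1 := by
    intro s a b hs hBs hT ha hab hb
    by_contra hc
    exact hT ⟨hs, hBs, a, b, ha, hab, hb, hc⟩
  have hnT3 : ∀ s a a', s ∉ L → B s → ¬ T1 s → ¬ T3 s → H.Adj a s → H.Adj a' s → a' = a := by
    intro s a a' hs hBs hT hT' ha ha'
    by_contra hc
    exact hT' ⟨hs, hBs, hT, a', a, hc, ha', ha⟩
  clear_value T1 T3
  let K : V → V → ℕ → Prop := fun a b i =>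
    (b ∈ L ∧ a = ctr b ∧ i = col b) ∨ (T1 b ∧ a = n b ∧ i = 1) ∨
    (∃ s, T1 s ∧ a = n s ∧ b = w s ∧ i = 2 - col (w s)) ∨
    (T3 b ∧ a = p b ∧ i = 2) ∨ (T3 b ∧ a = q b ∧ i = 0)
  have hw : ∀ s, T1 s → w s ∈ L ∧ (col (w s) = 0 ∨ col (w s) = 2) ∧ n s ∉ C := by
    intro s hs
    have a1 := hnw s hs
    have a2 := (h1 _ a1.2.2.1).2.2.2
    refine ⟨a1.2.2.1, ?_, hNC _ _ (hT1L s hs).1 a1.1⟩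
    have := a1.2.2.2
    omega
  -- colours at each kind of vertex
  have kC : ∀ a b i, a ∈ C → K a b i → b ∈ L ∧ ctr b = a ∧ i = col b := by
    rintro a b i ha (h | h | ⟨s, h⟩ | h | h)
    · exact ⟨h.1, h.2.1.symm, h.2.2⟩
    · exact absurd ha (h.2.1 ▸ (hw b h.1).2.2)
    · exact absurd ha (h.2.1 ▸ (hw s h.1).2.2)
    · exact absurd ha (h.2.1 ▸ hNC _ _ (hT3L b h.1).1 (hpq b h.1).2.1)
    · exact absurd ha (h.2.1 ▸ hNC _ _ (hT3L b h.1).1 (hpq b h.1).2.2)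
  have kA : ∀ a b i, a ∉ C → K a b i → ∃ s, s ∉ L ∧ B s ∧ H.Adj a s ∧
      ((T1 s ∧ a = n s ∧ ((b = s ∧ i = 1) ∨ (b = w s ∧ i = 2 - col (w s)))) ∨
       (T3 s ∧ b = s ∧ ((a = p s ∧ i = 2) ∨ (a = q s ∧ i = 0)))) := by
    rintro a b i ha (h | h | ⟨s, h⟩ | h | h)
    · exact absurd (h1 b h.1).2.2.1 (h.2.1 ▸ ha)
    · exact ⟨b, (hT1L b h.1).1, (hT1L b h.1).2, h.2.1 ▸ (hnw b h.1).1,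
        Or.inl ⟨h.1, h.2.1, Or.inl ⟨rfl, h.2.2⟩⟩⟩
    · exact ⟨s, (hT1L s h.1).1, (hT1L s h.1).2, h.2.1 ▸ (hnw s h.1).1,
        Or.inl ⟨h.1, h.2.1, Or.inr h.2.2⟩⟩
    · exact ⟨b, (hT3L b h.1).1, (hT3L b h.1).2, h.2.1 ▸ (hpq b h.1).2.1,
        Or.inr ⟨h.1, rfl, Or.inl h.2⟩⟩
    · exact ⟨b, (hT3L b h.1).1, (hT3L b h.1).2, h.2.1 ▸ (hpq b h.1).2.2,
        Or.inr ⟨h.1, rfl, Or.inr h.2⟩⟩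
  -- at a neighbour of a given single
  have kN : ∀ a s b i, s ∉ L → B s → H.Adj a s → K a b i →
      ((T1 s ∧ a = n s ∧ ((b = s ∧ i = 1) ∨ (b = w s ∧ i = 2 - col (w s)))) ∨
       (T3 s ∧ b = s ∧ ((a = p s ∧ i = 2) ∨ (a = q s ∧ i = 0)))) := by
    intro a s b i hs hBs has hK
    obtain ⟨s', hs', hBs', has', h⟩ := kA a b i (hNC a s hs has) hK
    obtain rfl := huniq a s s' hs hs' hBs has has'
    exact h
  have kL : ∀ a b i, b ∈ L → K a b i → (a = ctr b ∧ i = col b) ∨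
      ((col b = 0 ∨ col b = 2) ∧ i = 2 - col b ∧ a ∉ C) := by
    rintro a b i hb (h | h | ⟨s, h⟩ | h | h)
    · exact Or.inl h.2
    · exact absurd hb (hT1L b h.1).1
    · obtain ⟨hs, rfl, rfl, rfl⟩ := h
      exact Or.inr ⟨(hw s hs).2.1, rfl, (hw s hs).2.2⟩
    · exact absurd hb (hT3L b h.1).1
    · exact absurd hb (hT3L b h.1).1
  have kS : ∀ a s i, s ∉ L → K a s i → (T1 s ∧ a = n s ∧ i = 1) ∨
      (T3 s ∧ ((a = p s ∧ i = 2) ∨ (a = q s ∧ i = 0))) := by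
    rintro a s i hs (h | h | ⟨s', h⟩ | h | h)
    · exact absurd h.1 hs
    · exact Or.inl h
    · exact absurd (hw s' h.1).1 (h.2.2.1 ▸ hs)
    · exact Or.inr ⟨h.1, Or.inl h.2⟩
    · exact Or.inr ⟨h.1, Or.inr h.2⟩
  have m1 : ∀ b, b ∈ L → K (ctr b) b (col b) := fun b hb => Or.inl ⟨hb, rfl, rfl⟩
  have m2 : ∀ b, T1 b → K (n b) b 1 := fun b hb => Or.inr (Or.inl ⟨hb, rfl, rfl⟩)
  have m3 : ∀ b, T1 b → K (n b) (w b) (2 - col (w b)) :=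
    fun b hb => Or.inr (Or.inr (Or.inl ⟨b, hb, rfl, rfl, rfl⟩))
  have m4 : ∀ b, T3 b → K (p b) b 2 := fun b hb => Or.inr (Or.inr (Or.inr (Or.inl ⟨hb, rfl, rfl⟩)))
  have m5 : ∀ b, T3 b → K (q b) b 0 := fun b hb => Or.inr (Or.inr (Or.inr (Or.inr ⟨hb, rfl, rfl⟩)))
  have hK0 : ∀ a b i, K a b i → B b ∧ H.Adj a b ∧ i < 3 := by
    rintro a b i (h | h | ⟨s, h⟩ | h | h)
    · obtain ⟨hb, rfl, rfl⟩ := h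
      exact ⟨(h1 b hb).1, (h1 b hb).2.1, (h1 b hb).2.2.2⟩
    · obtain ⟨hb, rfl, rfl⟩ := h
      exact ⟨(hT1L b hb).2, (hnw b hb).1, by omega⟩
    · obtain ⟨hb, rfl, rfl, rfl⟩ := h
      exact ⟨(h1 _ (hw s hb).1).1, (hnw s hb).2.1, by omega⟩
    · obtain ⟨hb, rfl, rfl⟩ := h
      exact ⟨(hT3L b hb).2, (hpq b hb).2.1, by omega⟩
    · obtain ⟨hb, rfl, rfl⟩ := h
      exact ⟨(hT3L b hb).2, (hpq b hb).2.2, by omega⟩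
  clear_value K
  refine ⟨K, fun a b => b ∉ L ∧ B b ∧ H.Adj a b ∧ ¬ T1 b ∧ ¬ T3 b, ?_, ?_, ?_, ?_, ?_⟩
  · intro a b i hK
    obtain ⟨c1, c2, c3⟩ := hK0 a b i hK
    exact ⟨hnB _ _ c1 c2, c1, c2, c3⟩
  · intro a b i j hi hj
    by_cases hb : b ∈ L
    · have hc := (h1 b hb).2.2.1
      rcases kL a b i hb hi with ⟨e1, e2⟩ | ⟨e1, e2, e3⟩ <;>
        rcases kL a b j hb hj with ⟨f1, f2⟩ | ⟨f1, f2, f3⟩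
      · omega
      · exact absurd (e1 ▸ hc) f3
      · exact absurd (f1 ▸ hc) e3
      · omega
    · rcases kS a b i hb hi with ⟨e1, e2, e3⟩ | ⟨e1, e2⟩ <;>
        rcases kS a b j hb hj with ⟨f1, f2, f3⟩ | ⟨f1, f2⟩
      · omega
      · exact absurd f1 (hT13 b e1)
      · exact absurd e1 (hT13 b f1)
      · have := (hpq b e1).1
        rcases e2 with ⟨g1, g2⟩ | ⟨g1, g2⟩ <;> rcases f2 with ⟨k1, k2⟩ | ⟨k1, k2⟩
        · omega
        · exact absurd (g1.symm.trans k1) this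
        · exact absurd (k1.symm.trans g1) this
        · omega
  · rintro a b ⟨hb, hBb, hab, hn1, hn3⟩
    refine ⟨hnB _ _ hBb hab, hBb, hab, ?_, ?_⟩
    · intro i hi
      rcases kS a b i hb hi with h | h
      · exact hn1 h.1
      · exact hn3 h.1
    · intro a' ha'
      exact hnT3 b a a' hb hBb hn1 hn3 hab ha'
  · rintro a b b' ⟨hb, hBb, hab, _⟩ ⟨hb', hBb', hab', _⟩
    exact huniq a b b' hb hb' hBb hab hab'
  · intro a b hBa hBb hab hM
    by_cases haC : a ∈ C
    · have hbL : b ∈ L := by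
        by_contra hbL
        exact h4 b hbL a haC hab
      obtain ⟨_, x1, x2, x3, x4⟩ := h2 a haC
      obtain ⟨y1, y2, y3, y4⟩ := h3 a haC
      by_cases hcb : col b = 1
      · refine ⟨0, Or.inl ⟨y a, ?_, ?_, ?_, ?_⟩⟩
        · rintro rfl
          omega
        · have := m1 _ y1
          rwa [y2, y3] at this
        · intro b1 hb1
          obtain ⟨e1, e2, e3⟩ := kC a b1 0 haC hb1
          exact y4 b1 e1 e2 e3.symm
        · intro a1 ha1
          have := kL a1 b 0 hbL ha1
          omega
      · refine ⟨1, Or.inl ⟨x a, ?_, ?_, ?_, ?_⟩⟩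
        · rintro rfl
          omega
        · have := m1 _ x1
          rwa [x2, x3] at this
        · intro b1 hb1
          obtain ⟨e1, e2, e3⟩ := kC a b1 1 haC hb1
          exact x4 b1 e1 e2 e3.symm
        · intro a1 ha1
          have := kL a1 b 1 hbL ha1
          omega
    · by_cases hbL : b ∈ L
      · have hctr : ctr b ≠ a := by
          rintro rfl
          exact haC (h1 b hbL).2.2.1
        have hub : ∀ a1, K a1 b (col b) → a1 = ctr b := by
          intro a1 ha1
          rcases kL a1 b _ hbL ha1 with h | h
          · exact h.1
          · omega
        by_cases hcol : ∃ b1 i, K a b1 i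
        · obtain ⟨b1, i, hK⟩ := hcol
          obtain ⟨s, hs, hBs, has, hh⟩ := kA a b1 i haC hK
          by_cases hs1 : T1 s
          · have han : a = n s := by
              rcases hh with h | h
              · exact h.2.1
              · exact absurd h.1 (hT13 s hs1)
            subst han
            have hws := hw s hs1
            by_cases hcb : col b = 1
            · refine ⟨_, Or.inl ⟨w s, ?_, m3 s hs1, ?_, ?_⟩⟩
              · rintro rfl
                omega
              · intro b2 hb2
                rcases kN _ s b2 _ hs hBs has hb2 with ⟨_, _, h | h⟩ | h
                · omega
                · exact h.1
                · exact absurd h.1 (hT13 s hs1)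
              · intro a1 ha1
                have := kL a1 b _ hbL ha1
                omega
            · refine ⟨1, Or.inl ⟨s, ?_, m2 s hs1, ?_, ?_⟩⟩
              · rintro rfl
                exact hs hbL
              · intro b2 hb2
                rcases kN _ s b2 _ hs hBs has hb2 with ⟨_, _, h | h⟩ | h
                · exact h.1
                · omega
                · exact absurd h.1 (hT13 s hs1)
              · intro a1 ha1
                have := kL a1 b _ hbL ha1
                omega
          · have hcb : col b = 1 := hnT1 s a b hs hBs hs1 has hab hbL
            refine ⟨col b, Or.inr ⟨ctr b, hctr, m1 b hbL, hub, ?_⟩⟩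
            intro b2 hb2
            rcases kN _ s b2 _ hs hBs has hb2 with h | ⟨_, _, h⟩
            · exact absurd h.1 hs1
            · omega
        · refine ⟨col b, Or.inr ⟨ctr b, hctr, m1 b hbL, hub, ?_⟩⟩
          intro b2 hb2
          exact hcol ⟨b2, _, hb2⟩
      · by_cases hs1 : T1 b
        · have hws := hw b hs1
          by_cases han : a = n b
          · subst han
            refine ⟨_, Or.inl ⟨w b, ?_, m3 b hs1, ?_, ?_⟩⟩
            · intro h
              exact hbL (h ▸ hws.1)
            · intro b2 hb2
              rcases kN _ b b2 _ hbL hBb hab hb2 with ⟨_, _, h | h⟩ | h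
              · omega
              · exact h.1
              · exact absurd h.1 (hT13 b hs1)
            · intro a1 ha1
              rcases kS a1 b _ hbL ha1 with h | h
              · omega
              · exact absurd h.1 (hT13 b hs1)
          · refine ⟨1, Or.inr ⟨n b, Ne.symm han, m2 b hs1, ?_, ?_⟩⟩
            · intro a1 ha1
              rcases kS a1 b _ hbL ha1 with h | h
              · exact h.2.1
              · exact absurd h.1 (hT13 b hs1)
            · intro b2 hb2
              rcases kN _ b b2 _ hbL hBb hab hb2 with h | h
              · exact han h.2.1
              · exact absurd h.1 (hT13 b hs1)
        · by_cases hs3 : T3 b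
          · have hne := (hpq b hs3).1
            by_cases hap : a = p b
            · subst hap
              refine ⟨0, Or.inr ⟨q b, hne.symm, m5 b hs3, ?_, ?_⟩⟩
              · intro a1 ha1
                rcases kS a1 b _ hbL ha1 with h | ⟨_, h | h⟩
                · exact absurd h.1 hs1
                · omega
                · exact h.1
              · intro b2 hb2
                rcases kN _ b b2 _ hbL hBb hab hb2 with h | ⟨_, _, h | h⟩
                · exact absurd h.1 hs1
                · omega
                · exact hne h.1
            · refine ⟨2, Or.inr ⟨p b, Ne.symm hap, m4 b hs3, ?_, ?_⟩⟩
              · intro a1 ha1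
                rcases kS a1 b _ hbL ha1 with h | ⟨_, h | h⟩
                · exact absurd h.1 hs1
                · exact h.1
                · omega
              · intro b2 hb2
                rcases kN _ b b2 _ hbL hBb hab hb2 with h | ⟨_, _, h | h⟩
                · exact absurd h.1 hs1
                · exact hap h.1
                · omega
          · exact absurd ⟨hbL, hBb, hab, hs1, hs3⟩ hM

lemma bipartite_colouring {V : Type*} (H : SimpleGraph V) (B : V → Prop)
    (hB : ∀ u v, H.Adj u v → (B u ↔ ¬ B v)) :
    ∃ c : Sym2 V → Option ℕ, PartialColouring H c 3 ∧
      ∃ M : Set (Sym2 V), M ⊆ H.edgeSet ∧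
        (∀ e ∈ M, ∀ f ∈ M, e ≠ f → ∀ v : V, ¬(v ∈ e ∧ v ∈ f)) ∧
        (∀ e ∈ M, c e = none) ∧
        (∀ e ∈ H.edgeSet, e ∉ M → SatisfiedP H c e) ∧
        (∀ e ∈ M, ∃ a b, e = s(a, b) ∧ B b ∧ ∀ a', H.Adj a' b → a' = a) := by
  classical
  obtain ⟨K, M, k1, k2, k3, k4, k5⟩ := exists_rel H B hB
  let P : Sym2 V → ℕ → Prop := fun e i => ∃ a b, e = s(a, b) ∧ K a b i
  let c : Sym2 V → Option ℕ := fun e => if h : ∃ i, P e i then some h.choose else none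
  have key : ∀ a b a' b' : V, ¬ B a → B b → ¬ B a' → B b' → s(a, b) = s(a', b') →
      a = a' ∧ b = b' := by
    intro a b a' b' h1 h2 h3 h4 h
    rw [Sym2.eq_iff] at h
    rcases h with h | ⟨rfl, rfl⟩
    · exact h
    · exact absurd h4 h1
  have hP : ∀ e i j, P e i → P e j → i = j := by
    rintro e i j ⟨a, b, rfl, h⟩ ⟨a', b', he, h'⟩
    obtain ⟨rfl, rfl⟩ := key a b a' b' (k1 _ _ _ h).1 (k1 _ _ _ h).2.1 (k1 _ _ _ h').1
      (k1 _ _ _ h').2.1 he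
    exact k2 _ _ _ _ h h'
  have hc : ∀ e i, c e = some i ↔ P e i := by
    intro e i
    by_cases h : ∃ i, P e i
    · simp only [c, dif_pos h, Option.some.injEq]
      constructor
      · rintro rfl
        exact h.choose_spec
      · intro hi
        exact hP e _ _ h.choose_spec hi
    · simp only [c, dif_neg h]
      constructor
      · intro h'
        cases h'
      · intro hi
        exact absurd ⟨i, hi⟩ h
  have hPab : ∀ a b i, ¬ B a → B b → P s(a, b) i → K a b i := by
    rintro a b i ha hb ⟨a', b', he, h⟩
    obtain ⟨rfl, rfl⟩ := key a b a' b' ha hb (k1 _ _ _ h).1 (k1 _ _ _ h).2.1 he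
    exact h
  have horient : ∀ e ∈ H.edgeSet, ∃ a b, e = s(a, b) ∧ ¬ B a ∧ B b ∧ H.Adj a b := by
    intro e he
    induction e using Sym2.ind with
    | _ u v =>
      have huv : H.Adj u v := he
      have := hB u v huv
      by_cases hu : B u
      · exact ⟨v, u, Sym2.eq_swap, this.1 hu, hu, huv.symm⟩
      · exact ⟨u, v, rfl, hu, by tauto, huv⟩
  refine ⟨c, ?_, {e | ∃ a b, e = s(a, b) ∧ M a b}, ?_, ?_, ?_, ?_, ?_⟩
  · intro e i h
    obtain ⟨a, b, rfl, hK⟩ := (hc e i).1 h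
    replace h := hK
    exact ⟨(k1 _ _ _ h).2.2.1, (k1 _ _ _ h).2.2.2⟩
  · rintro e ⟨a, b, rfl, h⟩
    exact (k3 _ _ h).2.2.1
  · rintro e ⟨a, b, rfl, h⟩ f ⟨a', b', rfl, h'⟩ hne v ⟨hv, hv'⟩
    have g := k3 _ _ h
    have g' := k3 _ _ h'
    rw [Sym2.mem_iff] at hv hv'
    rcases hv with rfl | rfl <;> rcases hv' with rfl | rfl
    · exact hne (by rw [k4 _ _ _ h h'])
    · exact g.1 g'.2.1
    · exact g'.1 g.2.1
    · exact hne (by rw [g.2.2.2.2 _ g'.2.2.1])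
  · rintro e ⟨a, b, rfl, h⟩
    have g := k3 _ _ h
    rcases hce : c s(a, b) with _ | i
    · rfl
    · exact absurd (hPab a b i g.1 g.2.1 ((hc _ _).1 hce)) (g.2.2.2.1 i)
  · intro e he hM
    obtain ⟨a, b, rfl, ha, hb, hab⟩ := horient e he
    have hM' : ¬ M a b := fun h => hM ⟨a, b, rfl, h⟩
    obtain ⟨i, h⟩ := k5 a b ha hb hab hM'
    have hnbr : ∀ f, f ∈ ECN H s(a, b) → c f = some i →
        (∃ b1, f = s(a, b1) ∧ K a b1 i) ∨ (∃ a1, f = s(a1, b) ∧ K a1 b i) := by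
      rintro f ⟨hf, v, hvf, hv⟩ hcf
      obtain ⟨a1, b1, rfl, hK⟩ := (hc _ _).1 hcf
      have g := k1 _ _ _ hK
      rw [Sym2.mem_iff] at hvf hv
      rcases hvf with rfl | rfl <;> rcases hv with rfl | rfl
      · exact Or.inl ⟨b1, rfl, hK⟩
      · exact absurd hb g.1
      · exact absurd g.2.1 ha
      · exact Or.inr ⟨a1, rfl, hK⟩
    rcases h with ⟨b2, hne, hK, hu, hno⟩ | ⟨a2, hne, hK, hu, hno⟩
    · have g := k1 _ _ _ hK
      refine ⟨s(a, b2), ⟨⟨g.2.2.1, a, by simp, by simp⟩, ?_⟩, i, (hc _ _).2 ⟨a, b2, rfl, hK⟩, ?_⟩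
      · intro h
        exact hne (key a b2 a b ha g.2.1 ha hb h).2
      · intro f hf hcf
        rcases hnbr f hf hcf with ⟨b1, rfl, h⟩ | ⟨a1, rfl, h⟩
        · rw [hu b1 h]
        · exact absurd h (hno a1)
    · have g := k1 _ _ _ hK
      refine ⟨s(a2, b), ⟨⟨g.2.2.1, b, by simp, by simp⟩, ?_⟩, i, (hc _ _).2 ⟨a2, b, rfl, hK⟩, ?_⟩
      · intro h
        exact hne (key a2 b a b g.1 hb ha hb h).1
      · intro f hf hcf
        rcases hnbr f hf hcf with ⟨b1, rfl, h⟩ | ⟨a1, rfl, h⟩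
        · exact absurd h (hno b1)
        · rw [hu a1 h]
  · rintro e ⟨a, b, rfl, h⟩
    have g := k3 _ _ h
    exact ⟨a, b, rfl, g.2.1, g.2.2.2.2⟩

/-- The edges whose end colours first agree after removing `i + 1` low bits. -/
def levelGraph {V : Type*} (G : SimpleGraph V) (f : V → ℕ) (i : ℕ) : SimpleGraph V where
  Adj u v := G.Adj u v ∧ f u / 2 ^ (i + 1) = f v / 2 ^ (i + 1) ∧ f u / 2 ^ i ≠ f v / 2 ^ i
  symm := ⟨fun _ _ h => ⟨h.1.symm, h.2.1.symm, h.2.2.symm⟩⟩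
  loopless := ⟨fun _ h => h.2.2 rfl⟩

lemma levelGraph_disj_aux {V : Type*} (G : SimpleGraph V) (f : V → ℕ) (i j : ℕ) (hij : i < j)
    (u v : V) (h : (levelGraph G f i).Adj u v) (h' : (levelGraph G f j).Adj u v) : False := by
  apply h'.2.2
  obtain ⟨d, rfl⟩ := Nat.exists_eq_add_of_lt hij
  have e : 2 ^ (i + d + 1) = 2 ^ (i + 1) * 2 ^ d := by ring
  rw [e, ← Nat.div_div_eq_div_mul, ← Nat.div_div_eq_div_mul, h.2.1]

lemma levelGraph_disj {V : Type*} (G : SimpleGraph V) (f : V → ℕ) (i j : ℕ)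
    (e : Sym2 V) (h : e ∈ (levelGraph G f i).edgeSet) (h' : e ∈ (levelGraph G f j).edgeSet) :
    i = j := by
  induction e using Sym2.ind with
  | _ u v =>
    rcases lt_trichotomy i j with hij | hij | hij
    · exact (levelGraph_disj_aux G f i j hij u v h h').elim
    · exact hij
    · exact (levelGraph_disj_aux G f j i hij u v h' h).elim

lemma levelGraph_exists {V : Type*} (G : SimpleGraph V) (f : V → ℕ) (k : ℕ)
    (hf : ∀ v, f v < 2 ^ k) (hp : ∀ u v, G.Adj u v → f u ≠ f v)
    (e : Sym2 V) (h : e ∈ G.edgeSet) : ∃ i < k, e ∈ (levelGraph G f i).edgeSet := by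
  classical
  induction e using Sym2.ind with
  | _ u v =>
    have huv : G.Adj u v := h
    have hex : ∃ i, f u / 2 ^ i = f v / 2 ^ i := ⟨k, by
      rw [Nat.div_eq_of_lt (hf u), Nat.div_eq_of_lt (hf v)]⟩
    have hle : Nat.find hex ≤ k := Nat.find_min' hex (by
      rw [Nat.div_eq_of_lt (hf u), Nat.div_eq_of_lt (hf v)])
    have hs := Nat.find_spec hex
    have hpos : Nat.find hex ≠ 0 := by
      intro h0
      rw [h0] at hs
      exact hp u v huv (by simpa using hs)
    obtain ⟨i, hi⟩ := Nat.exists_eq_succ_of_ne_zero hpos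
    refine ⟨i, by omega, huv, ?_, ?_⟩
    · rw [hi] at hs
      exact hs
    · exact Nat.find_min hex (m := i) (by omega)

theorem stmt7 {V : Type*} (G : SimpleGraph V) (α : ℕ) (hα : 1 ≤ α)
    (hchrom : G.Colorable α) :
    ∃ c : Sym2 V → Option ℕ, PartialColouring G c (3 * Nat.clog 2 α) ∧
      ∃ M : Set (Sym2 V), M ⊆ G.edgeSet ∧
        (∀ e ∈ M, ∀ f ∈ M, e ≠ f → ∀ v : V, ¬(v ∈ e ∧ v ∈ f)) ∧
        (∀ e ∈ M, c e = none) ∧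
        ∀ e ∈ G.edgeSet, e ∉ M → SatisfiedP G c e := by
  classical
  obtain ⟨f, hf, hp, hg⟩ := exists_grundy G α hchrom
  set k := Nat.clog 2 α with hk
  have hf' : ∀ v, f v < 2 ^ k := fun v =>
    lt_of_lt_of_le (hf v) (Nat.le_pow_clog (by norm_num) α)
  have hbip : ∀ i u v, (levelGraph G f i).Adj u v →
      ((f u / 2 ^ i) % 2 = 1 ↔ ¬ (f v / 2 ^ i) % 2 = 1) := by
    intro i u v h
    obtain ⟨_, h1, h2⟩ := h
    rw [pow_succ, ← Nat.div_div_eq_div_mul, ← Nat.div_div_eq_div_mul] at h1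
    omega
  have hlev := fun i => bipartite_colouring (levelGraph G f i) (fun v => (f v / 2 ^ i) % 2 = 1)
    (hbip i)
  choose c hc M hM1 hM2 hM3 hM4 hM5 using hlev
  have hMe : ∀ i, i ≠ 0 → ∀ e, e ∉ M i := by
    intro i hi e he
    obtain ⟨a, b, rfl, hb, hu⟩ := hM5 i e he
    obtain ⟨j, rfl⟩ := Nat.exists_eq_succ_of_ne_zero hi
    have hpow : 2 ≤ 2 ^ (j + 1) := by
      rw [pow_succ]
      have := Nat.one_le_two_pow (n := j)
      omega
    set P := 2 ^ (j + 1) with hP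
    set q := f b / P with hq
    change q % 2 = 1 at hb
    clear_value q P
    have hq1 : (q - 1 + 1) = q := by omega
    have hmul : q * P ≤ f b := hq ▸ Nat.div_mul_le_self _ _
    have hqe : q * P = (q - 1) * P + P := by
      conv_lhs => rw [← hq1]
      ring
    have hadj : ∀ r, r < P → ∃ u, (levelGraph G f (j + 1)).Adj u b ∧ f u = (q - 1) * P + r := by
      intro r hr
      obtain ⟨u, hu1, hu2⟩ := hg b ((q - 1) * P + r) (by omega)
      have hdiv : f u / P = q - 1 := by
        rw [hu2, Nat.mul_comm, Nat.mul_add_div (by omega), Nat.div_eq_of_lt hr, Nat.add_zero]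
      refine ⟨u, ⟨hu1.symm, ?_, ?_⟩, hu2⟩
      · rw [pow_succ 2 (j + 1), ← Nat.div_div_eq_div_mul, ← Nat.div_div_eq_div_mul, ← hP, hdiv, ← hq]
        omega
      · rw [← hP, hdiv, ← hq]
        omega
    obtain ⟨u, h1, h2⟩ := hadj 0 (by omega)
    obtain ⟨u', h1', h2'⟩ := hadj 1 (by omega)
    have e1 := hu u h1
    have e2 := hu u' h1'
    rw [e1] at h2
    rw [e2] at h2'
    omega
  let Q : Sym2 V → Prop := fun e => ∃ i < k, e ∈ (levelGraph G f i).edgeSet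
  let C : Sym2 V → Option ℕ := fun e =>
    if h : Q e then (c h.choose e).map (fun x => 3 * h.choose + x) else none
  have hle : ∀ i, ∀ e ∈ (levelGraph G f i).edgeSet, e ∈ G.edgeSet := by
    intro i e he
    induction e using Sym2.ind with
    | _ u v => exact he.1
  have hC : ∀ i < k, ∀ e ∈ (levelGraph G f i).edgeSet,
      C e = (c i e).map (fun x => 3 * i + x) := by
    intro i hi e he
    have h : Q e := ⟨i, hi, he⟩
    have : h.choose = i := levelGraph_disj G f _ _ e h.choose_spec.2 he
    simp only [C, dif_pos h, this]
  have hC' : ∀ e n, C e = some n → ∃ i < k, e ∈ (levelGraph G f i).edgeSet ∧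
      ∃ x, x < 3 ∧ c i e = some x ∧ n = 3 * i + x := by
    intro e n h
    by_cases hQ : Q e
    · obtain ⟨i, hi, he⟩ := hQ
      rw [hC i hi e he, Option.map_eq_some_iff] at h
      obtain ⟨x, hx, rfl⟩ := h
      exact ⟨i, hi, he, x, (hc i e x hx).2, hx, rfl⟩
    · simp only [C, dif_neg hQ] at h
      cases h
  refine ⟨C, ?_, M 0, fun e he => hle 0 e (hM1 0 he), hM2 0, ?_, ?_⟩
  · intro e n h
    obtain ⟨i, hi, he, x, hx, _, rfl⟩ := hC' e n h
    exact ⟨hle i e he, by omega⟩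
  · intro e he
    by_contra hne
    obtain ⟨n, hn⟩ := Option.ne_none_iff_exists'.1 hne
    obtain ⟨i, hi, hei, x, hx, hcx, _⟩ := hC' e n hn
    obtain rfl := levelGraph_disj G f _ _ e hei (hM1 0 he)
    rw [hM3 0 e he] at hcx
    cases hcx
  · intro e he hM
    obtain ⟨i, hi, hei⟩ := levelGraph_exists G f k hf' hp e he
    have hMi : e ∉ M i := by
      by_cases h0 : i = 0
      · rw [h0]
        exact hM
      · exact hMe i h0 e
    obtain ⟨e', ⟨⟨h1, w, hw⟩, h2⟩, x, hx, hu⟩ := hM4 i e hei hMi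
    refine ⟨e', ⟨⟨hle i e' h1, w, hw⟩, h2⟩, 3 * i + x, ?_, ?_⟩
    · rw [hC i hi e' h1, hx]
      rfl
    · intro g hg hCg
      obtain ⟨j, hj, hgj, z, hz, hcz, hzz⟩ := hC' g _ hCg
      have hx3 := (hc i e' x hx).2
      have hij : j = i := by omega
      subst hij
      have hzx : z = x := by omega
      subst hzx
      exact hu g ⟨hgj, hg.2⟩ hcz
end

section
/- Every graph G with chromatic number at most α (α ≥ 1) admits a partial edge colouring with at most 3⌈log₂ α⌉ + 16 colours satisfying all non-isolated edges of G. -/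
open SimpleGraph

/-- A pointwise minimal proper colouring of `G[W]` is a greedy (Grundy) colouring. -/
lemma grundy {V : Type*} (G : SimpleGraph V) (W : Set V) (α : ℕ) (h : G.Colorable α) :
    ∃ c : V → ℕ, (∀ u, c u < α) ∧ (∀ u ∈ W, ∀ v ∈ W, G.Adj u v → c u ≠ c v) ∧
      ∀ u ∈ W, ∀ d < c u, ∃ v ∈ W, G.Adj u v ∧ c v = d := by
  classical
  obtain ⟨c0⟩ := h
  let S : Set (V → ℕ) := {c | (∀ u, c u < α) ∧ ∀ u ∈ W, ∀ v ∈ W, G.Adj u v → c u ≠ c v}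
  have h0 : (fun u => (c0 u : ℕ)) ∈ S := by
    refine ⟨fun u => (c0 u).2, fun u _ v _ huv heq => c0.valid huv (Fin.ext heq)⟩
  obtain ⟨m', -, hm⟩ := @zorn_le_nonempty₀ (V → ℕ)ᵒᵈ _ S (by
    intro C hCS hC y hy
    have hC' : ∀ a ∈ C, ∀ b ∈ C, (∀ u, (a : V → ℕ) u ≤ (b : V → ℕ) u) ∨
        (∀ u, (b : V → ℕ) u ≤ (a : V → ℕ) u) := by
      intro a ha b hb
      rcases hC.total ha hb with h | h
      · right; exact h
      · left; exact h
    let f : V → ℕ := fun u => sInf {n | ∃ c : V → ℕ, c ∈ C ∧ c u = n}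
    have hf : ∀ u, ∃ c : V → ℕ, c ∈ C ∧ c u = f u := fun u =>
      Nat.sInf_mem (s := {n | ∃ c : V → ℕ, c ∈ C ∧ c u = n}) ⟨_, y, hy, rfl⟩
    have hle : ∀ u, ∀ c : V → ℕ, c ∈ C → f u ≤ c u := fun u c hc =>
      Nat.sInf_le ⟨c, hc, rfl⟩
    refine ⟨f, ⟨?_, ?_⟩, ?_⟩
    · intro u
      obtain ⟨c, hc, hcu⟩ := hf u
      rw [← hcu]
      exact (hCS hc).1 u
    · intro u hu v hv huv heq
      obtain ⟨a, ha, hau⟩ := hf u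
      obtain ⟨b, hb, hbv⟩ := hf v
      rcases hC' a ha b hb with h | h
      · have h1 := h v
        have h2 := hle v a ha
        exact (hCS ha).2 u hu v hv huv (by omega)
      · have h1 := h u
        have h2 := hle u b hb
        exact (hCS hb).2 u hu v hv huv (by omega)
    · intro z hz u
      exact hle u z hz) _ h0
  obtain ⟨m, hmS, hmin⟩ : ∃ m : V → ℕ, m ∈ S ∧
      ∀ c ∈ S, (∀ u, c u ≤ m u) → ∀ u, m u ≤ c u :=
    ⟨m', hm.1, fun c hc hle => hm.2 hc hle⟩
  refine ⟨m, hmS.1, hmS.2, ?_⟩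
  intro u hu d hd
  by_contra hcon
  push Not at hcon
  have hS : Function.update m u d ∈ S := by
    refine ⟨fun w => ?_, fun a ha b hb hab => ?_⟩
    · by_cases hw : w = u
      · subst hw; simp only [Function.update_self]; exact hd.trans (hmS.1 w)
      · simp only [Function.update_of_ne hw]; exact hmS.1 w
    · by_cases h1 : a = u
      · subst h1
        have h2 : b ≠ a := hab.ne.symm
        simp only [Function.update_self, Function.update_of_ne h2]
        exact (hcon b hb hab).symm
      · by_cases h2 : b = u
        · subst h2
          simp only [Function.update_self, Function.update_of_ne h1]
          exact hcon a ha hab.symm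
        · simp only [Function.update_of_ne h1, Function.update_of_ne h2]
          exact hmS.2 a ha b hb hab
  have hle : ∀ w, Function.update m u d w ≤ m w := by
    intro w
    by_cases hw : w = u
    · subst hw; simp only [Function.update_self]; exact hd.le
    · simp only [Function.update_of_ne hw]; exact le_rfl
  have h3 := hmin _ hS hle u
  simp only [Function.update_self] at h3
  omega

lemma mis {V : Type*} (G : SimpleGraph V) (W : Set V) (α : ℕ) (h : G.Colorable α) :
    ∃ I : Set V, I ⊆ W ∧ (∀ u ∈ I, ∀ v ∈ I, ¬ G.Adj u v) ∧
      ∀ u ∈ W, u ∉ I → ∃ v ∈ I, G.Adj u v := by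
  obtain ⟨c, -, hp, hg⟩ := grundy G W α h
  refine ⟨{u | u ∈ W ∧ c u = 0}, fun u hu => hu.1, ?_, ?_⟩
  · intro u hu v hv huv
    exact hp u hu.1 v hv.1 huv (hu.2.trans hv.2.symm)
  · intro u hu hn
    have : 0 < c u := Nat.pos_of_ne_zero fun h0 => hn ⟨hu, h0⟩
    obtain ⟨v, hv, huv, h0⟩ := hg u hu 0 this
    exact ⟨v, ⟨hv, h0⟩, huv⟩

/-- Breadth first search layering of a bipartite graph with prescribed roots. -/
lemma bfs {V : Type*} (H : SimpleGraph V) (side : V → Bool)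
    (hside : ∀ u v, H.Adj u v → side u ≠ side v) (good : V → Prop)
    (hgood : ∀ u v, H.Adj u v → ∃ r, H.Reachable u r ∧ good r) :
    ∃ (lev : V → ℕ) (par : V → V),
      (∀ u, 0 < lev u → H.Adj u (par u) ∧ lev u = lev (par u) + 1) ∧
      (∀ u v, H.Adj u v → lev u = 0 → good u) ∧
      (∀ u v, H.Adj u v → lev v = lev u + 1 ∨ lev u = lev v + 1) ∧
      (∀ u v w, H.Adj u w → H.Adj v w → lev u = 0 → lev v = 0 → u = v) := by
  classical
  have hrt : ∀ C : H.ConnectedComponent, ∃ r, H.connectedComponentMk r = C ∧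
      ((∃ s, H.connectedComponentMk s = C ∧ good s) → good r) := by
    intro C
    by_cases hs : ∃ s, H.connectedComponentMk s = C ∧ good s
    · obtain ⟨s, h1, h2⟩ := hs
      exact ⟨s, h1, fun _ => h2⟩
    · obtain ⟨r, hr⟩ := C.exists_rep
      exact ⟨r, hr, fun h => absurd h hs⟩
  choose rt hrt1 hrt2 using hrt
  let R : V → V := fun u => rt (H.connectedComponentMk u)
  have hR : ∀ u, H.Reachable u (R u) := fun u =>
    (SimpleGraph.ConnectedComponent.exact (hrt1 (H.connectedComponentMk u))).symm
  have hReq : ∀ u v, H.Reachable u v → R u = R v := by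
    intro u v huv
    simp only [R]
    rw [SimpleGraph.ConnectedComponent.sound huv]
  have hpar : ∀ u, ∃ p, 0 < H.dist u (R u) →
      H.Adj u p ∧ H.dist u (R u) = H.dist p (R p) + 1 := by
    intro u
    by_cases h0 : 0 < H.dist u (R u)
    · have key : ∀ r, ∀ p : H.Walk u r, p.length = H.dist u r → 0 < H.dist u r →
          ∃ w, H.Adj u w ∧ H.dist u r = H.dist w r + 1 := by
        intro r p hp h0
        cases p with
        | nil => simp at h0
        | @cons _ w _ hadj q =>
          simp only [Walk.length_cons] at hp
          refine ⟨w, hadj, ?_⟩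
          have h1 := dist_le q
          have h2 := hadj.reachable.dist_triangle_left r
          have h3 := dist_eq_one_iff_adj.2 hadj
          omega
      obtain ⟨p, hp⟩ := (hR u).exists_walk_length_eq_dist
      obtain ⟨w, hw, hd⟩ := key _ p hp h0
      exact ⟨w, fun _ => ⟨hw, by rw [← hReq u w hw.reachable]; exact hd⟩⟩
    · exact ⟨u, fun h => absurd h h0⟩
  choose par hpar using hpar
  refine ⟨fun u => H.dist u (R u), par, hpar, ?_, ?_, ?_⟩
  · intro u v huv h0
    have h1 : u = R u := (hR u).dist_eq_zero_iff.1 h0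
    rw [h1]
    apply hrt2
    obtain ⟨r, hr, hg⟩ := hgood u v huv
    exact ⟨r, (SimpleGraph.ConnectedComponent.sound hr).symm, hg⟩
  · intro u v huv
    have hRe := hReq u v huv.reachable
    have h1 := huv.reachable.dist_triangle_left (R u)
    have h2 := huv.symm.reachable.dist_triangle_left (R u)
    have h3 := dist_eq_one_iff_adj.2 huv
    have h4 := dist_eq_one_iff_adj.2 huv.symm
    have hne : H.dist u (R u) ≠ H.dist v (R u) := by
      intro heq
      obtain ⟨p, hp⟩ := (hR u).exists_walk_length_eq_dist
      obtain ⟨q, hq⟩ := (huv.symm.reachable.trans (hR u)).exists_walk_length_eq_dist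
      let c : H.Coloring Bool := SimpleGraph.Coloring.mk side (fun {a b} hab => hside a b hab)
      have e1 := c.even_length_iff_congr p
      have e2 := c.even_length_iff_congr q
      have e3 : c u ≠ c v := hside u v huv
      rw [hp, heq] at e1
      rw [hq] at e2
      rw [e1] at e2
      revert e2 e3
      cases c u <;> cases c v <;> cases c (R u) <;> simp
    simp only [← hRe]
    omega
  · intro u v w huw hvw hu hv
    have h1 : u = R u := (hR u).dist_eq_zero_iff.1 hu
    have h2 : v = R v := (hR v).dist_eq_zero_iff.1 hv
    rw [h1, h2]
    exact hReq u v (huw.reachable.trans hvw.symm.reachable)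

lemma bit_exists (k : ℕ) : ∀ x y : ℕ, x < 2 ^ k → y < 2 ^ k → x ≠ y →
    ∃ i < k, x / 2 ^ (i + 1) = y / 2 ^ (i + 1) ∧ x / 2 ^ i ≠ y / 2 ^ i := by
  induction k with
  | zero => intro x y hx hy; simp at hx hy; omega
  | succ k ih =>
    intro x y hx hy hxy
    by_cases h : x / 2 = y / 2
    · exact ⟨0, by omega, by simpa using h, by simpa using hxy⟩
    · obtain ⟨i, hi, h1, h2⟩ := ih (x / 2) (y / 2) (by rw [pow_succ] at hx; omega)
        (by rw [pow_succ] at hy; omega) h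
      refine ⟨i + 1, by omega, ?_, ?_⟩
      · rw [pow_succ' 2 (i + 1), ← Nat.div_div_eq_div_mul, ← Nat.div_div_eq_div_mul]; exact h1
      · rw [pow_succ' 2 i, ← Nat.div_div_eq_div_mul, ← Nat.div_div_eq_div_mul]; exact h2

lemma bit_unique {x y i j : ℕ} (hi : x / 2 ^ (i + 1) = y / 2 ^ (i + 1))
    (hj : x / 2 ^ j ≠ y / 2 ^ j) : j ≤ i := by
  by_contra hlt
  apply hj
  obtain ⟨d, rfl⟩ := Nat.exists_eq_add_of_le (show i + 1 ≤ j by omega)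
  rw [pow_add, ← Nat.div_div_eq_div_mul, ← Nat.div_div_eq_div_mul, hi]

lemma val_root (i q : ℕ) : padicValNat 2 (q * 2 ^ (i + 1) + 2 ^ i - 1 + 1) = i := by
  have h : q * 2 ^ (i + 1) + 2 ^ i - 1 + 1 = 2 ^ i * (2 * q + 1) := by
    have : 0 < 2 ^ i := by positivity
    rw [pow_succ, mul_add]
    have : q * (2 ^ i * 2) = 2 ^ i * (2 * q) := by ring
    omega
  rw [h, padicValNat.mul (by positivity) (by omega), padicValNat.prime_pow,
    padicValNat.eq_zero_of_not_dvd (by omega), add_zero]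

lemma root_code {x y i : ℕ} (h1 : x / 2 ^ (i + 1) = y / 2 ^ (i + 1))
    (h2 : x / 2 ^ i < y / 2 ^ i) :
    ∃ d < y, d / 2 ^ (i + 1) = y / 2 ^ (i + 1) ∧ d / 2 ^ i ≠ y / 2 ^ i ∧
      padicValNat 2 (d + 1) = i := by
  set q := y / 2 ^ (i + 1) with hq
  have hp : 0 < 2 ^ i := by positivity
  have hx : x / 2 ^ i / 2 = q := by rw [Nat.div_div_eq_div_mul, ← pow_succ, h1]
  have hy : y / 2 ^ i / 2 = q := by rw [Nat.div_div_eq_div_mul, ← pow_succ]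
  have hy' : y / 2 ^ i = 2 * q + 1 := by omega
  have hd : (q * 2 ^ (i + 1) + 2 ^ i - 1) / 2 ^ i = 2 * q := by
    rw [Nat.div_eq_iff hp]
    have : q * 2 ^ (i + 1) = 2 * q * 2 ^ i := by ring
    omega
  refine ⟨q * 2 ^ (i + 1) + 2 ^ i - 1, ?_, ?_, ?_, val_root i q⟩
  · by_contra hle
    have := Nat.div_le_div_right (c := 2 ^ i) (not_lt.1 hle)
    omega
  · rw [pow_succ 2 i, ← Nat.div_div_eq_div_mul, ← pow_succ, hd]; omega
  · omega

/-- The vertex has at least two neighbours. -/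
def DegTwo {V : Type*} (G : SimpleGraph V) (v : V) : Prop :=
  ∃ a b, a ≠ b ∧ G.Adj v a ∧ G.Adj v b

lemma first_layer {V : Type*} (G : SimpleGraph V) (α : ℕ) (h : G.Colorable α) :
    ∃ I : Set V, (∀ u ∈ I, ∀ v ∈ I, ¬ G.Adj u v) ∧ (∀ u, u ∉ I → ∃ v ∈ I, G.Adj u v) ∧
      (∀ u, u ∉ I → DegTwo G u → ∃ v ∈ I, G.Adj u v ∧ DegTwo G v) := by
  obtain ⟨A, hA, hAi, hAd⟩ := mis G {v | DegTwo G v} α h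
  obtain ⟨B, hB, hBi, hBd⟩ := mis G {u | ¬ DegTwo G u ∧ ∀ v ∈ A, ¬ G.Adj u v} α h
  refine ⟨A ∪ B, ?_, ?_, ?_⟩
  · rintro u (hu | hu) v (hv | hv) huv
    · exact hAi u hu v hv huv
    · exact (hB hv).2 u hu huv.symm
    · exact (hB hu).2 v hv huv
    · exact hBi u hu v hv huv
  · intro u hu
    by_cases hD : DegTwo G u
    · obtain ⟨v, hv, huv⟩ := hAd u hD (fun h => hu (Or.inl h))
      exact ⟨v, Or.inl hv, huv⟩
    · by_cases hex : ∃ v ∈ A, G.Adj u v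
      · obtain ⟨v, hv, huv⟩ := hex
        exact ⟨v, Or.inl hv, huv⟩
      · push Not at hex
        obtain ⟨v, hv, huv⟩ := hBd u ⟨hD, hex⟩ (fun h => hu (Or.inr h))
        exact ⟨v, Or.inr hv, huv⟩
  · intro u hu hD
    obtain ⟨v, hv, huv⟩ := hAd u hD (fun h => hu (Or.inl h))
    exact ⟨v, Or.inl hv, huv, hA hv⟩

lemma partB {V : Type*} (G : SimpleGraph V) (I : Set V)
    (hind : ∀ u ∈ I, ∀ v ∈ I, ¬ G.Adj u v)
    (hdom : ∀ u, u ∉ I → DegTwo G u → ∃ v ∈ I, G.Adj u v ∧ DegTwo G v) :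
    ∃ (lev : V → ℕ) (par : V → V) (q : V → ℕ),
      (∀ u, 0 < lev u → G.Adj u (par u) ∧ (u ∈ I ↔ par u ∉ I) ∧ lev u = lev (par u) + 1) ∧
      (∀ u, q u < 6) ∧
      (∀ u, 0 < lev u → u ∈ I → q u = 0 ∨ q u = 2) ∧
      (∀ u, 0 < lev u → u ∉ I → q u ≠ 0 ∧ q u ≠ 2) ∧
      (∀ u, u ∉ I → DegTwo G u → 0 < lev u) ∧
      (∀ x y, G.Adj x y → (x ∈ I ↔ y ∉ I) → (DegTwo G x ∨ DegTwo G y) →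
        ∃ z, 0 < lev z ∧ (z = x ∨ z = y ∨ par z = x ∨ par z = y) ∧ s(z, par z) ≠ s(x, y) ∧
          ∀ z', 0 < lev z' → (z' = x ∨ z' = y ∨ par z' = x ∨ par z' = y) →
            q z' = q z → z' = z) := by
  classical
  let B : SimpleGraph V :=
    { Adj := fun u v => G.Adj u v ∧ (u ∈ I ↔ v ∉ I) ∧ (DegTwo G u ∨ DegTwo G v)
      symm := ⟨fun u v h => ⟨h.1.symm, by tauto, by tauto⟩⟩
      loopless := ⟨fun u h => G.loopless.irrefl u h.1⟩ }
  have hB : ∀ u v, B.Adj u v ↔ G.Adj u v ∧ (u ∈ I ↔ v ∉ I) ∧ (DegTwo G u ∨ DegTwo G v) :=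
    fun u v => Iff.rfl
  obtain ⟨lev, par, h1, h2, h3, h4⟩ := bfs B (fun u => decide (u ∈ I))
    (by intro u v huv; have := ((hB u v).1 huv).2.1; by_cases hu : u ∈ I <;> simp_all)
    (fun r => r ∈ I ∧ DegTwo G r)
    (by
      intro u v huv
      obtain ⟨ha, hi, hd⟩ := (hB u v).1 huv
      by_cases hu : u ∈ I
      · by_cases hdu : DegTwo G u
        · exact ⟨u, Reachable.refl u, hu, hdu⟩
        · have hdv : DegTwo G v := by tauto
          have hv := hi.1 hu
          obtain ⟨r, hr, hvr, hdr⟩ := hdom v hv hdv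
          have : B.Adj v r := (hB v r).2 ⟨hvr, by tauto, by tauto⟩
          exact ⟨r, huv.reachable.trans this.reachable, hr, hdr⟩
      · by_cases hdu : DegTwo G u
        · obtain ⟨r, hr, hvr, hdr⟩ := hdom u hu hdu
          have : B.Adj u r := (hB u r).2 ⟨hvr, by tauto, by tauto⟩
          exact ⟨r, this.reachable, hr, hdr⟩
        · exact ⟨v, huv.reachable, by tauto, by tauto⟩)
  -- parity of levels
  have hpar : ∀ n u, lev u = n → (∃ w, B.Adj u w) → (u ∈ I ↔ Even n) := by
    intro n
    induction n with
    | zero =>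
      rintro u hu ⟨w, hw⟩
      simp [(h2 u w hw hu).1]
    | succ n ih =>
      rintro u hu -
      obtain ⟨ha, hl⟩ := h1 u (by omega)
      have := ih (par u) (by omega) ⟨u, ha.symm⟩
      have h5 := ((hB _ _).1 ha).2.1
      rw [Nat.even_add_one]
      tauto
  have hpar' : ∀ u, 0 < lev u → (u ∈ I ↔ Even (lev u)) := fun u hu =>
    hpar _ u rfl ⟨_, (h1 u hu).1⟩
  -- two children for every root
  have hch : ∀ r, ∃ a b, (∃ w, B.Adj r w) → lev r = 0 → a ≠ b ∧ B.Adj r a ∧ B.Adj r b := by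
    intro r
    by_cases hr : (∃ w, B.Adj r w) ∧ lev r = 0
    · obtain ⟨⟨w, hw⟩, h0⟩ := hr
      obtain ⟨hrI, hrD⟩ := h2 r w hw h0
      obtain ⟨a, b, hab, ha, hb⟩ := id hrD
      refine ⟨a, b, fun _ _ => ⟨hab, ?_, ?_⟩⟩
      · exact (hB r a).2 ⟨ha, ⟨fun _ h => hind r hrI a h ha, fun _ => hrI⟩, Or.inl hrD⟩
      · exact (hB r b).2 ⟨hb, ⟨fun _ h => hind r hrI b h hb, fun _ => hrI⟩, Or.inl hrD⟩
    · exact ⟨r, r, fun h h' => absurd ⟨h, h'⟩ hr⟩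
  choose v0 v1 hv using hch
  let q : V → ℕ := fun u => if lev u = 1 ∧ u = v0 (par u) then 4 else
    if lev u = 1 ∧ u = v1 (par u) then 5 else lev u % 4
  have hq2 : ∀ u, lev u ≠ 1 → q u = lev u % 4 := by
    intro u hu; simp [q, hu]
  have hq1 : ∀ u, lev u = 1 → q u = 1 ∨ q u = 4 ∨ q u = 5 := by
    intro u hu; simp only [q, hu]; split_ifs <;> simp
  have hq4 : ∀ u, q u = 4 → lev u = 1 ∧ u = v0 (par u) := by
    intro u hu
    by_contra hc
    simp only [q, if_neg hc] at hu
    split_ifs at hu <;> omega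
  have hq5 : ∀ u, q u = 5 → lev u = 1 ∧ u = v1 (par u) := by
    intro u hu
    by_contra hc
    simp only [q, if_neg hc] at hu
    split_ifs at hu <;> omega
  refine ⟨lev, par, q, ?_, ?_, ?_, ?_, ?_, ?_⟩
  · intro u hu
    obtain ⟨ha, hl⟩ := h1 u hu
    exact ⟨((hB _ _).1 ha).1, ((hB _ _).1 ha).2.1, hl⟩
  · intro u
    by_cases h : lev u = 1
    · have := hq1 u h; omega
    · rw [hq2 u h]; omega
  · intro u hu hI
    have := (hpar' u hu).1 hI
    rw [Nat.even_iff] at this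
    rw [hq2 u (by omega)]; omega
  · intro u hu hI
    have := mt (hpar' u hu).2 hI
    rw [Nat.even_iff] at this
    by_cases h : lev u = 1
    · have := hq1 u h; omega
    · rw [hq2 u h]; omega
  · intro u hu hD
    obtain ⟨r, hr, hur, hdr⟩ := hdom u hu hD
    have hadj : B.Adj u r := (hB u r).2 ⟨hur, by tauto, by tauto⟩
    by_contra h0
    exact hu (h2 u r hadj (by omega)).1
  · have main : ∀ x y, B.Adj x y → lev y = lev x + 1 →
        ∃ z, 0 < lev z ∧ (z = x ∨ z = y ∨ par z = x ∨ par z = y) ∧ s(z, par z) ≠ s(x, y) ∧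
          ∀ z', 0 < lev z' → (z' = x ∨ z' = y ∨ par z' = x ∨ par z' = y) →
            q z' = q z → z' = z := by
      intro x y hxy hl
      by_cases h0 : lev x = 0
      · obtain ⟨hne, ha, hb⟩ := hv x ⟨y, hxy⟩ h0
        have hchild : ∀ w, B.Adj x w → lev w = 1 ∧ par w = x := by
          intro w hw
          have hlw : lev w = 1 := by have := h3 x w hw; omega
          obtain ⟨hpw, hpl⟩ := h1 w (by omega)
          exact ⟨hlw, h4 _ _ w hpw.symm hw (by omega) h0⟩
        obtain ⟨la, pa⟩ := hchild _ ha
        obtain ⟨lb, pb⟩ := hchild _ hb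
        obtain ⟨ly, py⟩ := hchild _ hxy
        have qa : q (v0 x) = 4 := by simp [q, la, pa]
        have qb : q (v1 x) = 5 := by simp [q, lb, pb, hne.symm]
        by_cases hy : y = v0 x
        · refine ⟨v1 x, by omega, by tauto, ?_, ?_⟩
          · rw [pb, Ne, Sym2.eq_iff]
            rintro (⟨h, -⟩ | ⟨h, -⟩)
            · rw [h] at lb; omega
            · exact hne (by rw [h, hy])
          · intro z' hz' hc hq'
            rw [qb] at hq'
            obtain ⟨l', e'⟩ := hq5 z' hq'
            have hp := (h1 z' hz').2
            rcases hc with rfl | rfl | hc | hc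
            · omega
            · rw [e', py]
            · rw [e', hc]
            · rw [hc] at hp; omega
        · refine ⟨v0 x, by omega, by tauto, ?_, ?_⟩
          · rw [pa, Ne, Sym2.eq_iff]
            rintro (⟨h, -⟩ | ⟨h, -⟩)
            · rw [h] at la; omega
            · exact hy h.symm
          · intro z' hz' hc hq'
            rw [qa] at hq'
            obtain ⟨l', e'⟩ := hq4 z' hq'
            have hp := (h1 z' hz').2
            rcases hc with rfl | rfl | hc | hc
            · omega
            · rw [e', py]
            · rw [e', hc]
            · rw [hc] at hp; omega
      · obtain ⟨hpx, hlx⟩ := h1 x (by omega)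
        refine ⟨x, by omega, Or.inl rfl, ?_, ?_⟩
        · rw [Ne, Sym2.eq_iff]
          rintro (⟨-, h⟩ | ⟨h, -⟩)
          · rw [h] at hlx; omega
          · rw [h] at hl; omega
        · intro z' hz' hc hq'
          have hp := (h1 z' hz').2
          have hcase : z' = x ∨ lev z' = lev x + 1 ∨ lev z' = lev x + 2 := by
            rcases hc with rfl | rfl | hc | hc
            · exact Or.inl rfl
            · omega
            · rw [hc] at hp; omega
            · rw [hc] at hp; omega
          rcases hcase with h | h
          · exact h
          · exfalso
            rw [hq2 z' (by omega)] at hq'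
            by_cases h1x : lev x = 1
            · have := hq1 x h1x; omega
            · rw [hq2 x h1x] at hq'; omega
    intro x y ha hi hd
    have hxy : B.Adj x y := (hB x y).2 ⟨ha, hi, hd⟩
    rcases h3 x y hxy with h | h
    · exact main x y hxy h
    · obtain ⟨z, hz1, hz2, hz3, hz4⟩ := main y x hxy.symm h
      have sw : ∀ w a b : V, (w = a ∨ w = b ∨ par w = a ∨ par w = b) →
          (w = b ∨ w = a ∨ par w = b ∨ par w = a) := by
        rintro w a b (h | h | h | h)
        · exact Or.inr (Or.inl h)
        · exact Or.inl h
        · exact Or.inr (Or.inr (Or.inr h))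
        · exact Or.inr (Or.inr (Or.inl h))
      refine ⟨z, hz1, sw _ _ _ hz2, by rwa [Sym2.eq_swap (a := x)],
        fun z' a b c => hz4 z' a (sw _ _ _ b) c⟩

lemma partJ {V : Type*} (G : SimpleGraph V) (J : Set V) (col : V → ℕ)
    (hg : ∀ u ∈ J, ∀ d < col u, ∃ v ∈ J, G.Adj u v ∧ col v = d) (i : ℕ) :
    ∃ (lev : V → ℕ) (par : V → V),
      (∀ u, 0 < lev u → G.Adj u (par u) ∧ u ∈ J ∧ par u ∈ J ∧
        col u / 2 ^ (i + 1) = col (par u) / 2 ^ (i + 1) ∧ col u / 2 ^ i ≠ col (par u) / 2 ^ i ∧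
        lev u = lev (par u) + 1) ∧
      (∀ u v, G.Adj u v → u ∈ J → v ∈ J → col u / 2 ^ (i + 1) = col v / 2 ^ (i + 1) →
        col u / 2 ^ i ≠ col v / 2 ^ i → 
        (lev u = 0 → padicValNat 2 (col u + 1) = i) ∧ (lev v = lev u + 1 ∨ lev u = lev v + 1)) := by
  let B : SimpleGraph V :=
    { Adj := fun u v => G.Adj u v ∧ u ∈ J ∧ v ∈ J ∧
        col u / 2 ^ (i + 1) = col v / 2 ^ (i + 1) ∧ col u / 2 ^ i ≠ col v / 2 ^ i
      symm := ⟨fun u v h => ⟨h.1.symm, h.2.2.1, h.2.1, h.2.2.2.1.symm, h.2.2.2.2.symm⟩⟩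
      loopless := ⟨fun u h => G.loopless.irrefl u h.1⟩ }
  have hB : ∀ u v, B.Adj u v ↔ G.Adj u v ∧ u ∈ J ∧ v ∈ J ∧
        col u / 2 ^ (i + 1) = col v / 2 ^ (i + 1) ∧ col u / 2 ^ i ≠ col v / 2 ^ i :=
    fun u v => Iff.rfl
  have key : ∀ u v, B.Adj u v → col u / 2 ^ i < col v / 2 ^ i →
      ∃ r, B.Reachable v r ∧ padicValNat 2 (col r + 1) = i := by
    intro u v huv hlt
    obtain ⟨ha, hu, hv, h1, h2⟩ := (hB u v).1 huv
    obtain ⟨d, hd, e1, e2, e3⟩ := root_code h1 hlt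
    obtain ⟨r, hr, hvr, hc⟩ := hg v hv d hd
    have : B.Adj v r := (hB v r).2 ⟨hvr, hv, hr, by rw [hc, e1], by rw [hc]; exact e2.symm⟩
    exact ⟨r, this.reachable, by rw [hc, e3]⟩
  obtain ⟨lev, par, h1, h2, h3, h4⟩ := bfs B (fun u => decide (col u / 2 ^ i % 2 = 0))
    (by
      intro u v huv
      obtain ⟨ha, hu, hv, e1, e2⟩ := (hB u v).1 huv
      rw [pow_succ, ← Nat.div_div_eq_div_mul, ← Nat.div_div_eq_div_mul] at e1
      intro hc
      have := decide_eq_decide.1 hc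
      omega)
    (fun r => padicValNat 2 (col r + 1) = i)
    (by
      intro u v huv
      obtain ⟨ha, hu, hv, e1, e2⟩ := (hB u v).1 huv
      rcases lt_or_gt_of_ne e2 with h | h
      · obtain ⟨r, hr, hg⟩ := key u v huv h
        exact ⟨r, huv.reachable.trans hr, hg⟩
      · exact key v u huv.symm h)
  refine ⟨lev, par, ?_, ?_⟩
  · intro u hu
    obtain ⟨ha, hl⟩ := h1 u hu
    obtain ⟨a, b, c, d, e⟩ := (hB _ _).1 ha
    exact ⟨a, b, c, d, e, hl⟩
  · intro u v a b c d e
    have huv : B.Adj u v := (hB u v).2 ⟨a, b, c, d, e⟩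
    exact ⟨fun h => h2 u v huv h, h3 u v huv⟩

lemma touch {V : Type*} {z p x y : V} (h : ∃ w, w ∈ s(z, p) ∧ w ∈ s(x, y)) :
    z = x ∨ z = y ∨ p = x ∨ p = y := by
  obtain ⟨w, h1, h2⟩ := h
  rw [Sym2.mem_iff] at h1 h2
  rcases h1 with rfl | rfl <;> rcases h2 with h | h
  · exact Or.inl h
  · exact Or.inr (Or.inl h)
  · exact Or.inr (Or.inr (Or.inl h))
  · exact Or.inr (Or.inr (Or.inr h))

lemma touch' {V : Type*} {z p x y : V} (h : z = x ∨ z = y ∨ p = x ∨ p = y) :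
    ∃ w, w ∈ s(z, p) ∧ w ∈ s(x, y) := by
  rcases h with h | h | h | h
  · exact ⟨z, by simp, by simp [h]⟩
  · exact ⟨z, by simp, by simp [h]⟩
  · exact ⟨p, by simp, by simp [h]⟩
  · exact ⟨p, by simp, by simp [h]⟩

lemma degTwo_of_nonisolated {V : Type*} {G : SimpleGraph V} {x y : V} (hxy : G.Adj x y)
    (h : (EON G s(x, y)).Nonempty) : DegTwo G x ∨ DegTwo G y := by
  obtain ⟨f, ⟨hf, w, hw, hwe⟩, hne⟩ := h
  obtain ⟨b, rfl⟩ := Sym2.mem_iff_exists.1 hw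
  have hwb : G.Adj w b := hf
  rw [Set.mem_singleton_iff] at hne
  rcases Sym2.mem_iff.1 hwe with rfl | rfl
  · exact Or.inl ⟨b, y, fun h => hne (by rw [h]), hwb, hxy⟩
  · exact Or.inr ⟨b, x, fun h => hne (by rw [h, Sym2.eq_swap]), hwb, hxy.symm⟩

theorem stmt8 {V : Type*} (G : SimpleGraph V) (α : ℕ) (hα : 1 ≤ α)
    (hchrom : G.Colorable α) :
    ∃ c : Sym2 V → Option ℕ, PartialColouring G c (3 * Nat.clog 2 α + 16) ∧
      ∀ e ∈ G.edgeSet, (EON G e).Nonempty → SatisfiedP G c e := by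
  classical
  set k := Nat.clog 2 α with hk
  have hk2 : α ≤ 2 ^ k := Nat.le_pow_clog (by norm_num) α
  obtain ⟨I, hIind, hIdom, hID⟩ := first_layer G α hchrom
  obtain ⟨K, hKI, hKind, hKdom⟩ := mis G {u | u ∉ I} α hchrom
  have hKI' : ∀ u, u ∈ K → u ∉ I := fun u hu => hKI hu
  obtain ⟨J, hJ⟩ : ∃ J : Set V, ∀ u, u ∈ J ↔ u ∉ I ∧ u ∉ K := ⟨{u | u ∉ I ∧ u ∉ K}, fun _ => Iff.rfl⟩
  obtain ⟨col, hcol, hprop, hgr⟩ := grundy G J α hchrom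
  obtain ⟨lev, par, q, b1, b2, b3, b4, b5, b6⟩ := partB G I hIind hID
  choose L P j1 j2 using partJ G J col hgr
  have hf : ∀ u, ∃ w, u ∈ J → w ∈ K ∧ G.Adj u w := by
    intro u
    by_cases hu : u ∈ J
    · obtain ⟨w, hw, huw⟩ := hKdom u ((hJ u).1 hu).1 ((hJ u).1 hu).2
      exact ⟨w, fun _ => ⟨hw, huw⟩⟩
    · exact ⟨u, fun h => absurd h hu⟩
  choose f hf using hf
  let t : V → ℕ := fun u => if u ∈ K then 1 else 0
  have ht : ∀ u, t u < 2 := by intro u; simp only [t]; split_ifs <;> omega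
  let val : V → ℕ := fun u => padicValNat 2 (col u + 1)
  let A1 : Sym2 V → ℕ → Prop := fun e a =>
    ∃ u, 0 < lev u ∧ e = s(u, par u) ∧ a = 2 * q u + t u
  let A2 : Sym2 V → ℕ → Prop := fun e a =>
    ∃ i u, i < k ∧ 0 < L i u ∧ e = s(u, P i u) ∧ a = 12 + 3 * i + L i u % 3
  let A3 : Sym2 V → ℕ → Prop := fun e a =>
    ∃ u, u ∈ J ∧ val u < k ∧ L (val u) u = 0 ∧ e = s(u, f u) ∧ a = 12 + 3 * val u
  let Col : Sym2 V → ℕ → Prop := fun e a => A1 e a ∨ A2 e a ∨ A3 e a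
  -- edges of the three families are of different kinds
  have k1 : ∀ e a, A1 e a → ∃ w ∈ e, w ∈ I := by
    rintro e a ⟨u, hu, rfl, -⟩
    obtain ⟨-, h, -⟩ := b1 u hu
    by_cases hI : u ∈ I
    · exact ⟨u, by simp, hI⟩
    · exact ⟨par u, by simp, by tauto⟩
  have k2 : ∀ e a, A2 e a → ∀ w ∈ e, w ∈ J := by
    rintro e a ⟨i, u, hi, hu, rfl, -⟩ w hw
    obtain ⟨-, h1, h2, -⟩ := j1 i u hu
    rcases Sym2.mem_iff.1 hw with rfl | rfl
    · exact h1
    · exact h2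
  have k3 : ∀ e a, A3 e a → (∀ w ∈ e, w ∉ I) ∧ ∃ w ∈ e, w ∈ K := by
    rintro e a ⟨u, hu, -, -, rfl, -⟩
    refine ⟨fun w hw => ?_, f u, by simp, (hf u hu).1⟩
    rcases Sym2.mem_iff.1 hw with rfl | rfl
    · exact ((hJ _).1 hu).1
    · exact hKI' _ (hf u hu).1
  have n12 : ∀ e a b, A1 e a → A2 e b → False := by
    intro e a b h1 h2
    obtain ⟨w, hw, hI⟩ := k1 e a h1
    exact ((hJ w).1 (k2 e b h2 w hw)).1 hI
  have n13 : ∀ e a b, A1 e a → A3 e b → False := by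
    intro e a b h1 h2
    obtain ⟨w, hw, hI⟩ := k1 e a h1
    exact (k3 e b h2).1 w hw hI
  have n23 : ∀ e a b, A2 e a → A3 e b → False := by
    intro e a b h1 h2
    obtain ⟨w, hw, hI⟩ := (k3 e b h2).2
    exact ((hJ w).1 (k2 e a h1 w hw)).2 hI
  have u1 : ∀ e a b, A1 e a → A1 e b → a = b := by
    rintro e a b ⟨u, hu, rfl, rfl⟩ ⟨v, hv, he, rfl⟩
    have h1 := (b1 u hu).2.2
    have h2 := (b1 v hv).2.2
    rcases Sym2.eq_iff.1 he with ⟨rfl, -⟩ | ⟨h3, h4⟩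
    · rfl
    · rw [h4] at h1; rw [← h3] at h2; omega
  have u2 : ∀ e a b, A2 e a → A2 e b → a = b := by
    rintro e a b ⟨i, u, hi, hu, rfl, rfl⟩ ⟨j, v, hj, hv, he, rfl⟩
    obtain ⟨-, -, -, c1, c2, c3⟩ := j1 i u hu
    obtain ⟨-, -, -, d1, d2, d3⟩ := j1 j v hv
    rcases Sym2.eq_iff.1 he with ⟨rfl, h4⟩ | ⟨h3, h4⟩
    · rw [← h4] at d1 d2
      have hij : i = j := le_antisymm (bit_unique d1 c2) (bit_unique c1 d2)
      subst hij; rfl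
    · rw [← h3, ← h4] at d1 d2
      have hij : i = j := le_antisymm (bit_unique d1.symm c2) (bit_unique c1 d2.symm)
      subst hij
      rw [h4] at c3; rw [← h3] at d3; omega
  have u3 : ∀ e a b, A3 e a → A3 e b → a = b := by
    rintro e a b ⟨u, hu, -, -, rfl, rfl⟩ ⟨v, hv, -, -, he, rfl⟩
    rcases Sym2.eq_iff.1 he with ⟨rfl, h4⟩ | ⟨h3, h4⟩
    · rfl
    · exact absurd (hf v hv).1 (by rw [← h3]; exact ((hJ u).1 hu).2)
  have hfun : ∀ e a b, Col e a → Col e b → a = b := by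
    rintro e a b (h | h | h) (h' | h' | h')
    · exact u1 e a b h h'
    · exact (n12 _ _ _ h h').elim
    · exact (n13 _ _ _ h h').elim
    · exact (n12 _ _ _ h' h).elim
    · exact u2 e a b h h'
    · exact (n23 _ _ _ h h').elim
    · exact (n13 _ _ _ h' h).elim
    · exact (n23 _ _ _ h' h).elim
    · exact u3 e a b h h'
  let c : Sym2 V → Option ℕ := fun e => if h : ∃ a, Col e a then some h.choose else none
  have hc : ∀ e a, c e = some a ↔ Col e a := by
    intro e a
    by_cases h : ∃ a, Col e a
    · simp only [c, dif_pos h, Option.some.injEq]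
      constructor
      · intro h'; rw [← h']; exact h.choose_spec
      · intro h'; exact hfun e _ _ h.choose_spec h'
    · simp only [c, dif_neg h]
      constructor
      · intro h'; cases h'
      · intro h'; exact absurd ⟨a, h'⟩ h
  have hpc : ∀ e a, Col e a → e ∈ G.edgeSet ∧ a < 3 * k + 16 := by
    rintro e a (⟨u, hu, rfl, rfl⟩ | ⟨i, u, hi, hu, rfl, rfl⟩ | ⟨u, hu, hv, -, rfl, rfl⟩)
    · refine ⟨(b1 u hu).1, ?_⟩
      have := b2 u
      have := ht u
      omega
    · refine ⟨(j1 i u hu).1, ?_⟩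
      omega
    · exact ⟨(hf u hu).2, by omega⟩
  -- criterion
  have crit : ∀ x y z p a, Col s(z, p) a → (z = x ∨ z = y ∨ p = x ∨ p = y) →
      s(z, p) ≠ s(x, y) →
      (∀ g, Col g a → (∃ w, w ∈ g ∧ w ∈ s(x, y)) → g = s(z, p)) → SatisfiedP G c s(x, y) := by
    intro x y z p a h1 h2 h3 h4
    refine ⟨s(z, p), ⟨⟨(hpc _ _ h1).1, touch' h2⟩, h3⟩, a, (hc _ _).2 h1, ?_⟩
    rintro g ⟨hg, hw⟩ hga
    exact h4 g ((hc _ _).1 hga) hw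
  refine ⟨c, fun e a h => hpc e a ((hc e a).1 h), ?_⟩
  -- edges between J and K
  have satJK : ∀ x y, G.Adj x y → x ∈ J → y ∈ K → SatisfiedP G c s(x, y) := by
    intro x y hxy hx hy
    obtain ⟨hxI, hxK⟩ := (hJ x).1 hx
    obtain ⟨w, hwI, hxw⟩ := hIdom x hxI
    have hlx : 0 < lev x := b5 x hxI
      ⟨w, y, fun h => hKI' y hy (h ▸ hwI), hxw, hxy⟩
    have hpx : par x ∈ I := by have := (b1 x hlx).2.1; tauto
    refine crit x y x (par x) (2 * q x + t x) (Or.inl ⟨x, hlx, rfl, rfl⟩) (Or.inl rfl) ?_ ?_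
    · rw [Ne, Sym2.eq_iff]
      rintro (⟨-, h⟩ | ⟨h, -⟩)
      · exact hKI' y hy (h ▸ hpx)
      · exact hxy.ne h
    · rintro g (⟨z, hz, rfl, hcz⟩ | ⟨i, z, hi, hz, rfl, hcz⟩ | ⟨z, hz, hv, -, rfl, hcz⟩) hw
      · have t1 := ht x
        have t2 := ht z
        have htz : t z = t x := by omega
        have hqz : q z = q x := by omega
        have tx : t x = 0 := by simp [t, hxK]
        have hzK : z ∉ K := by
          intro h
          have : t z = 1 := by simp [t, h]
          omega
        rcases touch hw with h | h | h | h
        · rw [h]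
        · exact absurd (h ▸ hy) hzK
        · have hzI : z ∈ I := (b1 z hz).2.1.2 (by rw [h]; exact hxI)
          have := b3 z hz hzI
          have := b4 x hlx hxI
          omega
        · have hzI : z ∈ I := (b1 z hz).2.1.2 (by rw [h]; exact hKI' y hy)
          have := b3 z hz hzI
          have := b4 x hlx hxI
          omega
      · have := b2 x
        have := ht x
        omega
      · have := b2 x
        have := ht x
        omega
  -- edges between I and the rest
  have satB : ∀ x y, G.Adj x y → (x ∈ I ↔ y ∉ I) → (DegTwo G x ∨ DegTwo G y) →
      SatisfiedP G c s(x, y) := by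
    intro x y hxy hI hD
    obtain ⟨z, hz, hzt, hne, huniq⟩ := b6 x y hxy hI hD
    refine crit x y z (par z) (2 * q z + t z) (Or.inl ⟨z, hz, rfl, rfl⟩) hzt hne ?_
    have := b2 z
    have := ht z
    rintro g (⟨z', hz', rfl, hcz⟩ | ⟨i, z', hi, hz', rfl, hcz⟩ | ⟨z', hz', hv, -, rfl, hcz⟩) hw
    · have t2 := ht z'
      rw [huniq z' hz' (touch hw) (by omega)]
    · omega
    · omega
  -- edges inside J
  have satJ : ∀ i < k, ∀ x y, G.Adj x y → x ∈ J → y ∈ J →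
      col x / 2 ^ (i + 1) = col y / 2 ^ (i + 1) → col x / 2 ^ i ≠ col y / 2 ^ i →
      L i y = L i x + 1 → SatisfiedP G c s(x, y) := by
    intro i hi x y hxy hx hy e1 e2 hl
    have hxK := ((hJ x).1 hx).2
    have hyK := ((hJ y).1 hy).2
    have lv : ∀ z, 0 < L i z → (z = x ∨ z = y ∨ P i z = x ∨ P i z = y) →
        z = x ∨ L i z = L i x + 1 ∨ L i z = L i x + 2 := by
      intro z hz hzt
      have := (j1 i z hz).2.2.2.2.2
      rcases hzt with h | h | h | h
      · exact Or.inl h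
      · rw [h]; omega
      · rw [h] at this; omega
      · rw [h] at this; omega
    have st : ∀ z, z ∈ J → (∃ w, w ∈ s(z, f z) ∧ w ∈ s(x, y)) → z = x ∨ z = y := by
      intro z hz hw
      rcases touch hw with h | h | h | h
      · exact Or.inl h
      · exact Or.inr h
      · exact absurd (h ▸ (hf z hz).1) hxK
      · exact absurd (h ▸ (hf z hz).1) hyK
    by_cases h0 : L i x = 0
    · have hval : val x = i := (j2 i x y hxy hx hy e1 e2).1 h0
      refine crit x y x (f x) (12 + 3 * i)
        (Or.inr (Or.inr ⟨x, hx, by omega, by rw [hval]; exact h0, rfl, by rw [hval]⟩))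
        (Or.inl rfl) ?_ ?_
      · rw [Ne, Sym2.eq_iff]
        rintro (⟨-, h⟩ | ⟨h, -⟩)
        · exact hyK (h ▸ (hf x hx).1)
        · exact hxy.ne h
      · rintro g (⟨z, hz, rfl, hcz⟩ | ⟨j, z, hj, hz, rfl, hcz⟩ | ⟨z, hz, hv, hz0, rfl, hcz⟩) hw
        · have := b2 z
          have := ht z
          omega
        · have hij : j = i := by omega
          subst hij
          rcases lv z hz (touch hw) with h | h | h
          · rw [h] at hz; omega
          · omega
          · omega
        · have hij : val z = i := by omega
          rcases st z hz hw with h | h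
          · rw [h]
          · rw [hij, h] at hz0; omega
    · have hx0 : 0 < L i x := by omega
      have hpl := (j1 i x hx0).2.2.2.2.2
      refine crit x y x (P i x) (12 + 3 * i + L i x % 3)
        (Or.inr (Or.inl ⟨i, x, hi, hx0, rfl, rfl⟩)) (Or.inl rfl) ?_ ?_
      · rw [Ne, Sym2.eq_iff]
        rintro (⟨-, h⟩ | ⟨h, -⟩)
        · rw [h] at hpl; omega
        · exact hxy.ne h
      · rintro g (⟨z, hz, rfl, hcz⟩ | ⟨j, z, hj, hz, rfl, hcz⟩ | ⟨z, hz, hv, hz0, rfl, hcz⟩) hw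
        · have := b2 z
          have := ht z
          omega
        · have hij : j = i := by omega
          subst hij
          rcases lv z hz (touch hw) with h | h | h
          · rw [h]
          · omega
          · omega
        · have hij : val z = i := by omega
          rw [hij] at hz0
          rcases st z hz hw with h | h
          · rw [h] at hz0; omega
          · rw [h] at hz0; omega
  intro e he hne
  induction e using Sym2.ind with
  | _ x y =>
  have hxy : G.Adj x y := he
  have hD := degTwo_of_nonisolated hxy hne
  by_cases hxI : x ∈ I
  · exact satB x y hxy ⟨fun _ h => hIind x hxI y h hxy, fun _ => hxI⟩ hD
  · by_cases hyI : y ∈ I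
    · exact satB x y hxy ⟨fun h => absurd h hxI, fun h => absurd hyI h⟩ hD
    · by_cases hxK : x ∈ K
      · have hyJ : y ∈ J := (hJ y).2 ⟨hyI, fun h => hKind x hxK y h hxy⟩
        rw [Sym2.eq_swap]
        exact satJK y x hxy.symm hyJ hxK
      · have hxJ : x ∈ J := (hJ x).2 ⟨hxI, hxK⟩
        by_cases hyK : y ∈ K
        · exact satJK x y hxy hxJ hyK
        · have hyJ : y ∈ J := (hJ y).2 ⟨hyI, hyK⟩
          obtain ⟨i, hi, e1, e2⟩ := bit_exists k (col x) (col y) ((hcol x).trans_le hk2)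
            ((hcol y).trans_le hk2) (hprop x hxJ y hyJ hxy)
          rcases (j2 i x y hxy hxJ hyJ e1 e2).2 with h | h
          · exact satJ i hi x y hxy hxJ hyJ e1 e2 h
          · rw [Sym2.eq_swap]
            exact satJ i hi y x hxy.symm hyJ hxJ e1.symm e2.symm h
end

section
/- For every graph G without isolated edges, χ'_ocf(G) ≤ χ'_cf(G) ≤ 3⌈log₂ χ(G)⌉ + 17, where χ'_cf(G) is the minimum number of colours in an edge colouring of all edges of G which is simultaneously closed and open conflict-free. -/
open SimpleGraph

/-- Bipartite lemma: four colours `1,2,3,4` (`0` means uncoloured). -/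
theorem bip_lemma {α β : Type*} [Finite α] [Nonempty α] [Nonempty β] (A : α → β → Prop) :
    ∃ d : α → β → ℕ, (∀ x y, d x y ≠ 0 → A x y) ∧ (∀ x y, d x y ≤ 4) ∧
      (∀ x y, A x y → d x y ≠ 4 →
        (∃ y', y' ≠ y ∧ d x y' ≠ 0 ∧ (∀ y'', d x y'' = d x y' → y'' = y') ∧
          ∀ x', d x' y ≠ d x y') ∨
        (∃ x', x' ≠ x ∧ d x' y ≠ 0 ∧ (∀ x'', d x'' y = d x' y → x'' = x') ∧
          ∀ y', d x y' ≠ d x' y)) ∧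
      (∀ x y, d x y = 4 → (∀ y', A x y' → y' = y) ∧ ∀ x', x' ≠ x → d x' y = 0) := by
  classical
  obtain ⟨D, hD⟩ : ∃ D : Set α, Minimal (fun D : Set α => ∀ y, (∃ x, A x y) → ∃ x ∈ D, A x y) D := by
    have hfin : {D : Set α | ∀ y, (∃ x, A x y) → ∃ x ∈ D, A x y}.Finite := Set.toFinite _
    obtain ⟨D, hD⟩ := hfin.exists_minimal ⟨Set.univ, fun y ⟨x, hx⟩ => ⟨x, trivial, hx⟩⟩
    exact ⟨D, hD⟩
  have hdom := hD.prop
  have hpriv : ∀ x, ∃ y, x ∈ D → A x y ∧ ∀ x' ∈ D, A x' y → x' = x := by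
    intro x
    by_cases hx : x ∈ D
    · by_contra! hcon
      have h1 : ∀ y, (∃ x, A x y) → ∃ x' ∈ D \ {x}, A x' y := by
        intro y hy
        obtain ⟨x', hx', hA⟩ := hdom y hy
        by_cases hxx : x' = x
        · subst hxx
          obtain ⟨x2, h2, h3, h4⟩ := (hcon y).2 hA
          exact ⟨x2, ⟨h2, h4⟩, h3⟩
        · exact ⟨x', ⟨hx', hxx⟩, hA⟩
      have := hD.le_of_le h1 Set.sdiff_subset hx
      exact this.2 rfl
    · exact ⟨Classical.arbitrary β, fun h => absurd h hx⟩
  clear hD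
  choose priv hpriv using hpriv
  obtain ⟨Dq, hDq⟩ : ∃ Dq : α → Prop, ∀ x, Dq x ↔ x ∈ D ∧ ∃ y, y ≠ priv x ∧ A x y :=
    ⟨_, fun _ => Iff.rfl⟩
  have hq : ∀ x, ∃ y, Dq x → y ≠ priv x ∧ A x y := by
    intro x
    by_cases hx : Dq x
    · obtain ⟨y, hy⟩ := ((hDq x).1 hx).2
      exact ⟨y, fun _ => hy⟩
    · exact ⟨Classical.arbitrary β, fun h => absurd h hx⟩
  choose q hq using hq
  have hrep : ∀ y, ∃ r, (∃ x, Dq x ∧ q x = y) → Dq r ∧ q r = y := by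
    intro y
    by_cases hx : ∃ x, Dq x ∧ q x = y
    · obtain ⟨x, hx⟩ := hx
      exact ⟨x, fun _ => hx⟩
    · exact ⟨Classical.arbitrary α, fun h => absurd h hx⟩
  choose rep hrep using hrep
  have hp : ∀ y, ∃ r, (∃ x, A x y) → r ∈ D ∧ A r y := by
    intro y
    by_cases hx : ∃ x, A x y
    · obtain ⟨x, hx⟩ := hdom y hx
      exact ⟨x, fun _ => hx⟩
    · exact ⟨Classical.arbitrary α, fun h => absurd h hx⟩
  choose p hp using hp
  obtain ⟨t, ht⟩ : ∃ t : α → ℕ, ∀ x, t x = if rep (q x) = x then 3 else 2 := ⟨_, fun _ => rfl⟩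
  have ht23 : ∀ x, t x = 2 ∨ t x = 3 := by intro x; rw [ht]; split_ifs <;> simp
  obtain ⟨P, hP⟩ : ∃ P : β → Prop, ∀ y, P y ↔ ∃ x ∈ D, priv x = y := ⟨_, fun _ => Iff.rfl⟩
  obtain ⟨Q, hQ⟩ : ∃ Q : β → Prop, ∀ y, Q y ↔ ∃ x, Dq x ∧ q x = y := ⟨_, fun _ => Iff.rfl⟩
  have hPQ : ∀ y, Q y → ¬ P y := by
    intro y hy hy'
    obtain ⟨x, hx, rfl⟩ := (hQ y).1 hy
    obtain ⟨x', hx', h⟩ := (hP _).1 hy'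
    have h1 := (hpriv x' hx').2 x ((hDq x).1 hx).1 (h ▸ (hq x hx).2)
    subst h1
    exact (hq x hx).1 h.symm
  obtain ⟨d, hd⟩ : ∃ d : α → β → ℕ, ∀ x y, d x y =
      if x ∈ D then (if y = priv x then (if Dq x then 1 else 4)
      else if Dq x ∧ q x = y then t x
      else if ¬ P y ∧ ¬ Q y ∧ p y = x ∧ A x y then 5 - t x else 0) else 0 := ⟨_, fun _ _ => rfl⟩
  -- description of each colour
  have hdc : ∀ x y, (x ∈ D ∧ y = priv x ∧ Dq x ∧ d x y = 1) ∨
      (x ∈ D ∧ y = priv x ∧ ¬ Dq x ∧ d x y = 4) ∨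
      (x ∈ D ∧ y ≠ priv x ∧ Dq x ∧ q x = y ∧ d x y = t x) ∨
      (x ∈ D ∧ y ≠ priv x ∧ ¬ (Dq x ∧ q x = y) ∧ (¬ P y ∧ ¬ Q y ∧ p y = x ∧ A x y) ∧
        d x y = 5 - t x) ∨ d x y = 0 := by
    intro x y
    rw [hd]
    by_cases h1 : x ∈ D
    · rw [if_pos h1]
      by_cases h2 : y = priv x
      · rw [if_pos h2]
        by_cases h3 : Dq x
        · rw [if_pos h3]; exact Or.inl ⟨h1, h2, h3, rfl⟩
        · rw [if_neg h3]; exact Or.inr (Or.inl ⟨h1, h2, h3, rfl⟩)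
      · rw [if_neg h2]
        by_cases h3 : Dq x ∧ q x = y
        · rw [if_pos h3]; exact Or.inr (Or.inr (Or.inl ⟨h1, h2, h3.1, h3.2, rfl⟩))
        · rw [if_neg h3]
          by_cases h4 : ¬ P y ∧ ¬ Q y ∧ p y = x ∧ A x y
          · rw [if_pos h4]; exact Or.inr (Or.inr (Or.inr (Or.inl ⟨h1, h2, h3, h4, rfl⟩)))
          · rw [if_neg h4]; exact Or.inr (Or.inr (Or.inr (Or.inr rfl)))
    · rw [if_neg h1]; exact Or.inr (Or.inr (Or.inr (Or.inr rfl)))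
  have e14 : ∀ x y, (d x y = 1 ∨ d x y = 4) → x ∈ D ∧ y = priv x := by
    intro x y h
    have := ht23 x
    rcases hdc x y with h1 | h1 | h1 | h1 | h1
    · exact ⟨h1.1, h1.2.1⟩
    · exact ⟨h1.1, h1.2.1⟩
    all_goals omega
  have e4 : ∀ x y, d x y = 4 → ¬ Dq x := by
    intro x y h
    have := ht23 x
    rcases hdc x y with h1 | h1 | h1 | h1 | h1
    · omega
    · exact h1.2.2.1
    all_goals omega
  have i4 : ∀ x ∈ D, ¬ Dq x → d x (priv x) = 4 := by
    intro x hx hn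
    rw [hd, if_pos hx, if_pos rfl, if_neg hn]
  have e23 : ∀ x y, (d x y = 2 ∨ d x y = 3) → Dq x ∧ ¬ P y ∧
      ((q x = y ∧ d x y = t x) ∨ (q x ≠ y ∧ ¬ Q y ∧ p y = x ∧ A x y ∧ d x y = 5 - t x)) := by
    intro x y h
    have h5 := ht23 x
    rcases hdc x y with h1 | h1 | h1 | h1 | h1
    · omega
    · omega
    · obtain ⟨h1, h2, h3, h4, h6⟩ := h1
      exact ⟨h3, hPQ y ((hQ y).2 ⟨x, h3, h4⟩), Or.inl ⟨h4, h6⟩⟩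
    · obtain ⟨h1, h2, h4, h7, h6⟩ := h1
      have h8 : Dq x := (hDq x).2 ⟨h1, y, h2, h7.2.2.2⟩
      exact ⟨h8, h7.1, Or.inr ⟨fun h => h4 ⟨h8, h⟩, h7.2.1, h7.2.2.1, h7.2.2.2, h6⟩⟩
    · omega
  have eA : ∀ x y, d x y ≠ 0 → A x y := by
    intro x y h
    rcases hdc x y with h1 | h1 | h1 | h1 | h1
    · rw [h1.2.1]; exact (hpriv x h1.1).1
    · rw [h1.2.1]; exact (hpriv x h1.1).1
    · rw [← h1.2.2.2.1]; exact (hq x h1.2.2.1).2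
    · exact h1.2.2.2.1.2.2.2
    · exact absurd h1 h
  have e5 : ∀ x y, d x y ≤ 4 := by
    intro x y
    have := ht23 x
    rcases hdc x y with h1 | h1 | h1 | h1 | h1 <;> omega
  have i14 : ∀ x ∈ D, d x (priv x) = 1 ∨ d x (priv x) = 4 := by
    intro x hx
    rw [hd, if_pos hx, if_pos rfl]
    by_cases h : Dq x
    · rw [if_pos h]; exact Or.inl rfl
    · rw [if_neg h]; exact Or.inr rfl
  have iq : ∀ x, Dq x → d x (q x) = t x := by
    intro x hx
    rw [hd, if_pos ((hDq x).1 hx).1, if_neg (hq x hx).1, if_pos ⟨hx, rfl⟩]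
  have ip : ∀ y, (∃ x, A x y) → ¬ P y → ¬ Q y → d (p y) y = 5 - t (p y) := by
    intro y hy h1 h2
    have h3 := hp y hy
    have h4 : y ≠ priv (p y) := fun h => h1 ((hP y).2 ⟨_, h3.1, h.symm⟩)
    have h5 : ¬ (Dq (p y) ∧ q (p y) = y) := fun h => h2 ((hQ y).2 ⟨_, h⟩)
    rw [hd, if_pos h3.1, if_neg h4, if_neg h5, if_pos ⟨h1, h2, rfl, h3.2⟩]
  clear hd
  have ht3 : ∀ x x', q x = q x' → t x = 3 → t x' = 3 → x = x' := by
    intro x x' h h1 h2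
    rw [ht] at h1 h2
    split_ifs at h1 h2 with h3 h4
    · rw [← h3, ← h4, h]
    all_goals omega
  have hPcol : ∀ x y, P y → ¬ (d x y = 2 ∨ d x y = 3) := fun x y hy h => (e23 x y h).2.1 hy
  have hDcol : ∀ x y, d x y ≠ 0 → x ∈ D := by
    intro x y h
    have h5 := e5 x y
    by_cases h1 : d x y = 1 ∨ d x y = 4
    · exact (e14 x y h1).1
    · exact ((hDq x).1 (e23 x y (by omega)).1).1
  have hpinj : ∀ x x', x ∈ D → x' ∈ D → priv x = priv x' → x = x' := by
    intro x x' h h' e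
    exact (hpriv x' h').2 x h (e ▸ (hpriv x h).1)
  refine ⟨d, eA, e5, ?_, ?_⟩
  · intro x y hA h4
    by_cases hx : x ∈ D
    · by_cases hy : y = priv x
      · -- private edge
        subst hy
        have h1 : Dq x := by
          by_contra hn
          exact h4 (i4 x hx hn)
        left
        refine ⟨q x, (hq x h1).1, ?_, ?_, ?_⟩
        · rw [iq x h1]; have := ht23 x; omega
        · intro y'' h
          rw [iq x h1] at h
          have h6 := ht23 x
          rcases (e23 x y'' (by omega)).2.2 with h7 | h7
          · exact h7.1.symm
          · omega
        · intro x' h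
          rw [iq x h1] at h
          have h6 := ht23 x
          exact hPcol x' (priv x) ((hP _).2 ⟨x, hx, rfl⟩) (by omega)
      · -- x in D, y not private
        left
        refine ⟨priv x, Ne.symm hy, by have := i14 x hx; omega, ?_, ?_⟩
        · intro y'' h
          exact (e14 x y'' (by have := i14 x hx; omega)).2
        · intro x' h
          have h6 := e14 x' y (by have := i14 x hx; omega)
          exact hy (h6.2.trans (by rw [(hpriv x' h6.1).2 x hx (h6.2 ▸ hA)]))
    · have hx0 : ∀ y', d x y' = 0 := fun y' => by
        by_contra h; exact hx (hDcol x y' h)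
      right
      by_cases hPy : P y
      · obtain ⟨x', hx', rfl⟩ := (hP y).1 hPy
        have h14 := i14 x' hx'
        refine ⟨x', fun h => hx (h ▸ hx'), by omega, ?_, fun y' => by rw [hx0]; omega⟩
        intro x'' h
        have h6 := e14 x'' (priv x') (by omega)
        exact hpinj _ _ h6.1 hx' h6.2.symm
      · by_cases hQy : Q y
        · have h7 := hrep y ((hQ y).1 hQy)
          have h8 : t (rep y) = 3 := by rw [ht, h7.2, if_pos rfl]
          have h9 : d (rep y) y = 3 := by
            have := iq _ h7.1
            rwa [h7.2, h8] at this
          refine ⟨rep y, fun h => hx (h ▸ ((hDq _).1 h7.1).1), by omega, ?_,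
            fun y' => by rw [hx0]; omega⟩
          intro x'' h
          rcases (e23 x'' y (by omega)).2.2 with h10 | h10
          · exact ht3 _ _ (h10.1.trans h7.2.symm) (by omega) h8
          · exact absurd hQy h10.2.1
        · have h7 := ip y ⟨x, hA⟩ hPy hQy
          have h8 := ht23 (p y)
          refine ⟨p y, fun h => hx (h ▸ (hp y ⟨x, hA⟩).1), by omega, ?_,
            fun y' => by rw [hx0]; omega⟩
          intro x'' h
          rcases (e23 x'' y (by omega)).2.2 with h10 | h10
          · exact absurd ((hQ y).2 ⟨x'', (e23 x'' y (by omega)).1, h10.1⟩) hQy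
          · exact h10.2.2.1.symm
  · intro x y h
    have h1 := e14 x y (Or.inr h)
    have h2 := e4 x y h
    refine ⟨fun y' hy' => ?_, fun x' hx' => ?_⟩
    · by_contra hne
      exact h2 ((hDq x).2 ⟨h1.1, y', by rwa [← h1.2], hy'⟩)
    · by_contra h0
      exact hx' ((hpriv x h1.1).2 x' (hDcol _ _ h0) (h1.2 ▸ eA _ _ h0))

/-- Structure lemma: an independent set `I` and a greedy colouring of the rest. -/
theorem struct_lemma {V : Type*} [Fintype V] (G : SimpleGraph V) (n : ℕ) (hn : G.Colorable n) :
    ∃ (I : Set V) (c : V → ℕ),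
      (∀ u v, G.Adj u v → u ∈ I → v ∉ I) ∧
      (∀ u v, G.Adj u v → u ∉ I → v ∉ I → c u ≠ c v) ∧
      (∀ v, c v < n) ∧
      (∀ v u, v ∉ I → G.Adj v u → ∃ z ∈ I, G.Adj v z) ∧
      (∀ v j, v ∉ I → j < c v → ∃ u, u ∉ I ∧ G.Adj v u ∧ c u = j) ∧
      (∀ z w, z ∈ I → w ∉ I → G.Adj z w → (∃ u, u ≠ z ∧ G.Adj w u) → (∀ w', G.Adj z w' → w' = w) →
        ∃ z' ∈ I, z' ≠ z ∧ G.Adj w z') := by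
  classical
  obtain ⟨valid, hvalid⟩ : ∃ valid : Finset V → (V → ℕ) → Prop, ∀ I c, valid I c ↔
    ((∀ u v, G.Adj u v → u ∈ I → v ∉ I) ∧
      (∀ u v, G.Adj u v → u ∉ I → v ∉ I → c u ≠ c v) ∧ (∀ v, c v < n)) := ⟨_, fun _ _ => Iff.rfl⟩
  have hne : (Finset.univ.filter (fun I : Finset V => ∃ c, valid I c)).Nonempty := by
    obtain ⟨C⟩ := hn
    refine ⟨∅, ?_⟩
    simp only [Finset.mem_filter, Finset.mem_univ, true_and]
    refine ⟨fun v => (C v : ℕ), (hvalid _ _).2 ⟨by simp, ?_, fun v => (C v).2⟩⟩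
    intro u v h _ _ he
    exact C.valid h (Fin.ext he)
  obtain ⟨I, hI, hmax⟩ := Finset.exists_max_image _ (fun I => ∑ v ∈ I, G.degree v) hne
  simp only [Finset.mem_filter, Finset.mem_univ, true_and] at hI hmax
  have hex : ∃ s, ∃ c, valid I c ∧ ∑ v, c v = s := by
    obtain ⟨c, hc⟩ := hI
    exact ⟨_, c, hc, rfl⟩
  obtain ⟨c, hc, hcs⟩ := Nat.find_spec hex
  have hmin : ∀ c', valid I c' → ∑ v, c v ≤ ∑ v, c' v := by
    intro c' h
    rw [hcs]
    exact Nat.find_min' hex ⟨c', h, rfl⟩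
  obtain ⟨h1, h2, h3⟩ := (hvalid _ _).1 hc
  refine ⟨(I : Set V), c, h1, h2, h3, ?_, ?_, ?_⟩
  · intro v u hv huv
    by_contra! hcon
    simp only [Finset.mem_coe] at hv hcon
    have hval : valid (insert v I) c := by
      refine (hvalid _ _).2 ⟨?_, ?_, h3⟩
      · intro a b hab ha hb
        rw [Finset.mem_insert] at ha hb
        rcases ha with rfl | ha <;> rcases hb with rfl | hb
        · exact G.loopless.irrefl _ hab
        · exact hcon b hb hab
        · exact hcon a ha hab.symm
        · exact h1 a b hab ha hb
      · intro a b hab ha hb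
        rw [Finset.mem_insert, not_or] at ha hb
        exact h2 a b hab ha.2 hb.2
    have := hmax _ ⟨c, hval⟩
    rw [Finset.sum_insert hv] at this
    have hpos : 0 < G.degree v := (G.degree_pos_iff_exists_adj v).2 ⟨u, huv⟩
    omega
  · intro v j hv hj
    by_contra! hcon
    simp only [Finset.mem_coe] at hv hcon
    have hval : valid I (Function.update c v j) := by
      refine (hvalid _ _).2 ⟨h1, ?_, ?_⟩
      · intro a b hab ha hb
        by_cases hav : a = v
        · subst hav
          have hba : b ≠ a := hab.ne'
          simp only [Function.update_self, Function.update_of_ne hba]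
          exact (hcon b hb hab).symm
        · by_cases hbv : b = v
          · subst hbv
            simp only [Function.update_self, Function.update_of_ne hav]
            exact hcon a ha hab.symm
          · simp only [Function.update_of_ne hav, Function.update_of_ne hbv]
            exact h2 a b hab ha hb
      · intro a
        by_cases hav : a = v
        · subst hav
          simp only [Function.update_self]
          exact hj.trans (h3 a)
        · simp only [Function.update_of_ne hav]
          exact h3 a
    have h5 := hmin _ hval
    have h6 : ∑ a, Function.update c v j a < ∑ a, c a := by
      apply Finset.sum_lt_sum
      · intro a _
        by_cases hav : a = v
        · subst hav; simp only [Function.update_self]; exact hj.le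
        · simp only [Function.update_of_ne hav]; exact le_rfl
      · exact ⟨v, Finset.mem_univ _, by simpa using hj⟩
    omega
  · intro z w hz hw hzw hu hpend
    by_contra! hcon
    simp only [Finset.mem_coe] at hz hw hcon
    have hval : valid (insert w (I.erase z)) c := by
      refine (hvalid _ _).2 ⟨?_, ?_, h3⟩
      · intro a b hab ha hb
        rw [Finset.mem_insert, Finset.mem_erase] at ha hb
        rcases ha with rfl | ha <;> rcases hb with rfl | hb
        · exact G.loopless.irrefl _ hab
        · exact hcon b hb.2 hb.1 hab
        · exact hcon a ha.2 ha.1 hab.symm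
        · exact h1 a b hab ha.2 hb.2
      · intro a b hab ha hb
        rw [Finset.mem_insert, Finset.mem_erase, not_or] at ha hb
        by_cases haz : a = z
        · subst haz; exact absurd (hpend b hab) hb.1
        · by_cases hbz : b = z
          · subst hbz; exact absurd (hpend a hab.symm) ha.1
          · exact h2 a b hab (fun h => ha.2 ⟨haz, h⟩) (fun h => hb.2 ⟨hbz, h⟩)
    have h5 := hmax _ ⟨c, hval⟩
    rw [Finset.sum_insert (by simp [hw])] at h5
    have h6 := Finset.add_sum_erase I (fun v => G.degree v) hz
    have h7 : G.degree z = 1 := by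
      rw [SimpleGraph.degree_eq_one_iff_existsUnique_adj]
      exact ⟨w, hzw, hpend⟩
    have h8 : 1 < G.degree w := by
      obtain ⟨u, huz, huw⟩ := hu
      rw [← SimpleGraph.card_neighborFinset_eq_degree]
      exact Finset.one_lt_card.2 ⟨u, by simpa using huw, z, by simpa using hzw.symm, huz⟩
    omega

/-- The edge `uv` is satisfied by an edge at `u`. -/
def SatAt {V : Type*} (G : SimpleGraph V) (C : V → V → ℕ) (u v : V) : Prop :=
  ∃ w, G.Adj u w ∧ w ≠ v ∧ (∀ w', G.Adj u w' → C u w' = C u w → w' = w) ∧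
    ∀ w', G.Adj v w' → C v w' ≠ C u w

set_option maxHeartbeats 2000000 in
theorem main_lemma {V : Type*} [Fintype V] [Nonempty V] (G : SimpleGraph V) (k : ℕ)
    (hk : G.Colorable (2 ^ k))
    (hiso : ∀ u v, G.Adj u v → (∃ w, w ≠ v ∧ G.Adj u w) ∨ (∃ w, w ≠ u ∧ G.Adj v w)) :
    ∃ C : V → V → ℕ, (∀ u v, C u v = C v u) ∧ (∀ u v, G.Adj u v → C u v < 9 + 3 * k) ∧
      ∀ u v, G.Adj u v → SatAt G C u v ∨ SatAt G C v u := by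
  classical
  obtain ⟨I, c, hind, hprop, hlt, hdomI, hgreedy, hpend⟩ := struct_lemma G _ hk
  -- the bipartite graphs inside the complement of `I`
  obtain ⟨A, hA⟩ : ∃ A : ℕ → V → V → Prop, ∀ i x y, A i x y ↔ (G.Adj x y ∧ x ∉ I ∧ y ∉ I ∧
      c x / 2 ^ (i + 1) = c y / 2 ^ (i + 1) ∧ c y / 2 ^ i < c x / 2 ^ i) := ⟨_, fun _ _ _ => Iff.rfl⟩
  have hhalf : ∀ i a, a / 2 ^ (i + 1) = a / 2 ^ i / 2 := by
    intro i a
    rw [Nat.div_div_eq_div_mul, pow_succ]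
  have hpar : ∀ i x y, A i x y → c x / 2 ^ i % 2 = 1 ∧ c y / 2 ^ i % 2 = 0 := by
    intro i x y h
    obtain ⟨-, -, -, h1, h2⟩ := (hA i x y).1 h
    rw [hhalf, hhalf] at h1
    omega
  have hd := fun i => bip_lemma (A i)
  choose d dA d4 dS dM using hd
  have hd0 : ∀ i x y, d i x y = 4 → i = 0 := by
    intro i x y h
    by_contra hi
    have h1 := (dM i x y h).1
    obtain ⟨g1, g2, g3, g4, g5⟩ := (hA i x y).1 (dA i x y (by omega))
    have g4' := g4
    rw [hhalf, hhalf] at g4'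
    have h2i : 2 ≤ 2 ^ i := by
      calc 2 = 2 ^ 1 := rfl
        _ ≤ 2 ^ i := Nat.pow_le_pow_right (by norm_num) (by omega)
    obtain ⟨m, hm⟩ : ∃ m, m = c x / 2 ^ i / 2 := ⟨_, rfl⟩
    have hcx : 2 ^ i * (2 * m + 1) ≤ c x := by
      have h3 : 2 * m + 1 ≤ c x / 2 ^ i := by omega
      calc 2 ^ i * (2 * m + 1) ≤ 2 ^ i * (c x / 2 ^ i) := Nat.mul_le_mul_left _ h3
        _ ≤ c x := Nat.mul_div_le _ _
    have key : ∀ r, r < 2 ^ i → ∃ u, A i x u ∧ c u = 2 ^ i * (2 * m) + r := by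
      intro r hr
      have h4 : 2 ^ i * (2 * m) + r < c x := by
        have : 2 ^ i * (2 * m + 1) = 2 ^ i * (2 * m) + 2 ^ i := by ring
        omega
      obtain ⟨u, hu, hxu, hcu⟩ := hgreedy x _ g2 h4
      refine ⟨u, (hA i x u).2 ⟨hxu, g2, hu, ?_⟩, hcu⟩
      have h5 : c u / 2 ^ i = 2 * m := by
        rw [hcu, Nat.mul_add_div (by positivity), Nat.div_eq_of_lt hr, add_zero]
      rw [hhalf, hhalf, h5]
      omega
    obtain ⟨u0, hu0, hc0⟩ := key 0 (by omega)
    obtain ⟨u1, hu1, hc1⟩ := key 1 (by omega)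
    have := h1 u0 hu0
    have := h1 u1 hu1
    subst_vars
    omega
  -- index of an edge
  obtain ⟨idx, hidx⟩ : ∃ idx : V → V → ℕ, ∀ u v,
      idx u v = sInf {i | c u / 2 ^ (i + 1) = c v / 2 ^ (i + 1)} := ⟨_, fun _ _ => rfl⟩
  have idx_symm : ∀ u v, idx u v = idx v u := by
    intro u v
    rw [hidx, hidx]
    congr 1
    ext i
    exact eq_comm
  have hmono : ∀ a b i j, i ≤ j → a / 2 ^ i = b / 2 ^ i → a / 2 ^ j = b / 2 ^ j := by
    intro a b i j hij h
    obtain ⟨l, rfl⟩ := Nat.exists_eq_add_of_le hij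
    rw [pow_add, ← Nat.div_div_eq_div_mul, ← Nat.div_div_eq_div_mul, h]
  have idx_A : ∀ i x y, A i x y → idx x y = i := by
    intro i x y h
    obtain ⟨g1, g2, g3, g4, g5⟩ := (hA i x y).1 h
    rw [hidx]
    apply le_antisymm
    · exact Nat.sInf_le g4
    · by_contra! hlt'
      have h1 : sInf {i | c x / 2 ^ (i + 1) = c y / 2 ^ (i + 1)} ∈
        {i | c x / 2 ^ (i + 1) = c y / 2 ^ (i + 1)} := Nat.sInf_mem ⟨i, g4⟩
      have h2 := hmono _ _ _ i hlt' h1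
      omega
  have hex : ∀ u v, G.Adj u v → u ∉ I → v ∉ I →
      idx u v < k ∧ (A (idx u v) u v ∨ A (idx u v) v u) := by
    intro u v huv hu hv
    have hne := hprop u v huv hu hv
    have hkk : c u / 2 ^ k = c v / 2 ^ k := by
      rw [Nat.div_eq_of_lt (hlt u), Nat.div_eq_of_lt (hlt v)]
    have hkk' : c u / 2 ^ (k + 1) = c v / 2 ^ (k + 1) := hmono _ _ k _ (by omega) hkk
    have h1 : c u / 2 ^ (idx u v + 1) = c v / 2 ^ (idx u v + 1) := by
      have : sInf {i | c u / 2 ^ (i + 1) = c v / 2 ^ (i + 1)} ∈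
        {i | c u / 2 ^ (i + 1) = c v / 2 ^ (i + 1)} := Nat.sInf_mem ⟨k, hkk'⟩
      rw [← hidx] at this
      exact this
    have h2 : c u / 2 ^ (idx u v) ≠ c v / 2 ^ (idx u v) := by
      intro h
      rcases Nat.eq_zero_or_pos (idx u v) with h0 | h0
      · rw [h0] at h
        simp at h
        exact hne h
      · have : idx u v - 1 + 1 = idx u v := by omega
        rw [← this] at h
        have h3 : idx u v ≤ idx u v - 1 := by
          conv_lhs => rw [hidx]
          exact Nat.sInf_le h
        omega
    refine ⟨?_, ?_⟩
    · by_contra hge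
      exact h2 (hmono _ _ k _ (by omega) hkk)
    · rcases lt_or_gt_of_ne h2 with h3 | h3
      · exact Or.inr ((hA _ _ _).2 ⟨huv.symm, hv, hu, h1.symm, h3⟩)
      · exact Or.inl ((hA _ _ _).2 ⟨huv, hu, hv, h1, h3⟩)
  -- the special edges towards `I`
  obtain ⟨VM, hVM⟩ : ∃ VM : V → Prop, ∀ v, VM v ↔ ∃ u, d 0 v u = 4 ∨ d 0 u v = 4 :=
    ⟨_, fun _ => Iff.rfl⟩
  have hs : ∀ x, ∃ z, (∃ y, d 0 x y = 4) → z ∈ I ∧ G.Adj x z := by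
    intro x
    by_cases h : ∃ y, d 0 x y = 4
    · obtain ⟨y, hy⟩ := h
      obtain ⟨g1, g2, -⟩ := (hA 0 x y).1 (dA 0 x y (by omega))
      obtain ⟨z, hz⟩ := hdomI x y g2 g1
      exact ⟨z, fun _ => hz⟩
    · exact ⟨x, fun h' => absurd h' h⟩
  choose s hs using hs
  obtain ⟨S, hS⟩ : ∃ S : V → V → Prop, ∀ w z, S w z ↔ (∃ y, d 0 w y = 4) ∧ z = s w :=
    ⟨_, fun _ _ => Iff.rfl⟩
  obtain ⟨B, hB⟩ : ∃ B : V → V → Prop, ∀ w z, B w z ↔ G.Adj w z ∧ w ∉ I ∧ ¬ VM w ∧ z ∈ I :=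
    ⟨_, fun _ _ => Iff.rfl⟩
  obtain ⟨e, eB, e4, eS, eM⟩ := bip_lemma B
  have hg : ∀ z, ∃ u, ∀ w, e w z = 4 → G.Adj z u ∧ u ≠ w := by
    intro z
    by_cases h : ∃ w, e w z = 4
    · obtain ⟨w, hw⟩ := h
      obtain ⟨h1, h2⟩ := eM w z hw
      obtain ⟨b1, b2, b3, b4⟩ := (hB w z).1 (eB w z (by omega))
      have h3 : ∃ u, G.Adj z u ∧ u ≠ w := by
        by_contra! hcon
        rcases hiso w z b1 with ⟨u, hu, hwu⟩ | ⟨u, hu, hzu⟩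
        · obtain ⟨z', hz', hne, hwz'⟩ := hpend z w b4 b2 b1.symm ⟨u, hu, hwu⟩ hcon
          exact hne (h1 z' ((hB w z').2 ⟨hwz', b2, b3, hz'⟩))
        · exact hu (hcon u hzu)
      obtain ⟨u, hu1, hu2⟩ := h3
      refine ⟨u, fun w' hw' => ?_⟩
      by_cases hww : w' = w
      · subst hww; exact ⟨hu1, hu2⟩
      · have := h2 w' hww
        omega
    · exact ⟨z, fun w hw => absurd ⟨w, hw⟩ h⟩
  choose g hg using hg
  obtain ⟨Mk, hMk⟩ : ∃ Mk : V → V → Prop, ∀ w z, Mk w z ↔ (∃ w', e w' z = 4) ∧ w = g z :=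
    ⟨_, fun _ _ => Iff.rfl⟩
  have heS : ∀ w z, e w z ≠ 0 → ¬ S w z ∧ ¬ Mk w z := by
    intro w z h
    obtain ⟨b1, b2, b3, b4⟩ := (hB w z).1 (eB w z h)
    refine ⟨fun h1 => ?_, fun h1 => ?_⟩
    · obtain ⟨⟨y, hy⟩, -⟩ := (hS w z).1 h1
      exact b3 ((hVM w).2 ⟨y, Or.inl hy⟩)
    · obtain ⟨⟨w', hw'⟩, h2⟩ := (hMk w z).1 h1
      have h3 := (hg z w' hw').2
      exact h ((eM w' z hw').2 w (h2 ▸ h3))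
  -- the colouring
  obtain ⟨EB, hEB⟩ : ∃ EB : V → V → ℕ, ∀ w z, EB w z =
      if S w z then (if Mk w z then 1 else 2) else if Mk w z then 3 else
      if e w z = 0 then 0 else 3 + e w z := ⟨_, fun _ _ => rfl⟩
  have EB7 : ∀ w z, EB w z ≤ 7 := by
    intro w z
    have := e4 w z
    rw [hEB]
    split_ifs <;> omega
  have EB12 : ∀ w z, S w z ↔ (EB w z = 1 ∨ EB w z = 2) := by
    intro w z
    have := e4 w z
    rw [hEB]
    by_cases h1 : S w z <;> by_cases h2 : Mk w z <;> by_cases h3 : e w z = 0 <;>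
      simp [h1, h2, h3] <;> omega
  have EB13 : ∀ w z, Mk w z ↔ (EB w z = 1 ∨ EB w z = 3) := by
    intro w z
    have := e4 w z
    rw [hEB]
    by_cases h1 : S w z <;> by_cases h2 : Mk w z <;> by_cases h3 : e w z = 0 <;>
      simp [h1, h2, h3] <;> omega
  have EBe : ∀ w z t, t ≠ 0 → (e w z = t ↔ EB w z = 3 + t) := by
    intro w z t ht
    have h1 := heS w z
    rw [hEB]
    split_ifs with h2 h3 h4 h5
    · constructor
      · intro h; exact absurd h2 (h1 (by omega)).1
      · intro h; omega
    · constructor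
      · intro h; exact absurd h2 (h1 (by omega)).1
      · intro h; omega
    · constructor
      · intro h; exact absurd h4 (h1 (by omega)).2
      · intro h; omega
    · omega
    · omega
  obtain ⟨code, hcode⟩ : ∃ code : ℕ → ℕ → ℕ, ∀ i t, code i t =
      if t = 0 then 0 else if t = 4 then 8 else 8 + 3 * i + t := ⟨_, fun _ _ => rfl⟩
  obtain ⟨C, hC⟩ : ∃ C : V → V → ℕ, ∀ u v, C u v =
      if u ∈ I then (if v ∈ I then 0 else EB v u) else if v ∈ I then EB u v
      else code (idx u v) (d (idx u v) u v + d (idx u v) v u) := ⟨_, fun _ _ => rfl⟩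
  have Csymm : ∀ u v, C u v = C v u := by
    intro u v
    rw [hC, hC, idx_symm v u, add_comm (d (idx u v) v u)]
    by_cases hu : u ∈ I <;> by_cases hv : v ∈ I <;> simp [hu, hv]
  have CB : ∀ w z, w ∉ I → z ∈ I → C w z = EB w z := by
    intro w z hw hz
    rw [hC, if_neg hw, if_pos hz]
  have CB' : ∀ w z, w ∉ I → z ∈ I → C z w = EB w z := by
    intro w z hw hz
    rw [Csymm, CB w z hw hz]
  have Cin : ∀ u v, u ∉ I → v ∉ I →
      C u v = code (idx u v) (d (idx u v) u v + d (idx u v) v u) := by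
    intro u v hu hv
    rw [hC, if_neg hu, if_neg hv]
  have dor : ∀ i u v, d i u v = 0 ∨ d i v u = 0 := by
    intro i u v
    by_contra! h
    have h1 := hpar i u v (dA i u v h.1)
    have h2 := hpar i v u (dA i v u h.2)
    omega
  have Cin7 : ∀ u v, u ∉ I → v ∉ I → C u v = 0 ∨ 8 ≤ C u v := by
    intro u v hu hv
    rw [Cin u v hu hv, hcode]
    split_ifs <;> omega
  have CI0 : ∀ u v, u ∈ I → C u v ≤ 7 := by
    intro u v hu
    by_cases hv : v ∈ I
    · rw [hC, if_pos hu, if_pos hv]; omega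
    · rw [CB' v u hv hu]; exact EB7 _ _
  have dec1 : ∀ i u v, d i u v ≠ 0 → C u v = code i (d i u v) := by
    intro i u v h
    have h1 := dA i u v h
    obtain ⟨g1, g2, g3, -⟩ := (hA i u v).1 h1
    rw [Cin u v g2 g3, idx_A i u v h1]
    have := dor i u v
    congr 1
    omega
  have code8 : ∀ i t, t ≠ 0 → 8 ≤ code i t := by
    intro i t h
    rw [hcode, if_neg h]
    split_ifs <;> omega
  have dec2 : ∀ i u v t, t ≠ 0 → t ≤ 4 → (t = 4 → i = 0) → C u v = code i t →
      d i u v = t ∨ d i v u = t := by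
    intro i u v t h0 h4 hi h
    have h8 := code8 i t h0
    have hu : u ∉ I := fun hu => by have := CI0 u v hu; omega
    have hv : v ∉ I := fun hv => by have := CI0 v u hv; rw [Csymm] at this; omega
    rw [Cin u v hu hv] at h
    have h1 := dor (idx u v) u v
    have h2 := d4 (idx u v) u v
    have h3 := d4 (idx u v) v u
    have h5 := hd0 (idx u v) u v
    have h6 := hd0 (idx u v) v u
    have h7 : idx u v = i ∧ d (idx u v) u v + d (idx u v) v u = t := by
      rw [hcode, hcode] at h
      split_ifs at h <;> constructor <;> omega
    obtain ⟨h9, h10⟩ := h7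
    rw [h9] at h10 h1
    omega
  have inner : ∀ i x y, A i x y → SatAt G C x y ∨ SatAt G C y x := by
    intro i x y h
    obtain ⟨g1, g2, g3, -⟩ := (hA i x y).1 h
    have hp := hpar i x y h
    by_cases hm : d i x y = 4
    · -- matching edge, satisfied by the special edge
      have hi := hd0 i x y hm
      subst hi
      left
      have h1 := hs x ⟨y, hm⟩
      have hSx : S x (s x) := (hS _ _).2 ⟨⟨y, hm⟩, rfl⟩
      have h2 := (EB12 _ _).1 hSx
      have h3 := CB x (s x) g2 h1.1
      refine ⟨s x, h1.2, fun h => g3 (h ▸ h1.1), ?_, ?_⟩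
      · intro w' _ hw'
        have hwI : w' ∈ I := by
          by_contra hn
          have := Cin7 x w' g2 hn
          omega
        rw [CB x w' g2 hwI] at hw'
        exact ((hS _ _).1 ((EB12 x w').2 (by omega))).2
      · intro w' _ hw'
        have hwI : w' ∈ I := by
          by_contra hn
          have := Cin7 y w' g3 hn
          omega
        rw [CB y w' g3 hwI] at hw'
        obtain ⟨⟨y2, hy2⟩, -⟩ := (hS _ _).1 ((EB12 y w').2 (by omega))
        have := hpar 0 y y2 (dA 0 y y2 (by omega))
        omega
    · rcases dS i x y h hm with ⟨y', n1, n2, n3, n4⟩ | ⟨x', n1, n2, n3, n4⟩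
      · left
        have ha := (hA i x y').1 (dA i x y' n2)
        have hc' := dec1 i x y' n2
        refine ⟨y', ha.1, n1, ?_, ?_⟩
        · intro w' _ hw'
          rcases dec2 i x w' _ n2 (d4 _ _ _) (hd0 _ _ _) (hw'.trans hc') with h5 | h5
          · exact n3 _ h5
          · have := hpar i w' x (dA i w' x (by omega))
            omega
        · intro w' _ hw'
          rcases dec2 i y w' _ n2 (d4 _ _ _) (hd0 _ _ _) (hw'.trans hc') with h5 | h5
          · have := hpar i y w' (dA i y w' (by omega))
            omega
          · exact n4 _ h5
      · right
        have ha := (hA i x' y).1 (dA i x' y n2)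
        have hc' := dec1 i x' y n2
        rw [Csymm] at hc'
        refine ⟨x', ha.1.symm, n1, ?_, ?_⟩
        · intro w' _ hw'
          rcases dec2 i y w' _ n2 (d4 _ _ _) (hd0 _ _ _) (hw'.trans hc') with h5 | h5
          · have := hpar i y w' (dA i y w' (by omega))
            omega
          · exact n3 _ h5
        · intro w' _ hw'
          rcases dec2 i x w' _ n2 (d4 _ _ _) (hd0 _ _ _) (hw'.trans hc') with h5 | h5
          · exact n4 _ h5
          · have := hpar i w' x (dA i w' x (by omega))
            omega
  have outer : ∀ w z, G.Adj w z → w ∉ I → z ∈ I → SatAt G C w z ∨ SatAt G C z w := by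
    intro w z hwz hw hz
    have hzn : ∀ w', G.Adj z w' → w' ∉ I := fun w' h => hind z w' h hz
    by_cases hV : VM w
    · left
      have hdec : ∀ v, C w v = 8 ↔ (d 0 w v = 4 ∨ d 0 v w = 4) := by
        intro v
        have h8 : code 0 4 = 8 := by rw [hcode]; simp
        constructor
        · intro h
          exact dec2 0 w v 4 (by omega) (by omega) (fun _ => rfl) (by omega)
        · rintro (h | h)
          · rw [dec1 0 w v (by omega), h, h8]
          · rw [Csymm, dec1 0 v w (by omega), h, h8]
      obtain ⟨v, hv⟩ := (hVM w).1 hV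
      have hCv := (hdec v).2 hv
      have hvw : G.Adj w v ∧ v ∉ I := by
        rcases hv with h | h
        · have := (hA 0 w v).1 (dA 0 w v (by omega))
          exact ⟨this.1, this.2.2.1⟩
        · have := (hA 0 v w).1 (dA 0 v w (by omega))
          exact ⟨this.1.symm, this.2.1⟩
      refine ⟨v, hvw.1, fun h => hvw.2 (h ▸ hz), ?_, ?_⟩
      · intro v' _ hv'
        rw [hCv] at hv'
        rcases hv with h | h <;> rcases (hdec v').1 hv' with h' | h'
        · exact (dM 0 w v h).1 v' (dA 0 w v' (by omega))
        · have := hpar 0 w v (dA 0 w v (by omega))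
          have := hpar 0 v' w (dA 0 v' w (by omega))
          omega
        · have := hpar 0 v w (dA 0 v w (by omega))
          have := hpar 0 w v' (dA 0 w v' (by omega))
          omega
        · by_contra hne
          have := (dM 0 v w h).2 v' hne
          omega
      · intro v' _ hv'
        have := CI0 z v' hz
        omega
    · have hb : B w z := (hB w z).2 ⟨hwz, hw, hV, hz⟩
      have hwI : ∀ w', C w w' ≠ 0 → C w w' ≤ 7 → w' ∈ I := by
        intro w' h1 h2
        by_contra hn
        have := Cin7 w w' hw hn
        omega
      by_cases hm : e w z = 4
      · right
        have h1 := hg z w hm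
        have hgI := hzn _ h1.1
        have hMkz : Mk (g z) z := (hMk _ _).2 ⟨⟨w, hm⟩, rfl⟩
        have h2 := (EB13 _ _).1 hMkz
        have h3 := CB' (g z) z hgI hz
        refine ⟨g z, h1.1, h1.2, ?_, ?_⟩
        · intro w' hzw' hw'
          rw [CB' w' z (hzn _ hzw') hz] at hw'
          exact ((hMk _ _).1 ((EB13 w' z).2 (by omega))).2
        · intro z' hwz' hz'
          have hzI := hwI z' (by omega) (by omega)
          rw [CB w z' hw hzI] at hz'
          have h5 := (eM w z hm).1 z' ((hB _ _).2 ⟨hwz', hw, hV, hzI⟩)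
          subst h5
          exact h1.2 ((hMk _ _).1 ((EB13 w z').2 (by omega))).2.symm
      · rcases eS w z hb hm with ⟨z', n1, n2, n3, n4⟩ | ⟨w1, n1, n2, n3, n4⟩
        · left
          have ha := (hB w z').1 (eB w z' n2)
          have hE := (EBe w z' _ n2).1 rfl
          have hCE := CB w z' hw ha.2.2.2
          have h4' := e4 w z'
          refine ⟨z', ha.1, n1, ?_, ?_⟩
          · intro w' _ hw'
            have hI' := hwI w' (by omega) (by omega)
            rw [CB w w' hw hI'] at hw'
            exact n3 w' ((EBe w w' _ n2).2 (by omega))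
          · intro w' hzw' hw'
            rw [CB' w' z (hzn _ hzw') hz] at hw'
            exact n4 w' ((EBe w' z _ n2).2 (by omega))
        · right
          have ha := (hB w1 z).1 (eB w1 z n2)
          have hE := (EBe w1 z _ n2).1 rfl
          have hCE := CB' w1 z ha.2.1 hz
          have h4' := e4 w1 z
          refine ⟨w1, ha.1.symm, n1, ?_, ?_⟩
          · intro w' hzw' hw'
            rw [CB' w' z (hzn _ hzw') hz] at hw'
            exact n3 w' ((EBe w' z _ n2).2 (by omega))
          · intro w' _ hw'
            have hI' := hwI w' (by omega) (by omega)
            rw [CB w w' hw hI'] at hw'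
            exact n4 w' ((EBe w w' _ n2).2 (by omega))
  refine ⟨C, Csymm, ?_, ?_⟩
  · intro u v huv
    by_cases hu : u ∈ I
    · have := CI0 u v hu
      omega
    · by_cases hv : v ∈ I
      · have := CI0 v u hv
        rw [Csymm] at this
        omega
      · have h1 := (hex u v huv hu hv).1
        have h2 := dor (idx u v) u v
        have h3 := d4 (idx u v) u v
        have h4 := d4 (idx u v) v u
        rw [Cin u v hu hv, hcode]
        split_ifs <;> omega
  · intro u v huv
    by_cases hu : u ∈ I
    · exact (outer v u huv.symm (hind u v huv hu) hu).symm
    · by_cases hv : v ∈ I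
      · exact outer u v huv hu hv
      · rcases (hex u v huv hu hv).2 with h | h
        · exact inner _ _ _ h
        · exact (inner _ _ _ h).symm

theorem cf_exists {V : Type*} [Fintype V] (G : SimpleGraph V)
    (hnoisoedge : ∀ e ∈ G.edgeSet, (EON G e).Nonempty) (k : ℕ) (hk : G.Colorable (2 ^ k)) :
    ∃ c, ConflictFree G c (9 + 3 * k) := by
  rcases isEmpty_or_nonempty V with hV | hV
  · refine ⟨fun _ => 0, fun _ _ => Nat.lt_of_lt_of_le (by norm_num) (Nat.le_add_right 9 (3 * k)), fun e _ => ?_⟩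
    induction e with
    | h u v => exact hV.elim u
  have hiso : ∀ u v, G.Adj u v → (∃ w, w ≠ v ∧ G.Adj u w) ∨ (∃ w, w ≠ u ∧ G.Adj v w) := by
    intro u v huv
    obtain ⟨f, ⟨hf, w, hwf, hwe⟩, hne⟩ := hnoisoedge s(u, v) huv
    obtain ⟨x, rfl⟩ := Sym2.mem_iff_exists.1 hwf
    rcases Sym2.mem_iff.1 hwe with rfl | rfl
    · left
      refine ⟨x, ?_, hf⟩
      rintro rfl
      exact hne rfl
    · right
      refine ⟨x, ?_, hf⟩
      rintro rfl
      exact hne Sym2.eq_swap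
  obtain ⟨C, Csymm, Clt, Csat⟩ := main_lemma G k hk hiso
  let c : Sym2 V → ℕ := Sym2.lift ⟨C, Csymm⟩
  have hc : ∀ u v, c s(u, v) = C u v := fun u v => Sym2.lift_mk _ _ _
  have key : ∀ u v, G.Adj u v → SatAt G C u v →
      ∃ e' ∈ EON G s(u, v), ∀ f ∈ ECN G s(u, v), c f = c e' → f = e' := by
    intro u v huv ⟨w, h1, h2, h3, h4⟩
    refine ⟨s(u, w), ⟨⟨h1, u, by simp, by simp⟩, ?_⟩, ?_⟩
    · intro h
      rw [Set.mem_singleton_iff, Sym2.eq_iff] at h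
      rcases h with h | h
      · exact h2 h.2
      · exact huv.ne h.1
    · rintro f ⟨hf, x, hxf, hxe⟩ hcf
      obtain ⟨y, rfl⟩ := Sym2.mem_iff_exists.1 hxf
      rw [hc, hc] at hcf
      rcases Sym2.mem_iff.1 hxe with rfl | rfl
      · rw [h3 y hf hcf]
      · exact absurd hcf (h4 y hf)
  refine ⟨c, ?_, ?_⟩
  · intro e he
    induction e with
    | h u v => rw [hc]; exact Clt u v he
  · intro e he _
    induction e with
    | h u v =>
      rcases Csat u v he with h | h
      · exact key u v he h
      · have := key v u (SimpleGraph.Adj.symm he) h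
        rwa [Sym2.eq_swap] at this

theorem stmt9 {V : Type*} [Fintype V] (G : SimpleGraph V)
    (hnoisoedge : ∀ e ∈ G.edgeSet, (EON G e).Nonempty) :
    ocfIndex G ≤ cfIndex G ∧
    cfIndex G ≤ 3 * Nat.clog 2 G.chromaticNumber.toNat + 17 := by
  have hcol : G.Colorable (2 ^ Nat.clog 2 G.chromaticNumber.toNat) :=
    (SimpleGraph.colorable_chromaticNumber_of_fintype G).mono (Nat.le_pow_clog (by norm_num) _)
  have hex := cf_exists G hnoisoedge _ hcol
  constructor
  · have hmem : cfIndex G ∈ {k | ∃ c, ConflictFree G c k} := Nat.sInf_mem ⟨_, hex⟩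
    obtain ⟨c, h1, h2⟩ := hmem
    apply Nat.sInf_le
    refine ⟨c, h1, fun e he hne => ?_⟩
    obtain ⟨e', he', hu⟩ := h2 e he hne
    exact ⟨c e', e', ⟨he', rfl⟩, fun f hf => hu f hf.1.1 hf.2⟩
  · have : cfIndex G ≤ 9 + 3 * Nat.clog 2 G.chromaticNumber.toNat := Nat.sInf_le hex
    omega
end
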